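/- Let d ≥ 2, let L : B(0,1)×S^{d−1} → ℝ^{d×d} be a map such that (z,ω) ↦ |z|·L(z,ω) is bounded and Lipschitz on B(0,1)×S^{d−1}, and assume L satisfies the cancellation condition: there exists α ∈ ℝ such that ∫_{B(0,1)} L(z,ω) |z|^{1−d} dz = α ( ω⊗ω − (1/d) I_d ) for every ω ∈ S^{d−1}. Then for every 1 < q < ∞, with q* = q/(q−1) and q̄ = min(q, q*), there exists a constant C (depending only on d, q and L, not on h) such that for every h ∈ (0,1/2) and all Schwartz functions A : ℝ^d → ℝ^{d×d} and g : ℝ^d → ℝ, there exist measurable functions u, v on ℝ^d with Q(A,g) = u + v almost everywhere and ‖u‖_{L¹(ℝ^d)} + ‖v‖_{L^q(ℝ^d)} ≤ C |log h|^{1/q̄} ( ‖g‖_{L^∞(ℝ^d)} + ‖g‖_{L²(ℝ^d)} ) ‖A‖_{L^q(ℝ^d)}. -/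

import Mathlib

open MeasureTheory

/-- The operator
`Q(A,g)(x) = ∫₀¹∫_{B(0,1)}∫_{S^{d−1}} (r^d/(r+h)^{d+1}) L(z,ω):A(x+rz) g(x+rω) dσ(ω) |z|^{1−d} dz dr`,
where matrices are encoded as elements of `EuclideanSpace ℝ (Fin d × Fin d)` and `σ` is the
`(d−1)`-dimensional Hausdorff (surface) measure on the unit sphere. -/
noncomputable def Qop (d : ℕ) (h : ℝ)
    (L : EuclideanSpace ℝ (Fin d) → EuclideanSpace ℝ (Fin d) →
      EuclideanSpace ℝ (Fin d × Fin d))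
    (A : EuclideanSpace ℝ (Fin d) → EuclideanSpace ℝ (Fin d × Fin d))
    (g : EuclideanSpace ℝ (Fin d) → ℝ)
    (x : EuclideanSpace ℝ (Fin d)) : ℝ :=
  ∫ r in Set.Ioc (0 : ℝ) 1,
    ∫ z in Metric.ball (0 : EuclideanSpace ℝ (Fin d)) 1,
      ∫ ω in Metric.sphere (0 : EuclideanSpace ℝ (Fin d)) 1,
        (r ^ d / (r + h) ^ (d + 1)) * (‖z‖ ^ (1 - (d : ℝ))) *
          (∑ kl : Fin d × Fin d, L z ω kl * A (x + r • z) kl) * g (x + r • ω)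
        ∂(μH[(d : ℝ) - 1])

/-!
Fix `n ~ |log h|` with `2⁻ⁿ ~ h`. The weight `rᵈ / (r + h)ᵈ⁺¹` differs from `1/r` restricted to
`(2⁻ⁿ, 1]` by at most a multiple of `h / (r + h)²`, whose mass on `(0, 1]` is at most one, so by
Minkowski's inequality this error is bounded on `L^q`. What remains is a sum over the dyadic scales
`2⁻ʲ`, `j < n`, of integrals over the shell `1/2 < |y| ≤ 1`.

On each shell, subtract from the kernel acting on `A` the multiple `α (ω_k ω_l - δ_kl / d)` of a
bump of unit mass. By the cancellation condition the difference has mean zero, so its averages at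
different scales are almost orthogonal: the sum of their absolute values is bounded on `L²` with a
factor `n^(1/2)`, on `L¹` and `L^∞` with a factor `n`, and by interpolation on `L^q` with a factor
`n^(1/q̄)`. Bounding `|g|` by `‖g‖_∞`, this is an `L^q` term.

The subtracted part is a paraproduct `∑ⱼ aⱼ gⱼ` of bump averages of `A` with averages of `g`
against a traceless quadratic kernel. The latter kernel has mean zero, so `∑ⱼ ‖gⱼ‖₂²` is bounded by
`‖g‖₂²`, while `|gⱼ|` is bounded by `‖g‖_∞`. If `q* ≥ 2`, Hölder's inequality puts the paraproduct
in `L¹`; if `q* < 2`, the products in which `|gⱼ|` exceeds `n^(-1/2) (‖g‖_∞ + ‖g‖₂)` are summed in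
`L¹` and the remaining ones in `L^q`.
-/

open Filter Topology Metric Set
open scoped ENNReal NNReal

namespace QopBound

/-! ### Surface measure of the sphere -/

section Ball

variable {X : Type*} [PseudoMetricSpace X] [SecondCountableTopology X] [MeasurableSpace X]
  [OpensMeasurableSpace X]

lemma measurableSet_setOf_dist_lt (r : ℝ) : MeasurableSet {p : X × X | dist p.2 p.1 < r} :=
  (isOpen_lt (by fun_prop) (by fun_prop)).measurableSet

lemma measurable_measure_ball (μ : Measure X) [SFinite μ] (r : ℝ) :
    Measurable fun x => μ (ball x r) :=
  measurable_measure_prodMk_left (measurableSet_setOf_dist_lt r)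

end Ball

/-- A Borel measure is uniformly distributed if the mass of a ball depends only on its radius. -/
def IsUniformlyDistributed {X : Type*} [PseudoMetricSpace X] [MeasurableSpace X]
    (μ : Measure X) : Prop :=
  ∀ (r : ℝ) (x y : X), μ (ball x r) = μ (ball y r)

namespace IsUniformlyDistributed

variable {X : Type*} [PseudoMetricSpace X] [MeasurableSpace X] {μ ν : Measure X}

lemma of_transitive [OpensMeasurableSpace X]
    (h : ∀ x y : X, ∃ e : X ≃ᵢ X, e x = y ∧ MeasurePreserving e μ μ) :
    IsUniformlyDistributed μ := by
  intro r x y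
  obtain ⟨e, rfl, he⟩ := h y x
  rw [← he.measure_preimage measurableSet_ball.nullMeasurableSet, e.preimage_ball,
    e.symm_apply_apply]

variable [SecondCountableTopology X]

lemma measure_ball_ne_zero (hμ : IsUniformlyDistributed μ) (hμ0 : μ ≠ 0) (x : X) {r : ℝ}
    (hr : 0 < r) : μ (ball x r) ≠ 0 := by
  intro hx
  refine hμ0 (Measure.measure_univ_eq_zero.1 ?_)
  refine measure_null_of_locally_null _ fun y _ => ⟨ball y r, ?_, ?_⟩
  · exact mem_nhdsWithin_of_mem_nhds (ball_mem_nhds _ hr)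
  · rw [hμ r y x, hx]

variable [OpensMeasurableSpace X] [IsFiniteMeasure μ] [IsFiniteMeasure ν]

-- Double counting: both sides measure the pairs of points of `U` at distance less than `r`.
lemma setLIntegral_restrict_ball_le (hμ : IsUniformlyDistributed μ) (x₀ : X) (r : ℝ) (U : Set X) :
    ∫⁻ x in U, ν.restrict U (ball x r) ∂μ ≤ ν U * μ (ball x₀ r) :=
  calc ∫⁻ x in U, ν.restrict U (ball x r) ∂μ
      = ((μ.restrict U).prod (ν.restrict U)) {p : X × X | dist p.2 p.1 < r} :=
        (Measure.prod_apply (measurableSet_setOf_dist_lt r)).symm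
    _ = ∫⁻ y in U, μ.restrict U (ball y r) ∂ν := by
        rw [Measure.prod_apply_symm (measurableSet_setOf_dist_lt r)]
        simp only [preimage_ofPred_eq, dist_comm _ (_ : X), ball]
    _ ≤ ∫⁻ _ in U, μ (ball x₀ r) ∂ν :=
        lintegral_mono fun y => (Measure.restrict_apply_le _ _).trans (hμ r y x₀).le
    _ = ν U * μ (ball x₀ r) := by rw [setLIntegral_const, mul_comm]

lemma measure_open_le_mul_liminf (hμ : IsUniformlyDistributed μ) (hν : IsUniformlyDistributed ν)
    (hν0 : ν ≠ 0) (x₀ : X) {r : ℕ → ℝ} (hr : ∀ n, 0 < r n) (hr0 : Tendsto r atTop (𝓝 0))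
    {U : Set X} (hU : IsOpen U) :
    μ U ≤ ν U * liminf (fun n => μ (ball x₀ (r n)) / ν (ball x₀ (r n))) atTop := by
  have ball_density : ∀ x ∈ U, (1 : ℝ≥0∞) ≤
      liminf (fun n => ν.restrict U (ball x (r n)) / ν (ball x₀ (r n))) atTop := by
    intro x hx
    obtain ⟨ε, hε, hsub⟩ := Metric.isOpen_iff.1 hU x hx
    refine le_liminf_of_le (by isBoundedDefault) ?_
    filter_upwards [hr0.eventually (gt_mem_nhds hε)] with n hn
    rw [Measure.restrict_apply measurableSet_ball,
      inter_eq_left.2 ((ball_subset_ball hn.le).trans hsub), hν _ x x₀,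
      ENNReal.div_self (hν.measure_ball_ne_zero hν0 _ (hr n)) (measure_ne_top _ _)]
  calc μ U = ∫⁻ _ in U, 1 ∂μ := (setLIntegral_one U).symm
    _ ≤ ∫⁻ x in U, liminf (fun n => ν.restrict U (ball x (r n)) / ν (ball x₀ (r n))) atTop ∂μ :=
        setLIntegral_mono' hU.measurableSet ball_density
    _ ≤ liminf (fun n => ∫⁻ x in U, ν.restrict U (ball x (r n)) / ν (ball x₀ (r n)) ∂μ) atTop :=
        lintegral_liminf_le fun n => (measurable_measure_ball _ (r n)).div_const _
    _ ≤ liminf (fun n => ν U * (μ (ball x₀ (r n)) / ν (ball x₀ (r n)))) atTop := by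
        refine liminf_le_liminf (Eventually.of_forall fun n => ?_)
        simp only [div_eq_mul_inv]
        rw [lintegral_mul_const _ (measurable_measure_ball _ (r n)), ← mul_assoc]
        gcongr
        exact hμ.setLIntegral_restrict_ball_le x₀ (r n) U
    _ ≤ ν U * liminf (fun n => μ (ball x₀ (r n)) / ν (ball x₀ (r n))) atTop := by
        rcases eq_or_ne (ν U) 0 with h | h
        · simp [h]
        · refine (ENNReal.liminf_mul_le (u := fun _ => ν U) ?_ ?_).trans_eq ?_
          · exact Or.inl (by simpa using h)
          · exact Or.inl (by simp)
          · rw [limsup_const]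

theorem exists_eq_smul [BorelSpace X] (hμ : IsUniformlyDistributed μ)
    (hν : IsUniformlyDistributed ν) (hν0 : ν ≠ 0) : ∃ c : ℝ≥0, μ = c • ν := by
  rcases eq_or_ne μ 0 with rfl | hμ0
  · exact ⟨0, by simp⟩
  obtain ⟨x₀⟩ : Nonempty X := by
    by_contra h
    rw [not_nonempty_iff] at h
    exact hν0 (Measure.eq_zero_of_isEmpty ν)
  let r : ℕ → ℝ := fun n => 1 / ((n : ℝ) + 1)
  have hr : ∀ n, 0 < r n := fun n => by positivity
  have hr0 : Tendsto r atTop (𝓝 0) := tendsto_one_div_add_atTop_nhds_zero_nat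
  set c := liminf (fun n => μ (ball x₀ (r n)) / ν (ball x₀ (r n))) atTop
  set c' := liminf (fun n => ν (ball x₀ (r n)) / μ (ball x₀ (r n))) atTop
  have hμν : ∀ U, IsOpen U → μ U ≤ ν U * c := fun U =>
    hμ.measure_open_le_mul_liminf hν hν0 x₀ hr hr0
  have hνμ : ∀ U, IsOpen U → ν U ≤ μ U * c' := fun U =>
    hν.measure_open_le_mul_liminf hμ hμ0 x₀ hr hr0
  have hcc : c * c' ≤ 1 := by
    refine ENNReal.le_liminf_mul.trans_eq ((liminf_congr ?_).trans (liminf_const 1))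
    refine Eventually.of_forall fun n => ?_
    rw [Pi.mul_apply, div_eq_mul_inv, div_eq_mul_inv, mul_assoc, ← mul_assoc (ν _)⁻¹,
      ENNReal.inv_mul_cancel (hν.measure_ball_ne_zero hν0 _ (hr n)) (measure_ne_top _ _), one_mul,
      ENNReal.mul_inv_cancel (hμ.measure_ball_ne_zero hμ0 _ (hr n)) (measure_ne_top _ _)]
  have hc'0 : c' ≠ 0 := fun h => hν0 <| by
    simpa only [h, mul_zero, nonpos_iff_eq_zero, Measure.measure_univ_eq_zero]
      using hνμ univ isOpen_univ
  have hc : c ≠ ∞ := fun h => by simp [h, ENNReal.top_mul hc'0] at hcc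
  have heq : ∀ U, IsOpen U → μ U = c * ν U := fun U hU =>
    le_antisymm ((hμν U hU).trans_eq (mul_comm _ _)) <|
      calc c * ν U ≤ c * (μ U * c') := by gcongr; exact hνμ U hU
        _ = c * c' * μ U := by ring
        _ ≤ μ U := mul_le_of_le_one_left' hcc
  refine ⟨c.toNNReal, ext_of_generate_finite {U : Set X | IsOpen U} BorelSpace.measurable_eq
    isPiSystem_isOpen (fun U hU => ?_) ?_⟩
  · rw [heq U hU, Measure.smul_apply, ENNReal.smul_def, ENNReal.coe_toNNReal hc, smul_eq_mul]
  · rw [heq univ isOpen_univ, Measure.smul_apply, ENNReal.smul_def, ENNReal.coe_toNNReal hc,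
      smul_eq_mul]

end IsUniformlyDistributed

section Sphere

variable {E : Type*} [NormedAddCommGroup E] [InnerProductSpace ℝ E]

/-- The isometry of the unit sphere induced by a linear isometry of the ambient space. -/
def sphereIsometry (e : E ≃ₗᵢ[ℝ] E) : sphere (0 : E) 1 ≃ᵢ sphere (0 : E) 1 where
  toEquiv := e.toEquiv.subtypeEquiv fun x => by simp
  isometry_toFun := fun x y => e.isometry x y

lemma exists_sphereIsometry_apply_eq (x y : sphere (0 : E) 1) :
    ∃ e : E ≃ₗᵢ[ℝ] E, sphereIsometry e x = y :=
  ⟨(ℝ ∙ ((x : E) - y))ᗮ.reflection, Subtype.ext (Submodule.reflection_sub (by simp))⟩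

variable [MeasurableSpace E] [BorelSpace E]

lemma isUniformlyDistributed_hausdorffMeasure_sphere (s : ℝ) :
    IsUniformlyDistributed (μH[s] : Measure (sphere (0 : E) 1)) := by
  refine .of_transitive fun x y => ?_
  obtain ⟨e, he⟩ := exists_sphereIsometry_apply_eq x y
  exact ⟨sphereIsometry e, he, (sphereIsometry e).measurePreserving_hausdorffMeasure s⟩

variable [FiniteDimensional ℝ E]

open scoped Pointwise in
lemma measurePreserving_sphereIsometry (e : E ≃ₗᵢ[ℝ] E) :
    MeasurePreserving (sphereIsometry e) (volume : Measure E).toSphere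
      (volume : Measure E).toSphere := by
  have hm : Measurable (sphereIsometry e) := (sphereIsometry e).continuous.measurable
  refine ⟨hm, Measure.ext fun s hs => ?_⟩
  have hval : e '' (Subtype.val '' (sphereIsometry e ⁻¹' s)) = Subtype.val '' s := by
    rw [image_image, ← image_preimage_eq s (sphereIsometry e).surjective, image_image,
      preimage_image_eq _ (sphereIsometry e).injective]
    rfl
  have hcone : e '' (Ioo (0 : ℝ) 1 • (Subtype.val '' (sphereIsometry e ⁻¹' s))) =
      Ioo (0 : ℝ) 1 • (Subtype.val '' s) := by
    rw [← hval, ← image2_smul, ← image2_smul, image_image2, image2_image_right, image2_image_right,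
      image2_image_right]
    simp only [map_smul]
  rw [Measure.map_apply hm hs, Measure.toSphere_apply' _ (hm hs), Measure.toSphere_apply' _ hs,
    ← hcone, ← e.measurePreserving.measure_preimage_emb e.toMeasurableEquiv.measurableEmbedding
      (e '' _), preimage_image_eq _ e.injective]

lemma isUniformlyDistributed_toSphere :
    IsUniformlyDistributed (volume : Measure E).toSphere := by
  refine .of_transitive fun x y => ?_
  obtain ⟨e, he⟩ := exists_sphereIsometry_apply_eq x y
  exact ⟨sphereIsometry e, he, measurePreserving_sphereIsometry e⟩

end Sphere

lemma lipschitzOnWith_inv_norm_smul {E : Type*} [NormedAddCommGroup E] [NormedSpace ℝ E] :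
    LipschitzOnWith 2 (fun x : E => ‖x‖⁻¹ • x) {x | 1 ≤ ‖x‖} := by
  refine LipschitzOnWith.of_dist_le_mul fun x (hx : 1 ≤ ‖x‖) y (hy : 1 ≤ ‖y‖) => ?_
  have hy0 : 0 < ‖y‖ := by linarith
  have hinv : ‖x‖⁻¹ ≤ 1 := inv_le_one_of_one_le₀ hx
  have hsplit : ‖x‖⁻¹ • x - ‖y‖⁻¹ • y = ‖x‖⁻¹ • (x - y) + (‖x‖⁻¹ * (‖y‖ - ‖x‖) * ‖y‖⁻¹) • y := by
    have hx0 : 0 < ‖x‖ := by linarith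
    rw [mul_sub, sub_mul, inv_mul_cancel₀ hx0.ne', one_mul, mul_assoc, mul_inv_cancel₀ hy0.ne',
      mul_one]
    module
  have hfirst : ‖‖x‖⁻¹ • (x - y)‖ ≤ ‖x - y‖ := by
    rw [norm_smul, norm_inv, norm_norm]
    exact mul_le_of_le_one_left (norm_nonneg _) hinv
  have hsecond : ‖(‖x‖⁻¹ * (‖y‖ - ‖x‖) * ‖y‖⁻¹) • y‖ ≤ ‖x - y‖ := by
    rw [norm_smul, norm_mul, norm_mul, norm_inv, norm_norm, norm_inv, norm_norm, mul_assoc,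
      inv_mul_cancel₀ hy0.ne', mul_one, norm_sub_rev x y]
    exact (mul_le_of_le_one_left (norm_nonneg _) hinv).trans (abs_norm_sub_norm_le y x)
  rw [dist_eq_norm, dist_eq_norm, hsplit, NNReal.coe_ofNat, two_mul]
  exact (norm_add_le _ _).trans (add_le_add hfirst hsecond)

/-- `d`-dimensional Euclidean space. -/
abbrev Eu (d : ℕ) := EuclideanSpace ℝ (Fin d)

/-- The affine embedding of `ℝᵐ` as the hyperplane `yᵢ = s` of `ℝᵐ⁺¹`; it carries the unit ball of
the supremum norm to a face of the cube `[-1, 1]ᵐ⁺¹` when `s = ±1`. -/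
def cubeFace {m : ℕ} (i : Fin (m + 1)) (s : ℝ) (y : Fin m → ℝ) : Eu (m + 1) :=
  WithLp.toLp 2 (Fin.insertNth i s y : Fin (m + 1) → ℝ)

lemma exists_lipschitzWith_cubeFace {m : ℕ} (i : Fin (m + 1)) (s : ℝ) :
    ∃ K, LipschitzWith K (cubeFace i s) := by
  have h : LipschitzWith 1 fun y : Fin m → ℝ => (Fin.insertNth i s y : Fin (m + 1) → ℝ) := by
    refine LipschitzWith.of_dist_le_mul fun x y => ?_
    rw [NNReal.coe_one, one_mul, dist_pi_le_iff dist_nonneg]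
    intro j
    induction j using Fin.succAboveCases i with
    | x => simp
    | p j => simpa using dist_le_pi_dist x y j
  exact ⟨_, (PiLp.lipschitzWith_toLp 2 (fun _ : Fin (m + 1) => ℝ)).comp h⟩

lemma abs_le_norm_cubeFace {m : ℕ} (i : Fin (m + 1)) (s : ℝ) (y : Fin m → ℝ) :
    |s| ≤ ‖cubeFace i s y‖ := by
  simpa [cubeFace] using PiLp.norm_apply_le (cubeFace i s y) i

lemma sphere_subset_iUnion_cubeFace (m : ℕ) :
    sphere (0 : Eu (m + 1)) 1 ⊆ ⋃ i, ⋃ s ∈ ({1, -1} : Finset ℝ),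
      (fun y => ‖cubeFace i s y‖⁻¹ • cubeFace i s y) '' closedBall 0 1 := by
  intro ω hω
  have hω1 : ‖ω‖ = 1 := mem_sphere_zero_iff_norm.1 hω
  obtain ⟨i, -, hi⟩ := Finset.exists_max_image Finset.univ (fun i => |ω i|) ⟨0, by simp⟩
  have hi0 : 0 < |ω i| := by
    by_contra h
    have : ω = 0 := by
      ext j
      exact abs_nonpos_iff.1 ((hi j (Finset.mem_univ j)).trans (not_lt.1 h))
    simp [this] at hω1
  have hface : cubeFace i (ω i / |ω i|) (fun j => ω (i.succAbove j) / |ω i|) = |ω i|⁻¹ • ω := by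
    ext j
    induction j using Fin.succAboveCases i with
    | x => simp [cubeFace, div_eq_inv_mul]
    | p j => simp [cubeFace, div_eq_inv_mul]
  refine mem_iUnion.2 ⟨i, mem_iUnion₂.2 ⟨ω i / |ω i|, ?_, fun j => ω (i.succAbove j) / |ω i|,
    ?_, ?_⟩⟩
  · rcases lt_or_gt_of_ne (abs_pos.1 hi0) with h | h
    · simp [abs_of_neg h, h.ne]
    · simp [abs_of_pos h, h.ne']
  · rw [mem_closedBall_zero_iff, pi_norm_le_iff_of_nonneg zero_le_one]
    intro j
    rw [norm_div, Real.norm_eq_abs, Real.norm_eq_abs, abs_abs, div_le_one hi0]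
    exact hi _ (Finset.mem_univ _)
  · simp only [hface, norm_smul, hω1, smul_smul]
    simp [hi0.ne']

lemma hausdorffMeasure_sphere_lt_top (m : ℕ) : μH[(m : ℝ)] (sphere (0 : Eu (m + 1)) 1) < ∞ := by
  refine (measure_mono (sphere_subset_iUnion_cubeFace m)).trans_lt ?_
  refine (measure_iUnion_le _).trans_lt ?_
  rw [tsum_fintype]
  refine ENNReal.sum_lt_top.2 fun i _ => ?_
  refine measure_biUnion_lt_top (Finset.finite_toSet _) fun s hs => ?_
  have hs1 : |s| = 1 := by
    simp only [Finset.coe_insert, Finset.coe_singleton, mem_insert_iff, mem_singleton_iff] at hs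
    rcases hs with rfl | rfl <;> simp
  obtain ⟨K, hK⟩ := exists_lipschitzWith_cubeFace i s
  have hl : LipschitzOnWith (2 * K) (fun y => ‖cubeFace i s y‖⁻¹ • cubeFace i s y)
      (closedBall 0 1) :=
    lipschitzOnWith_inv_norm_smul.comp hK.lipschitzOnWith
      fun y _ => hs1.ge.trans (abs_le_norm_cubeFace i s y)
  refine (hl.hausdorffMeasure_image_le (Nat.cast_nonneg m)).trans_lt ?_
  refine ENNReal.mul_lt_top (ENNReal.rpow_lt_top_of_nonneg (Nat.cast_nonneg m)
    ENNReal.coe_ne_top) ?_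
  have hvol := hausdorffMeasure_pi_real (ι := Fin m)
  rw [Fintype.card_fin] at hvol
  rw [hvol]
  exact measure_closedBall_lt_top

/-- The surface measure `σ` of the unit sphere, as a measure on the ambient space. -/
noncomputable def surf (d : ℕ) : Measure (Eu d) := (μH[(d : ℝ) - 1]).restrict (sphere 0 1)

instance isFiniteMeasure_surf (d : ℕ) : IsFiniteMeasure (surf d) := by
  refine ⟨?_⟩
  rw [surf, Measure.restrict_apply_univ]
  cases d with
  | zero => simp [sphere_eq_empty_of_subsingleton (one_ne_zero' ℝ)]
  | succ m => simpa using hausdorffMeasure_sphere_lt_top m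

lemma ae_surf_mem_sphere (d : ℕ) : ∀ᵐ ω ∂(surf d), ω ∈ sphere (0 : Eu d) 1 :=
  ae_restrict_mem isClosed_sphere.measurableSet

lemma map_val_hausdorffMeasure_sphere (d : ℕ) :
    (μH[(d : ℝ) - 1] : Measure (sphere (0 : Eu d) 1)).map Subtype.val = surf d := by
  cases d with
  | zero =>
    have : IsEmpty (sphere (0 : Eu 0) 1) := sphere_isEmpty_of_subsingleton
    rw [surf, sphere_eq_empty_of_subsingleton (one_ne_zero' ℝ), Measure.restrict_empty,
      Measure.eq_zero_of_isEmpty (μH[_]), Measure.map_zero]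
  | succ m =>
    rw [isometry_subtype_coe.map_hausdorffMeasure (Or.inl (by simp)), Subtype.range_coe, surf]

lemma exists_surf_eq (d : ℕ) [NeZero d] :
    ∃ c : ℝ≥0, surf d = c • (volume : Measure (Eu d)).toSphere.map Subtype.val := by
  have : IsFiniteMeasure (μH[(d : ℝ) - 1] : Measure (sphere (0 : Eu d) 1)) := by
    refine ⟨?_⟩
    rw [← preimage_univ (f := Subtype.val), ← Measure.map_apply measurable_subtype_coe .univ,
      map_val_hausdorffMeasure_sphere]
    exact measure_lt_top _ _
  obtain ⟨c, hc⟩ := (isUniformlyDistributed_hausdorffMeasure_sphere ((d : ℝ) - 1)).exists_eq_smul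
    isUniformlyDistributed_toSphere (Measure.toSphere_ne_zero (volume : Measure (Eu d)))
  exact ⟨c, by rw [← map_val_hausdorffMeasure_sphere, hc, Measure.map_smul]⟩

theorem lintegral_eq_lintegral_Ioi_toSphere {E : Type*} [NormedAddCommGroup E] [NormedSpace ℝ E]
    [FiniteDimensional ℝ E] [Nontrivial E] [MeasurableSpace E] [BorelSpace E] (μ : Measure E)
    [μ.IsAddHaarMeasure] {f : E → ℝ≥0∞} (hf : Measurable f) :
    ∫⁻ y, f y ∂μ = ∫⁻ ρ in Ioi (0 : ℝ), ENNReal.ofReal (ρ ^ (Module.finrank ℝ E - 1)) *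
      ∫⁻ ω, f (ρ • (ω : E)) ∂μ.toSphere := by
  have hpolar : Measurable fun p : sphere (0 : E) 1 × Ioi (0 : ℝ) => f (p.2.1 • (p.1 : E)) :=
    hf.comp (by fun_prop)
  calc ∫⁻ y, f y ∂μ = ∫⁻ y : ({0}ᶜ : Set E), f y ∂(Measure.comap Subtype.val μ) := by
        rw [lintegral_subtype_comap (measurableSet_singleton _).compl, restrict_compl_singleton]
    _ = ∫⁻ p, f (p.2.1 • (p.1 : E))
          ∂(μ.toSphere.prod (Measure.volumeIoiPow (Module.finrank ℝ E - 1))) := by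
        rw [← μ.measurePreserving_homeomorphUnitSphereProd.lintegral_comp_emb
          (Homeomorph.measurableEmbedding _)]
        refine lintegral_congr fun y => ?_
        rw [← homeomorphUnitSphereProd_symm_apply_coe E (homeomorphUnitSphereProd E y),
          Homeomorph.symm_apply_apply]
    _ = ∫⁻ ρ : Ioi (0 : ℝ), ∫⁻ ω, f (ρ.1 • (ω : E)) ∂μ.toSphere
          ∂(Measure.volumeIoiPow (Module.finrank ℝ E - 1)) :=
        lintegral_prod_symm _ hpolar.aemeasurable
    _ = ∫⁻ ρ : Ioi (0 : ℝ), ENNReal.ofReal (ρ.1 ^ (Module.finrank ℝ E - 1)) *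
          ∫⁻ ω, f (ρ.1 • (ω : E)) ∂μ.toSphere ∂(Measure.comap Subtype.val volume) := by
        rw [Measure.volumeIoiPow, lintegral_withDensity_eq_lintegral_mul _ (by fun_prop)
          hpolar.lintegral_prod_left']
        rfl
    _ = _ := lintegral_subtype_comap measurableSet_Ioi fun ρ =>
        ENNReal.ofReal (ρ ^ (Module.finrank ℝ E - 1)) * ∫⁻ ω, f (ρ • (ω : E)) ∂μ.toSphere

/-- The measure `dρ/ρ` on `(1/2, 1]`. -/
noncomputable def dyadicRadius : Measure ℝ :=
  (volume.restrict (Ioc (1 / 2 : ℝ) 1)).withDensity fun ρ => ENNReal.ofReal ρ⁻¹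

instance isFiniteMeasure_dyadicRadius : IsFiniteMeasure dyadicRadius := by
  refine isFiniteMeasure_withDensity ?_
  refine ((setLIntegral_mono' (g := fun _ => 2) measurableSet_Ioc fun ρ hρ => ?_).trans_lt
    ?_).ne
  · rw [← ENNReal.ofReal_ofNat 2]
    refine ENNReal.ofReal_le_ofReal ?_
    rw [inv_le_comm₀ (by linarith [hρ.1]) (by norm_num)]
    linarith [hρ.1]
  · rw [setLIntegral_const]
    exact ENNReal.mul_lt_top (by simp) (by simp)

/-- The measure `dρ/ρ dσ(ω)` on `(1/2, 1] × S^{d-1}`: the parameters of one dyadic shell. -/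
noncomputable def shellParam (d : ℕ) : Measure (ℝ × Eu d) := dyadicRadius.prod (surf d)

instance isFiniteMeasure_shellParam (d : ℕ) : IsFiniteMeasure (shellParam d) := by
  unfold shellParam
  infer_instance

lemma ae_shellParam_mem (d : ℕ) :
    ∀ᵐ p ∂(shellParam d), p.1 ∈ Ioc (1 / 2 : ℝ) 1 ∧ p.2 ∈ sphere (0 : Eu d) 1 := by
  have hρ : ∀ᵐ ρ ∂dyadicRadius, ρ ∈ Ioc (1 / 2 : ℝ) 1 :=
    (withDensity_absolutelyContinuous _ _).ae_le (ae_restrict_mem measurableSet_Ioc)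
  filter_upwards [Measure.quasiMeasurePreserving_fst.ae hρ,
    Measure.quasiMeasurePreserving_snd.ae (ae_surf_mem_sphere d)] with p hp hp' using ⟨hp, hp'⟩

/-- The half-open dyadic shell `1/2 < |y| ≤ 1`. -/
def shell (d : ℕ) : Set (Eu d) := {y | ‖y‖ ∈ Ioc (1 / 2 : ℝ) 1}

lemma measurableSet_shell (d : ℕ) : MeasurableSet (shell d) :=
  measurable_norm measurableSet_Ioc

lemma lintegral_shellParam_comp_smul {d : ℕ} {c : ℝ≥0}
    (hc : surf d = c • (volume : Measure (Eu d)).toSphere.map Subtype.val) {f : Eu d → ℝ≥0∞}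
    (hf : Measurable f) :
    ∫⁻ p, f (p.1 • p.2) ∂(shellParam d) = c * ∫⁻ ρ in Ioc (1 / 2 : ℝ) 1, ENNReal.ofReal ρ⁻¹ *
      ∫⁻ ω, f (ρ • (ω : Eu d)) ∂(volume : Measure (Eu d)).toSphere := by
  have hpolar : Measurable fun p : ℝ × Eu d => f (p.1 • p.2) := hf.comp (by fun_prop)
  have hinner : Measurable fun ρ : ℝ =>
      ∫⁻ ω, f (ρ • (ω : Eu d)) ∂(volume : Measure (Eu d)).toSphere :=
    Measurable.lintegral_prod_right' (f := fun p : ℝ × sphere (0 : Eu d) 1 => f (p.1 • p.2))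
      (hf.comp (by fun_prop))
  have hsurf : ∀ ρ : ℝ, ∫⁻ ω, f (ρ • ω) ∂(surf d) =
      c * ∫⁻ ω, f (ρ • (ω : Eu d)) ∂(volume : Measure (Eu d)).toSphere := fun ρ => by
    rw [hc, lintegral_smul_measure,
      lintegral_map (f := fun ω => f (ρ • ω)) (hf.comp (by fun_prop)) measurable_subtype_coe]
    rfl
  rw [shellParam, lintegral_prod _ hpolar.aemeasurable]
  simp only [hsurf]
  rw [lintegral_const_mul _ hinner, dyadicRadius,
    lintegral_withDensity_eq_lintegral_mul _ (by fun_prop) hinner]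
  rfl

lemma setLIntegral_shell_eq {d : ℕ} [NeZero d] {f : Eu d → ℝ≥0∞} (hf : Measurable f) :
    ∫⁻ y in shell d, ENNReal.ofReal (‖y‖ ^ d)⁻¹ * f y =
      ∫⁻ ρ in Ioc (1 / 2 : ℝ) 1, ENNReal.ofReal ρ⁻¹ *
        ∫⁻ ω, f (ρ • (ω : Eu d)) ∂(volume : Measure (Eu d)).toSphere := by
  have hsub : Ioc (1 / 2 : ℝ) 1 ⊆ Ioi 0 := fun ρ hρ => lt_trans (by norm_num) hρ.1
  rw [← lintegral_indicator (measurableSet_shell d), lintegral_eq_lintegral_Ioi_toSphere volume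
      (.indicator (by fun_prop) (measurableSet_shell d)),
    ← inter_eq_left.2 hsub, ← Measure.restrict_restrict measurableSet_Ioc,
    ← lintegral_indicator measurableSet_Ioc]
  refine setLIntegral_congr_fun measurableSet_Ioi fun ρ (hρ : 0 < ρ) => ?_
  have hnorm : ∀ ω : sphere (0 : Eu d) 1, ‖ρ • (ω : Eu d)‖ = ρ := fun ω => by
    rw [norm_smul, norm_eq_of_mem_sphere, mul_one, Real.norm_of_nonneg hρ.le]
  have hmem : ∀ ω : sphere (0 : Eu d) 1, ρ • (ω : Eu d) ∈ shell d ↔ ρ ∈ Ioc (1 / 2 : ℝ) 1 :=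
    fun ω => by rw [shell, mem_ofPred_eq, hnorm]
  by_cases h : ρ ∈ Ioc (1 / 2 : ℝ) 1
  · have hweight : ρ ^ (d - 1) * (ρ ^ d)⁻¹ = ρ⁻¹ := by
      nth_rw 2 [← Nat.sub_add_cancel (NeZero.one_le (n := d))]
      rw [pow_succ, mul_inv, mul_inv_cancel_left₀ (pow_pos hρ _).ne']
    simp only [indicator_of_mem ((hmem _).2 h), hnorm, indicator_of_mem h]
    rw [lintegral_const_mul _ (f := fun ω : sphere (0 : Eu d) 1 => f (ρ • (ω : Eu d)))
        (hf.comp (by fun_prop)), ← mul_assoc,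
      ← ENNReal.ofReal_mul (by positivity), finrank_euclideanSpace_fin, hweight]
  · simp only [indicator_of_notMem (mt (hmem _).1 h), indicator_of_notMem h, lintegral_zero,
      mul_zero]

lemma exists_map_shellParam_eq (d : ℕ) [NeZero d] : ∃ c : ℝ≥0,
    (shellParam d).map (fun p => p.1 • p.2) =
      (volume.restrict (shell d)).withDensity fun y => ENNReal.ofReal (c * (‖y‖ ^ d)⁻¹) := by
  obtain ⟨c, hc⟩ := exists_surf_eq d
  refine ⟨c, Measure.ext_of_lintegral _ fun f hf => ?_⟩
  rw [lintegral_map hf (by fun_prop), lintegral_shellParam_comp_smul hc hf,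
    ← setLIntegral_shell_eq hf, lintegral_withDensity_eq_lintegral_mul _ (by fun_prop) hf,
    ← lintegral_const_mul _ (by fun_prop)]
  refine lintegral_congr fun y => ?_
  rw [Pi.mul_apply, ENNReal.ofReal_mul (NNReal.coe_nonneg c), ENNReal.ofReal_coe_nnreal, mul_assoc]

lemma exists_integral_shellParam_eq (d : ℕ) [NeZero d] : ∃ c : ℝ≥0, ∀ f : Eu d → ℝ, Measurable f →
    ∫ p, f (p.1 • p.2) ∂(shellParam d) =
      ∫ y, (shell d).indicator (fun y => c * (‖y‖ ^ d)⁻¹) y * f y := by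
  obtain ⟨c, hc⟩ := exists_map_shellParam_eq d
  refine ⟨c, fun f hf => ?_⟩
  rw [← integral_map (φ := fun p : ℝ × Eu d => p.1 • p.2) (by fun_prop)
    hf.aestronglyMeasurable, hc,
    integral_withDensity_eq_integral_toReal_smul (by fun_prop)
      (Eventually.of_forall fun _ => ENNReal.ofReal_lt_top),
    ← integral_indicator (measurableSet_shell d)]
  refine integral_congr_ae (Eventually.of_forall fun y => ?_)
  by_cases h : y ∈ shell d
  · simp only [indicator_of_mem h, smul_eq_mul]
    rw [ENNReal.toReal_ofReal (by positivity)]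
  · simp only [indicator_of_notMem h, zero_mul]

section Jensen

variable {P : Type*} [MeasurableSpace P] (ν : Measure P) {q : ℝ}

lemma rpow_lintegral_le (hq : 1 ≤ q) {f : P → ℝ≥0∞} (hf : AEMeasurable f ν) :
    (∫⁻ p, f p ∂ν) ^ q ≤ ν univ ^ (q - 1) * ∫⁻ p, f p ^ q ∂ν := by
  rcases hq.eq_or_lt with rfl | hq
  · simp
  have hc := Real.HolderConjugate.conjExponent hq
  have h := ENNReal.lintegral_mul_le_Lp_mul_Lq ν hc hf (g := fun _ => 1) aemeasurable_const
  simp only [Pi.mul_apply, mul_one, ENNReal.one_rpow, lintegral_const, one_mul] at h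
  calc (∫⁻ p, f p ∂ν) ^ q
      ≤ ((∫⁻ p, f p ^ q ∂ν) ^ (1 / q) * ν univ ^ (1 / q.conjExponent)) ^ q := by gcongr
    _ = ν univ ^ (q - 1) * ∫⁻ p, f p ^ q ∂ν := by
      rw [ENNReal.mul_rpow_of_nonneg _ _ hc.nonneg, ← ENNReal.rpow_mul, ← ENNReal.rpow_mul,
        one_div_mul_cancel hc.ne_zero, ENNReal.rpow_one, mul_comm, one_div, mul_comm _ q,
        ← div_eq_mul_inv, hc.div_conj_eq_sub_one]

lemma measure_univ_rpow_sub_one_mul (hq : 1 ≤ q) : ν univ ^ (q - 1) * ν univ = ν univ ^ q := by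
  nth_rw 2 [← ENNReal.rpow_one (ν univ)]
  rw [← ENNReal.rpow_add_of_nonneg _ _ (by linarith) zero_le_one, sub_add_cancel]

variable [SFinite ν]

lemma lintegral_rpow_lintegral_le {X : Type*} [MeasurableSpace X] (μ : Measure X) [SFinite μ]
    (hq : 1 ≤ q) {F : X × P → ℝ≥0∞} (hF : Measurable F) {V : ℝ≥0∞}
    (hV : ∀ᵐ p ∂ν, ∫⁻ x, F (x, p) ^ q ∂μ ≤ V) :
    ∫⁻ x, (∫⁻ p, F (x, p) ∂ν) ^ q ∂μ ≤ ν univ ^ q * V :=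
  calc ∫⁻ x, (∫⁻ p, F (x, p) ∂ν) ^ q ∂μ
      ≤ ∫⁻ x, ν univ ^ (q - 1) * ∫⁻ p, F (x, p) ^ q ∂ν ∂μ :=
        lintegral_mono fun x =>
          rpow_lintegral_le ν hq (hF.comp measurable_prodMk_left).aemeasurable
    _ = ν univ ^ (q - 1) * ∫⁻ p, ∫⁻ x, F (x, p) ^ q ∂μ ∂ν := by
        rw [lintegral_const_mul _ (hF.pow_const q).lintegral_prod_right',
          lintegral_lintegral_swap (hF.pow_const q).aemeasurable]
    _ ≤ ν univ ^ (q - 1) * ∫⁻ _, V ∂ν := by gcongr 1; exact lintegral_mono_ae hV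
    _ = ν univ ^ q * V := by
        rw [lintegral_const, ← measure_univ_rpow_sub_one_mul ν hq, mul_comm V, mul_assoc]

lemma lintegral_rpow_lintegral_translate_le {G : Type*} [AddGroup G] [MeasurableSpace G]
    [MeasurableAdd₂ G] (μ : Measure G) [SFinite μ] [μ.IsAddRightInvariant]
    {θ : P → G} (hθ : Measurable θ) (hq : 1 ≤ q) {f : G → ℝ≥0∞} (hf : Measurable f) :
    ∫⁻ x, (∫⁻ p, f (x + θ p) ∂ν) ^ q ∂μ ≤ ν univ ^ q * ∫⁻ x, f x ^ q ∂μ :=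
  lintegral_rpow_lintegral_le ν μ hq (F := fun y => f (y.1 + θ y.2))
    (hf.comp (measurable_fst.add (hθ.comp measurable_snd)))
    (Eventually.of_forall fun p => (lintegral_add_right_eq_self (fun x => f x ^ q) (θ p)).le)

end Jensen

/-! ### Averages at scale `δ` and almost orthogonality -/

/-- Bounded, integrable, measurable real functions: the class on which every operator below is
defined by absolutely convergent integrals. -/
structure BddInt {α : Type*} [MeasureSpace α] (f : α → ℝ) : Prop where
  meas : Measurable f
  int : Integrable f
  bdd : ∃ B, ∀ x, |f x| ≤ B

namespace BddInt

variable {α : Type*} [MeasureSpace α] {f g : α → ℝ}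

lemma integrable_mul (hf : BddInt f) (hg : Integrable g) : Integrable fun x => f x * g x := by
  obtain ⟨B, hB⟩ := hf.bdd
  exact hg.bdd_mul hf.meas.aestronglyMeasurable (Eventually.of_forall hB)

lemma integrable_sq (hf : BddInt f) : Integrable fun x => f x ^ 2 := by
  simpa only [pow_two] using hf.integrable_mul hf.int

lemma indicator (hf : BddInt f) {s : Set α} (hs : MeasurableSet s) : BddInt (s.indicator f) := by
  obtain ⟨B, hB⟩ := hf.bdd
  exact ⟨hf.meas.indicator hs, hf.int.indicator hs, B, fun x =>
    (norm_indicator_le_norm_self f x).trans (hB x)⟩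

lemma abs (hf : BddInt f) : BddInt fun x => |f x| := by
  obtain ⟨B, hB⟩ := hf.bdd
  exact ⟨hf.meas.abs, hf.int.abs, B, fun x => (abs_abs (f x)).trans_le (hB x)⟩

lemma finsetSum {ι : Type*} (s : Finset ι) {f : ι → α → ℝ} (hf : ∀ i ∈ s, BddInt (f i)) :
    BddInt fun x => ∑ i ∈ s, f i x := by
  choose! B hB using fun i (hi : i ∈ s) => (hf i hi).bdd
  exact ⟨Finset.measurable_sum _ fun i hi => (hf i hi).meas,
    integrable_finsetSum _ fun i hi => (hf i hi).int, ∑ i ∈ s, B i, fun x =>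
    (Finset.abs_sum_le_sum_abs _ _).trans (Finset.sum_le_sum fun i hi => hB i hi x)⟩

lemma lintegral_enorm_rpow_two (hf : BddInt f) :
    ∫⁻ x, ‖f x‖ₑ ^ (2 : ℝ) = ENNReal.ofReal (∫ x, f x ^ 2) := by
  rw [ofReal_integral_eq_lintegral_ofReal hf.integrable_sq
    (Eventually.of_forall fun x => sq_nonneg _)]
  refine lintegral_congr fun x => ?_
  rw [← sq_abs, ENNReal.ofReal_pow (abs_nonneg _), ← Real.enorm_eq_ofReal_abs,
    ENNReal.rpow_ofNat]

lemma abs_integral_mul_le (hf : BddInt f) (hg : BddInt g) {η : ℝ} (hη : 0 < η) :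
    |∫ x, f x * g x| ≤ η / 2 * (∫ x, f x ^ 2) + (2 * η)⁻¹ * ∫ x, g x ^ 2 := by
  have hpt : ∀ x, |f x * g x| ≤ η / 2 * f x ^ 2 + (2 * η)⁻¹ * g x ^ 2 := fun x => by
    have hsq : η / 2 * f x ^ 2 + (2 * η)⁻¹ * g x ^ 2 - |f x * g x| =
        (2 * η)⁻¹ * (η * |f x| - |g x|) ^ 2 := by
      rw [abs_mul, sub_sq, mul_pow, sq_abs, sq_abs]
      field_simp
      ring
    exact sub_nonneg.1 (hsq ▸ by positivity)
  calc |∫ x, f x * g x| ≤ ∫ x, |f x * g x| := abs_integral_le_integral_abs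
    _ ≤ ∫ x, (η / 2 * f x ^ 2 + (2 * η)⁻¹ * g x ^ 2) :=
      integral_mono (hf.integrable_mul hg.int).abs
        ((hf.integrable_sq.const_mul _).add (hg.integrable_sq.const_mul _)) hpt
    _ = η / 2 * (∫ x, f x ^ 2) + (2 * η)⁻¹ * ∫ x, g x ^ 2 := by
      rw [integral_add (hf.integrable_sq.const_mul _) (hg.integrable_sq.const_mul _),
        integral_const_mul, integral_const_mul]

end BddInt

/-- The average of `f` at scale `δ` against the kernel `ψ`. -/
noncomputable def avg {E : Type*} [AddCommGroup E] [Module ℝ E] [MeasureSpace E] (ψ : E → ℝ)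
    (δ : ℝ) (f : E → ℝ) (x : E) : ℝ :=
  ∫ z, ψ z * f (x + δ • z)

section Avg

variable {E : Type*} [AddCommGroup E] [Module ℝ E] [MeasureSpace E] {ψ φ f g : E → ℝ} {δ : ℝ}

lemma abs_avg_le (hψ : Integrable ψ) {B : ℝ} (hB : ∀ x, |f x| ≤ B) (x : E) :
    |avg ψ δ f x| ≤ (∫ z, |ψ z|) * B := by
  rw [← integral_mul_const]
  refine norm_integral_le_of_norm_le (f := fun z => ψ z * f (x + δ • z)) (hψ.abs.mul_const B)
    (Eventually.of_forall fun z => ?_)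
  rw [norm_mul]
  exact mul_le_mul_of_nonneg_left (hB _) (norm_nonneg _)

lemma enorm_avg_le (x : E) : ‖avg ψ δ f x‖ₑ ≤ ∫⁻ z, ‖ψ z‖ₑ * ‖f (x + δ • z)‖ₑ := by
  simpa only [enorm_mul, avg] using enorm_integral_le_lintegral_enorm fun z => ψ z * f (x + δ • z)

variable [MeasurableAdd₂ E] [MeasurableConstSMul ℝ E]

lemma BddInt.integrable_kernel_mul (hf : BddInt f) (hψ : Integrable ψ) (δ : ℝ) (x : E) :
    Integrable fun z => ψ z * f (x + δ • z) := by
  obtain ⟨B, hB⟩ := hf.bdd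
  exact hψ.mul_bdd (hf.meas.comp (by fun_prop)).aestronglyMeasurable
    (Eventually.of_forall fun z => hB _)

lemma avg_add (hψ : Integrable ψ) (hf : BddInt f) (hg : BddInt g) (x : E) :
    avg ψ δ (f + g) x = avg ψ δ f x + avg ψ δ g x := by
  simp only [avg, Pi.add_apply, mul_add]
  exact integral_add (hf.integrable_kernel_mul hψ δ x) (hg.integrable_kernel_mul hψ δ x)

lemma avg_sub_const_mul (hψ : Integrable ψ) (hφ : Integrable φ) (hf : BddInt f) (m : ℝ) (x : E) :
    avg (fun z => ψ z - m * φ z) δ f x = avg ψ δ f x - m * avg φ δ f x := by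
  simp only [avg, sub_mul, mul_assoc]
  rw [integral_sub (hf.integrable_kernel_mul hψ δ x)
    ((hf.integrable_kernel_mul hφ δ x).const_mul m), integral_const_mul]

variable [SFinite (volume : Measure E)]

lemma measurable_avg (hψ : Measurable ψ) (hf : Measurable f) : Measurable (avg ψ δ f) :=
  (StronglyMeasurable.integral_prod_right' (f := fun p : E × E => ψ p.2 * f (p.1 + δ • p.2))
    ((hψ.comp measurable_snd).mul (hf.comp (by fun_prop))).stronglyMeasurable).measurable

variable [(volume : Measure E).IsAddLeftInvariant]

lemma integrable_avg_kernel (hψ : Integrable ψ) (hf : Integrable f)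
    (hψm : Measurable ψ) (hfm : Measurable f) :
    Integrable fun p : E × E => ψ p.2 * f (p.1 + δ • p.2) := by
  refine ⟨((hψm.comp measurable_snd).mul (hfm.comp (by fun_prop))).aestronglyMeasurable, ?_⟩
  have hm : Measurable fun p : E × E => ‖ψ p.2 * f (p.1 + δ • p.2)‖ₑ :=
    ((hψm.comp measurable_snd).mul (hfm.comp (by fun_prop))).enorm
  rw [hasFiniteIntegral_iff_enorm, Measure.volume_eq_prod, lintegral_prod_symm _ hm.aemeasurable]
  have hinner : ∀ z, ∫⁻ x, ‖ψ z * f (x + δ • z)‖ₑ = ‖ψ z‖ₑ * ∫⁻ x, ‖f x‖ₑ := fun z => by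
    simp only [enorm_mul]
    rw [lintegral_const_mul' _ _ enorm_ne_top,
      lintegral_add_right_eq_self (fun x => ‖f x‖ₑ) (δ • z)]
  simp only [hinner]
  rw [lintegral_mul_const' _ _ hf.2.ne]
  exact ENNReal.mul_lt_top hψ.2 hf.2

lemma integrable_avg (hψ : Integrable ψ) (hf : Integrable f)
    (hψm : Measurable ψ) (hfm : Measurable f) : Integrable (avg ψ δ f) :=
  (integrable_avg_kernel hψ hf hψm hfm).integral_prod_left

lemma BddInt.avg (hf : BddInt f) (hψ : Integrable ψ) (hψm : Measurable ψ) :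
    BddInt (avg ψ δ f) := by
  obtain ⟨B, hB⟩ := hf.bdd
  exact ⟨measurable_avg hψm hf.meas, integrable_avg hψ hf.int hψm hf.meas,
    _, abs_avg_le hψ hB⟩

lemma lintegral_rpow_avg_le {q : ℝ} (hq : 1 ≤ q) (hψm : Measurable ψ) (hfm : Measurable f) :
    ∫⁻ x, ‖avg ψ δ f x‖ₑ ^ q ≤ (∫⁻ z, ‖ψ z‖ₑ) ^ q * ∫⁻ x, ‖f x‖ₑ ^ q := by
  have h := lintegral_rpow_lintegral_translate_le (volume.withDensity fun z => ‖ψ z‖ₑ) volume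
    (θ := fun z : E => δ • z) (by fun_prop) hq hfm.enorm
  rw [withDensity_apply _ MeasurableSet.univ, Measure.restrict_univ] at h
  refine le_trans (lintegral_mono fun x => ?_) h
  refine ENNReal.rpow_le_rpow ((enorm_avg_le x).trans_eq ?_) (by linarith)
  have hm : Measurable fun z => ‖f (x + δ • z)‖ₑ := (hfm.comp (by fun_prop)).enorm
  rw [lintegral_withDensity_eq_lintegral_mul _ hψm.enorm hm]
  rfl

lemma integral_avg_sq_le (hψ : Integrable ψ) (hψm : Measurable ψ) (hf : BddInt f)
    {N : ℝ} (hN : ∫ z, |ψ z| ≤ N) :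
    ∫ x, avg ψ δ f x ^ 2 ≤ N ^ 2 * ∫ x, f x ^ 2 := by
  have hN0 : 0 ≤ N := le_trans (integral_nonneg fun _ => abs_nonneg _) hN
  have hf0 : 0 ≤ ∫ x, f x ^ 2 := integral_nonneg fun _ => sq_nonneg _
  rw [← ENNReal.ofReal_le_ofReal_iff (mul_nonneg (sq_nonneg _) hf0),
    ← (hf.avg hψ hψm).lintegral_enorm_rpow_two, ENNReal.ofReal_mul (sq_nonneg _),
    ← hf.lintegral_enorm_rpow_two, ENNReal.ofReal_pow hN0, ← ENNReal.rpow_ofNat]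
  refine (lintegral_rpow_avg_le one_le_two hψm hf.meas).trans ?_
  rw [← ofReal_integral_norm_eq_lintegral_enorm hψ]
  gcongr
  exact hN

lemma integral_mul_avg (hψ : Integrable ψ) (hψm : Measurable ψ) (hf : BddInt f) (hg : BddInt g) :
    ∫ x, f x * avg ψ δ g x = ∫ x, avg ψ (-δ) f x * g x := by
  have hkernel : ∀ {f g : E → ℝ} {δ : ℝ}, BddInt f → BddInt g →
      Integrable (Function.uncurry fun x z : E => f x * (ψ z * g (x + δ • z))) :=
    fun {f g δ} hf hg => by
      obtain ⟨B, hB⟩ := hf.bdd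
      exact (integrable_avg_kernel hψ hg.int hψm hg.meas).bdd_mul
        (hf.meas.comp measurable_fst).aestronglyMeasurable (Eventually.of_forall fun p => hB p.1)
  calc ∫ x, f x * avg ψ δ g x = ∫ x, ∫ z, f x * (ψ z * g (x + δ • z)) := by
        simp only [QopBound.avg, integral_const_mul]
    _ = ∫ z, ∫ x, f x * (ψ z * g (x + δ • z)) := integral_integral_swap (hkernel hf hg)
    _ = ∫ z, ∫ x, g x * (ψ z * f (x + (-δ) • z)) := by
        congr 1
        ext z
        rw [← integral_add_right_eq_self _ ((-δ) • z)]
        congr 1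
        ext x
        rw [show x + -δ • z + δ • z = x by module]
        ring
    _ = ∫ x, ∫ z, g x * (ψ z * f (x + (-δ) • z)) :=
        (integral_integral_swap (hkernel hg hf)).symm
    _ = ∫ x, avg ψ (-δ) f x * g x := by
        simp only [QopBound.avg, integral_const_mul, mul_comm]

lemma avg_avg (hψ : Integrable ψ) (hψm : Measurable ψ) (hf : BddInt f) (t : ℝ) (x : E) :
    avg ψ δ (avg ψ (-(δ * t)) f) x = avg (avg ψ t ψ) δ f x := by
  obtain ⟨B, hB⟩ := hf.bdd
  have hleft : Integrable (Function.uncurry fun z y : E =>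
      f (x + δ • z + (-(δ * t)) • y) * (ψ z * ψ y)) :=
    (hψ.mul_prod hψ).bdd_mul (hf.meas.comp (by fun_prop)).aestronglyMeasurable
      (Eventually.of_forall fun p => hB _)
  have hright : Integrable (Function.uncurry fun z y : E =>
      f (x + δ • z) * (ψ y * ψ (z + t • y))) :=
    (integrable_avg_kernel hψ hψ hψm hψm).bdd_mul
      (hf.meas.comp (by fun_prop)).aestronglyMeasurable (Eventually.of_forall fun p => hB _)
  calc avg ψ δ (avg ψ (-(δ * t)) f) x
      = ∫ z, ∫ y, f (x + δ • z + (-(δ * t)) • y) * (ψ z * ψ y) := by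
        simp only [QopBound.avg, ← integral_const_mul]
        congr! 4
        ring
    _ = ∫ y, ∫ z, f (x + δ • z + (-(δ * t)) • y) * (ψ z * ψ y) := integral_integral_swap hleft
    _ = ∫ y, ∫ z, f (x + δ • z) * (ψ y * ψ (z + t • y)) := by
        congr 1
        ext y
        rw [← integral_add_right_eq_self _ (t • y)]
        congr 1
        ext z
        rw [show x + δ • (z + t • y) + -(δ * t) • y = x + δ • z by module]
        ring
    _ = ∫ z, ∫ y, f (x + δ • z) * (ψ y * ψ (z + t • y)) := (integral_integral_swap hright).symm
    _ = avg (avg ψ t ψ) δ f x := by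
        simp only [QopBound.avg, integral_const_mul, mul_comm]

end Avg

lemma sum_pow_natDist_le {x : ℝ} (hx0 : 0 ≤ x) (hx1 : x < 1) (n k : ℕ) :
    ∑ j ∈ Finset.range n, x ^ ((k - j) + (j - k)) ≤ 2 / (1 - x) := by
  have hgeom : ∀ s : Finset ℕ, Set.InjOn (fun j => (k - j) + (j - k)) s →
      ∑ j ∈ s, x ^ ((k - j) + (j - k)) ≤ (1 - x)⁻¹ := fun s hs => by
    rw [← tsum_geometric_of_lt_one hx0 hx1, ← Finset.sum_image (f := fun i => x ^ i) hs]
    exact (summable_geometric_of_lt_one hx0 hx1).sum_le_tsum _ fun i _ => pow_nonneg hx0 i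
  rw [← Finset.sum_filter_add_sum_filter_not _ (fun j => j ≤ k)]
  calc _ ≤ (1 - x)⁻¹ + (1 - x)⁻¹ := by
        refine add_le_add (hgeom _ fun i hi j hj hij => ?_) (hgeom _ fun i hi j hj hij => ?_) <;>
        · simp only [Finset.coe_filter, Finset.mem_range, mem_ofPred_eq] at hi hj hij
          omega
    _ = 2 / (1 - x) := by ring

lemma sum_sum_mul_add_div_two_le {ι : Type*} {s : Finset ι} {a : ι → ι → ℝ} {X : ι → ℝ} {Λ : ℝ}
    (hsymm : ∀ i j, a i j = a j i) (hrow : ∀ i ∈ s, ∑ j ∈ s, a i j ≤ Λ) (hX : ∀ i, 0 ≤ X i) :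
    ∑ i ∈ s, ∑ j ∈ s, a i j * ((X i + X j) / 2) ≤ Λ * ∑ i ∈ s, X i := by
  have hswap : ∑ i ∈ s, ∑ j ∈ s, a i j * (X j / 2) = ∑ i ∈ s, ∑ j ∈ s, a i j * (X i / 2) := by
    rw [Finset.sum_comm]
    simp only [hsymm]
  calc ∑ i ∈ s, ∑ j ∈ s, a i j * ((X i + X j) / 2)
      = ∑ i ∈ s, ∑ j ∈ s, a i j * (X i / 2) + ∑ i ∈ s, ∑ j ∈ s, a i j * (X j / 2) := by
        simp only [← Finset.sum_add_distrib, ← mul_add, add_div]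
    _ = ∑ i ∈ s, (∑ j ∈ s, a i j) * X i := by
        rw [hswap, ← two_mul, Finset.mul_sum]
        refine Finset.sum_congr rfl fun i _ => ?_
        rw [← Finset.sum_mul]
        ring
    _ ≤ ∑ i ∈ s, Λ * X i :=
        Finset.sum_le_sum fun i hi => mul_le_mul_of_nonneg_right (hrow i hi) (hX i)
    _ = Λ * ∑ i ∈ s, X i := by rw [Finset.mul_sum]

lemma sum_integral_sq_le_of_almost_orthogonal {α ι : Type*} [MeasureSpace α] {s : Finset ι}
    {f : α → ℝ} {F W : ι → α → ℝ} {a : ι → ι → ℝ} {Λ : ℝ} (hf : BddInt f)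
    (hW : ∀ i, BddInt (W i)) (hFW : ∀ i, ∫ x, F i x ^ 2 = ∫ x, W i x * f x)
    (ha : ∀ i j, ∫ x, W i x * W j x ≤ a i j * (((∫ x, F i x ^ 2) + ∫ x, F j x ^ 2) / 2))
    (hsymm : ∀ i j, a i j = a j i) (hrow : ∀ i ∈ s, ∑ j ∈ s, a i j ≤ Λ) (hΛ : 0 < Λ) :
    ∑ i ∈ s, ∫ x, F i x ^ 2 ≤ Λ * ∫ x, f x ^ 2 := by
  set X : ℝ := ∑ i ∈ s, ∫ x, F i x ^ 2
  have hsq : ∫ x, (∑ i ∈ s, W i x) ^ 2 ≤ Λ * X := by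
    calc ∫ x, (∑ i ∈ s, W i x) ^ 2 = ∑ i ∈ s, ∑ j ∈ s, ∫ x, W i x * W j x := by
          simp only [pow_two, Finset.sum_mul_sum]
          rw [integral_finsetSum _ fun i _ => integrable_finsetSum _ fun j _ =>
            (hW i).integrable_mul (hW j).int]
          exact Finset.sum_congr rfl fun i _ =>
            integral_finsetSum _ fun j _ => (hW i).integrable_mul (hW j).int
      _ ≤ ∑ i ∈ s, ∑ j ∈ s, a i j * (((∫ x, F i x ^ 2) + ∫ x, F j x ^ 2) / 2) :=
          Finset.sum_le_sum fun i _ => Finset.sum_le_sum fun j _ => ha i j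
      _ ≤ Λ * X := sum_sum_mul_add_div_two_le hsymm hrow fun i =>
          integral_nonneg fun _ => sq_nonneg _
  have hpair : X = ∫ x, f x * ∑ i ∈ s, W i x := by
    simp only [Finset.mul_sum]
    rw [integral_finsetSum _ fun i _ => hf.integrable_mul (hW i).int]
    exact Finset.sum_congr rfl fun i _ => by simp only [hFW, mul_comm]
  have hhalf : X ≤ Λ / 2 * (∫ x, f x ^ 2) + X / 2 :=
    calc X ≤ Λ / 2 * (∫ x, f x ^ 2) + (2 * Λ)⁻¹ * ∫ x, (∑ i ∈ s, W i x) ^ 2 :=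
          hpair.le.trans ((le_abs_self _).trans
            (hf.abs_integral_mul_le (.finsetSum s fun i _ => hW i) hΛ))
      _ ≤ Λ / 2 * (∫ x, f x ^ 2) + (2 * Λ)⁻¹ * (Λ * X) := by gcongr
      _ = Λ / 2 * (∫ x, f x ^ 2) + X / 2 := by field_simp
  linarith

/-- Kernels supported in the ball of radius `R`, with `L¹` norm at most `N` and with an `L¹`
modulus of continuity of order `s`. -/
structure IsModKernel {E : Type*} [NormedAddCommGroup E] [MeasureSpace E] (ψ : E → ℝ)
    (N C₀ R s : ℝ) : Prop where
  meas : Measurable ψ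
  int : Integrable ψ
  supp : ∀ z, R < ‖z‖ → ψ z = 0
  norm_le : ∫ z, |ψ z| ≤ N
  modulus : ∀ τ, ∫ z, |ψ (z + τ) - ψ z| ≤ C₀ * ‖τ‖ ^ s

/-- Mean-zero kernels with an `L¹` modulus of continuity: their averages over different dyadic
scales are almost orthogonal. -/
structure IsOscKernel {E : Type*} [NormedAddCommGroup E] [MeasureSpace E] (ψ : E → ℝ)
    (N C₀ R s : ℝ) : Prop extends IsModKernel ψ N C₀ R s where
  integral_eq_zero : ∫ z, ψ z = 0

namespace IsOscKernel

variable {E : Type*} [NormedAddCommGroup E] [NormedSpace ℝ E] [MeasureSpace E]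
  {ψ f : E → ℝ} {N C₀ R s δ t : ℝ}

lemma avg_self_eq (hψ : IsOscKernel ψ N C₀ R s) (z : E) :
    avg ψ t ψ z = ∫ y, ψ y * (ψ (z + t • y) - ψ z) := by
  have hz : Integrable fun y => ψ y * ψ z := hψ.int.mul_const _
  simp only [mul_sub, avg]
  by_cases h : Integrable fun y => ψ y * ψ (z + t • y)
  · rw [integral_sub h hz, integral_mul_const, hψ.integral_eq_zero, zero_mul, sub_zero]
  · rw [integral_undef h, integral_undef fun h' => h ?_]
    exact (h'.add hz).congr (Eventually.of_forall fun y => by simp)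

variable [MeasurableAdd₂ E] [MeasurableConstSMul ℝ E] [SFinite (volume : Measure E)]
  [(volume : Measure E).IsAddLeftInvariant]

lemma integral_abs_avg_self_le (hψ : IsOscKernel ψ N C₀ R s) (hC : 0 ≤ C₀) (hs : 0 ≤ s)
    (ht : 0 ≤ t) (hR : 0 ≤ R) :
    ∫ z, |avg ψ t ψ z| ≤ N * (C₀ * (t * R) ^ s) := by
  have h_int : Integrable (Function.uncurry fun z y : E => ψ y * (ψ (z + t • y) - ψ z)) := by
    refine ((integrable_avg_kernel (δ := t) hψ.int hψ.int hψ.meas hψ.meas).sub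
      (hψ.int.mul_prod hψ.int)).congr (Eventually.of_forall fun p => ?_)
    simp only [Pi.sub_apply, Function.uncurry]
    ring
  calc ∫ z, |avg ψ t ψ z| ≤ ∫ z, ∫ y, |ψ y * (ψ (z + t • y) - ψ z)| := by
        refine integral_mono (integrable_avg hψ.int hψ.int hψ.meas hψ.meas).abs
          h_int.abs.integral_prod_left fun z => ?_
        rw [hψ.avg_self_eq]
        exact abs_integral_le_integral_abs
    _ = ∫ y, ∫ z, |ψ y * (ψ (z + t • y) - ψ z)| := integral_integral_swap h_int.abs
    _ ≤ ∫ y, |ψ y| * (C₀ * (t * R) ^ s) := by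
        refine integral_mono h_int.abs.integral_prod_right (hψ.int.abs.mul_const _) fun y => ?_
        simp only [abs_mul, integral_const_mul]
        by_cases hy : R < ‖y‖
        · simp only [hψ.supp y hy, abs_zero, zero_mul, le_refl]
        · refine mul_le_mul_of_nonneg_left ((hψ.modulus _).trans ?_) (abs_nonneg _)
          rw [norm_smul, Real.norm_of_nonneg ht]
          gcongr
          exact not_lt.1 hy
    _ ≤ N * (C₀ * (t * R) ^ s) := by
        rw [integral_mul_const]
        gcongr
        exact hψ.norm_le

lemma integral_avg_avg_mul_le (hψ : IsOscKernel ψ N C₀ R s) (hN : 0 < N) (hC : 0 < C₀)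
    (hR : 0 < R) (hs : 0 ≤ s) (ht : 0 < t) (hf : BddInt f) :
    ∫ x, avg ψ (-δ) (avg ψ δ f) x * avg ψ (-(δ * t)) (avg ψ (δ * t) f) x ≤
      N * C₀ * R ^ s * t ^ s *
        (((∫ x, avg ψ δ f x ^ 2) + ∫ x, avg ψ (δ * t) f x ^ 2) / 2) := by
  set η : ℝ := N * C₀ * R ^ s * t ^ s with hη
  have hη0 : 0 < η := by positivity
  have hb : ∀ (ε : ℝ) {u : E → ℝ}, BddInt u → BddInt (avg ψ ε u) :=
    fun ε u hu => hu.avg hψ.int hψ.meas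
  have hself : ∫ z, |avg ψ t ψ z| ≤ η :=
    (hψ.integral_abs_avg_self_le hC.le hs ht.le hR.le).trans_eq (by
      rw [Real.mul_rpow ht.le hR.le, hη]
      ring)
  have hself_int : Integrable (avg ψ t ψ) := integrable_avg hψ.int hψ.int hψ.meas hψ.meas
  have hself_meas : Measurable (avg ψ t ψ) := measurable_avg hψ.meas hψ.meas
  set V : E → ℝ := avg (avg ψ t ψ) δ (avg ψ (δ * t) f) with hV
  calc ∫ x, avg ψ (-δ) (avg ψ δ f) x * avg ψ (-(δ * t)) (avg ψ (δ * t) f) x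
      = ∫ x, avg ψ δ f x * V x := by
        rw [← integral_mul_avg hψ.int hψ.meas (hb _ hf) (hb _ (hb _ hf)), hV]
        simp only [avg_avg hψ.int hψ.meas (hb _ hf)]
    _ ≤ η / 2 * (∫ x, avg ψ δ f x ^ 2) + (2 * η)⁻¹ * ∫ x, V x ^ 2 :=
        (le_abs_self _).trans
          ((hb _ hf).abs_integral_mul_le ((hb _ hf).avg hself_int hself_meas) hη0)
    _ ≤ η / 2 * (∫ x, avg ψ δ f x ^ 2) +
          (2 * η)⁻¹ * (η ^ 2 * ∫ x, avg ψ (δ * t) f x ^ 2) := by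
        gcongr
        exact integral_avg_sq_le hself_int hself_meas (hb _ hf) hself
    _ = η * (((∫ x, avg ψ δ f x ^ 2) + ∫ x, avg ψ (δ * t) f x ^ 2) / 2) := by field_simp

theorem sum_integral_avg_sq_le (hψ : IsOscKernel ψ N C₀ R s) (hN : 0 < N) (hC : 0 < C₀)
    (hR : 0 < R) (hs : 0 < s) (hf : BddInt f) (n : ℕ) :
    ∑ k ∈ Finset.range n, ∫ x, avg ψ (δ * (1 / 2) ^ k) f x ^ 2 ≤
      N * C₀ * R ^ s * (2 / (1 - (1 / 2) ^ s)) * ∫ x, f x ^ 2 := by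
  set b : ℝ := (1 / 2) ^ s with hb
  have hb0 : 0 < b := by positivity
  have hb1 : 0 < 1 - b := sub_pos.2 (Real.rpow_lt_one (by norm_num) (by norm_num) hs)
  have hF : ∀ k : ℕ, BddInt (avg ψ (δ * (1 / 2) ^ k) f) := fun k => hf.avg hψ.int hψ.meas
  have hle : ∀ k j : ℕ, k ≤ j →
      ∫ x, avg ψ (-(δ * (1 / 2) ^ k)) (avg ψ (δ * (1 / 2) ^ k) f) x *
        avg ψ (-(δ * (1 / 2) ^ j)) (avg ψ (δ * (1 / 2) ^ j) f) x ≤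
      N * C₀ * R ^ s * b ^ ((k - j) + (j - k)) *
        (((∫ x, avg ψ (δ * (1 / 2) ^ k) f x ^ 2) + ∫ x, avg ψ (δ * (1 / 2) ^ j) f x ^ 2) / 2) :=
    fun k j hkj => by
      have hscale : δ * (1 / 2) ^ j = δ * (1 / 2) ^ k * (1 / 2) ^ (j - k) := by
        rw [mul_assoc, ← pow_add, Nat.add_sub_cancel' hkj]
      rw [Nat.sub_eq_zero_of_le hkj, zero_add, hb, hscale, Real.rpow_pow_comm (by norm_num)]
      exact hψ.integral_avg_avg_mul_le hN hC hR hs.le (by positivity) hf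
  refine sum_integral_sq_le_of_almost_orthogonal hf
    (W := fun k => avg ψ (-(δ * (1 / 2) ^ k)) (avg ψ (δ * (1 / 2) ^ k) f))
    (a := fun k j => N * C₀ * R ^ s * b ^ ((k - j) + (j - k)))
    (fun k => (hF k).avg hψ.int hψ.meas) (fun k => ?_) (fun k j => ?_) (fun k j => ?_)
    (fun k _ => ?_) (by positivity)
  · simp only [pow_two]
    exact integral_mul_avg hψ.int hψ.meas (hF k) hf
  · rcases le_total k j with h | h
    · exact hle k j h
    · refine (le_of_eq ?_).trans ((hle j k h).trans_eq ?_)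
      · simp only [mul_comm]
      · rw [add_comm (j - k), add_comm (∫ x, avg ψ (δ * (1 / 2) ^ j) f x ^ 2)]
  · rw [add_comm]
  · rw [← Finset.mul_sum]
    gcongr
    exact sum_pow_natDist_le hb0.le (by linarith) n k

end IsOscKernel

/-! ### Marcinkiewicz interpolation -/

lemma ofReal_mul_indicator_one {α : Type*} (s : Set α) (f : α → ℝ) (x : α) :
    ENNReal.ofReal (f x) * s.indicator 1 x = s.indicator (fun y => ENNReal.ofReal (f y)) x := by
  by_cases hx : x ∈ s <;> simp [hx]

lemma setLIntegral_Ioi_rpow_indicator_Iio {a s : ℝ} (ha : 0 < a) (hs : 0 ≤ s) :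
    ∫⁻ t in Ioi (0 : ℝ), ENNReal.ofReal (t ^ (a - 1)) * (Iio s).indicator 1 t =
      ENNReal.ofReal (s ^ a / a) := by
  have hi : IntervalIntegrable (fun t : ℝ => t ^ (a - 1)) volume 0 s :=
    intervalIntegral.intervalIntegrable_rpow' (by linarith)
  simp only [ofReal_mul_indicator_one (Iio s) (fun t : ℝ => t ^ (a - 1))]
  rw [lintegral_indicator measurableSet_Iio, Measure.restrict_restrict measurableSet_Iio,
    Iio_inter_Ioi, restrict_Ioo_eq_restrict_Ioc, ← ofReal_integral_eq_lintegral_ofReal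
      ((intervalIntegrable_iff_integrableOn_Ioc_of_le hs).1 hi)
    ((ae_restrict_iff' measurableSet_Ioc).2 (Eventually.of_forall fun t ht =>
      Real.rpow_nonneg ht.1.le _)), ← intervalIntegral.integral_of_le hs,
    integral_rpow (Or.inl (by linarith)), sub_add_cancel, Real.zero_rpow ha.ne', sub_zero]

lemma setLIntegral_Ioi_rpow_indicator_Ici {b s : ℝ} (hb : b < 0) (hs : 0 < s) :
    ∫⁻ t in Ioi (0 : ℝ), ENNReal.ofReal (t ^ (b - 1)) * (Ici s).indicator 1 t =
      ENNReal.ofReal (s ^ b / -b) := by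
  simp only [ofReal_mul_indicator_one (Ici s) (fun t : ℝ => t ^ (b - 1))]
  rw [lintegral_indicator measurableSet_Ici, Measure.restrict_restrict measurableSet_Ici,
    inter_eq_left.2 (Ici_subset_Ioi.2 hs), Measure.restrict_congr_set Ioi_ae_eq_Ici.symm,
    ← ofReal_integral_eq_lintegral_ofReal (integrableOn_Ioi_rpow_of_lt (by linarith) hs)
    ((ae_restrict_iff' measurableSet_Ioi).2 (Eventually.of_forall fun t ht =>
      Real.rpow_nonneg (hs.trans ht).le _)), integral_Ioi_rpow_of_lt (by linarith) hs,
    sub_add_cancel, neg_div, div_neg]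

lemma indicator_above_add_below {α : Type*} {c t : ℝ} (f : α → ℝ) (hc : 0 < c) :
    {x | t < c * |f x|}.indicator f + {x | |f x| ≤ c⁻¹ * t}.indicator f = f := by
  have hcompl : {x | |f x| ≤ c⁻¹ * t} = {x | t < c * |f x|}ᶜ := by
    ext x
    simp only [mem_ofPred_eq, mem_compl_iff, not_lt]
    rw [le_inv_mul_iff₀ hc]
  rw [hcompl, indicator_self_add_compl]

section Interpolation

variable {α : Type*} [MeasureSpace α] {f u : α → ℝ} {p p₀ p₁ q c t : ℝ}

lemma meas_lt_le_lintegral_rpow (hu : Measurable u) (hp : 0 < p) (ht : 0 < t) :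
    volume {x | t < u x} ≤ ENNReal.ofReal (t ^ (-p)) * ∫⁻ x, ‖u x‖ₑ ^ p := by
  have h := meas_ge_le_lintegral_div (μ := volume) (f := fun x => ‖u x‖ₑ ^ p)
    (hu.enorm.pow_const p).aemeasurable (ε := ENNReal.ofReal (t ^ p))
    (by simpa using Real.rpow_pos_of_pos ht p) ENNReal.ofReal_ne_top
  rw [Real.rpow_neg ht.le, ENNReal.ofReal_inv_of_pos (by positivity), mul_comm, ← div_eq_mul_inv]
  refine le_trans (measure_mono fun x (hx : t < u x) => ?_) h
  rw [mem_ofPred_eq, ← ENNReal.ofReal_rpow_of_nonneg ht.le hp.le, Real.enorm_eq_ofReal_abs]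
  gcongr
  exact hx.le.trans (le_abs_self _)

lemma meas_half_lt_mul_rpow_le (hu : Measurable u) (hp : 0 < p) (ht : 0 < t) :
    volume {x | t / 2 < u x} * ENNReal.ofReal (t ^ (q - 1)) ≤
      ENNReal.ofReal (2 ^ p) * (ENNReal.ofReal (t ^ (q - p - 1)) * ∫⁻ x, ‖u x‖ₑ ^ p) := by
  have hpow : (t / 2) ^ (-p) * t ^ (q - 1) = 2 ^ p * t ^ (q - p - 1) := by
    rw [Real.div_rpow ht.le zero_le_two, Real.rpow_neg zero_le_two, div_inv_eq_mul,
      mul_right_comm, ← Real.rpow_add ht, mul_comm]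
    ring_nf
  refine (mul_le_mul_left (meas_lt_le_lintegral_rpow hu hp (half_pos ht)) _).trans_eq ?_
  rw [mul_right_comm, ← ENNReal.ofReal_mul (by positivity), hpow,
    ENNReal.ofReal_mul (by positivity), mul_assoc]

lemma lintegral_enorm_rpow_eq_meas_lt (hu : Measurable u) (hu0 : ∀ x, 0 ≤ u x) (hq : 0 < q) :
    ∫⁻ x, ‖u x‖ₑ ^ q =
      ENNReal.ofReal q *
        ∫⁻ t in Ioi (0 : ℝ), volume {x | t < u x} * ENNReal.ofReal (t ^ (q - 1)) := by
  rw [← lintegral_rpow_eq_lintegral_meas_lt_mul volume (Eventually.of_forall hu0) hu.aemeasurable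
    hq]
  refine lintegral_congr fun x => ?_
  rw [← ENNReal.ofReal_rpow_of_nonneg (hu0 x) hq.le, Real.enorm_of_nonneg (hu0 x)]

/-- Nonnegative subadditive operators on bounded integrable functions. -/
structure IsSubadditiveOp (S : (α → ℝ) → α → ℝ) : Prop where
  measurable : ∀ f, BddInt f → Measurable (S f)
  nonneg : ∀ f x, 0 ≤ S f x
  add_le : ∀ f g, BddInt f → BddInt g → ∀ x, S (f + g) x ≤ S f x + S g x

lemma BddInt.indicator_above (hf : BddInt f) : BddInt ({x | t < c * |f x|}.indicator f) :=
  hf.indicator (measurableSet_lt measurable_const (hf.meas.abs.const_mul c))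

lemma BddInt.indicator_below (hf : BddInt f) : BddInt ({x | |f x| ≤ t}.indicator f) :=
  hf.indicator (measurableSet_le hf.meas.abs measurable_const)

lemma IsSubadditiveOp.setOf_lt_subset {S : (α → ℝ) → α → ℝ} (hS : IsSubadditiveOp S)
    {f₁ f₂ : α → ℝ} (h₁ : BddInt f₁) (h₂ : BddInt f₂) (hsum : f₁ + f₂ = f) :
    {x | t < S f x} ⊆ {x | t / 2 < S f₁ x} ∪ {x | t / 2 < S f₂ x} := by
  intro x (hx : t < S f x)
  by_contra! hcon
  simp only [mem_union, mem_ofPred_eq, not_or, not_lt] at hcon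
  have := hsum ▸ hS.add_le f₁ f₂ h₁ h₂ x
  linarith

lemma IsSubadditiveOp.meas_half_lt_mul_rpow_le {S : (α → ℝ) → α → ℝ} (hS : IsSubadditiveOp S)
    {N : ℝ≥0} (hp : ∀ f, BddInt f → ∫⁻ x, ‖S f x‖ₑ ^ p ≤ N * ∫⁻ x, ‖f x‖ₑ ^ p)
    (hp0 : 0 < p) (ht : 0 < t) (hf : BddInt f) :
    volume {x | t / 2 < S f x} * ENNReal.ofReal (t ^ (q - 1)) ≤
      ENNReal.ofReal (2 ^ p) * N * (ENNReal.ofReal (t ^ (q - p - 1)) * ∫⁻ x, ‖f x‖ₑ ^ p) := by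
  refine (QopBound.meas_half_lt_mul_rpow_le (hS.measurable f hf) hp0 ht).trans ?_
  rw [mul_assoc, mul_left_comm (N : ℝ≥0∞)]
  gcongr
  exact hp f hf

variable [SFinite (volume : Measure α)]

lemma lintegral_mul_lintegral_indicator_rpow (hf : Measurable f) (hp : 0 < p) {w : ℝ → ℝ≥0∞}
    (hw : Measurable w) {s : Set (ℝ × α)} (hs : MeasurableSet s) :
    ∫⁻ t in Ioi (0 : ℝ), w t * ∫⁻ x, ‖{x | (t, x) ∈ s}.indicator f x‖ₑ ^ p =
      ∫⁻ x, ‖f x‖ₑ ^ p * ∫⁻ t in Ioi (0 : ℝ), w t * {t | (t, x) ∈ s}.indicator 1 t := by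
  have hmeas : Measurable fun y : ℝ × α => w y.1 * (‖f y.2‖ₑ ^ p * s.indicator 1 y) :=
    (hw.comp measurable_fst).mul
      (((hf.comp measurable_snd).enorm.pow_const p).mul (measurable_one.indicator hs))
  calc _ = ∫⁻ t in Ioi (0 : ℝ), ∫⁻ x, w t * (‖f x‖ₑ ^ p * s.indicator 1 (t, x)) := by
        refine lintegral_congr fun t => ?_
        have hslice : Measurable ({x | (t, x) ∈ s}.indicator f) :=
          hf.indicator (measurable_prodMk_left hs)
        rw [← lintegral_const_mul _ (hslice.enorm.pow_const p)]
        refine lintegral_congr fun x => ?_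
        by_cases h : (t, x) ∈ s <;> simp [indicator, h, hp]
    _ = ∫⁻ x, ∫⁻ t in Ioi (0 : ℝ), w t * (‖f x‖ₑ ^ p * s.indicator 1 (t, x)) :=
        lintegral_lintegral_swap hmeas.aemeasurable
    _ = _ := by
        refine lintegral_congr fun x => ?_
        simp only [mul_left_comm _ (‖f x‖ₑ ^ p)]
        exact lintegral_const_mul' _ _ (by finiteness)

lemma lintegral_rpow_mul_lintegral_above (hf : Measurable f) (hp : 0 < p) (hpq : p < q)
    (hc : 0 < c) :
    ∫⁻ t in Ioi (0 : ℝ), ENNReal.ofReal (t ^ (q - p - 1)) *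
        ∫⁻ x, ‖{x | t < c * |f x|}.indicator f x‖ₑ ^ p =
      ENNReal.ofReal (c ^ (q - p) / (q - p)) * ∫⁻ x, ‖f x‖ₑ ^ q := by
  have hqp : 0 < q - p := sub_pos.2 hpq
  refine (lintegral_mul_lintegral_indicator_rpow hf hp (by fun_prop)
    (s := {y : ℝ × α | y.1 < c * |f y.2|}) (measurableSet_lt (by fun_prop) (by fun_prop))).trans ?_
  rw [← lintegral_const_mul' _ _ ENNReal.ofReal_ne_top]
  refine lintegral_congr fun x => ?_
  have hlayer := setLIntegral_Ioi_rpow_indicator_Iio hqp (s := c * |f x|) (by positivity)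
  refine (congrArg (‖f x‖ₑ ^ p * ·) hlayer).trans ?_
  rw [Real.mul_rpow hc.le (abs_nonneg _), mul_div_right_comm, ENNReal.ofReal_mul (by positivity),
    ← ENNReal.ofReal_rpow_of_nonneg (abs_nonneg _) hqp.le, ← Real.enorm_eq_ofReal_abs,
    mul_left_comm, ← ENNReal.rpow_add_of_nonneg _ _ hp.le hqp.le, add_sub_cancel]

lemma lintegral_rpow_mul_lintegral_below (hf : Measurable f) (hq : 0 < q) (hqp : q < p) :
    ∫⁻ t in Ioi (0 : ℝ), ENNReal.ofReal (t ^ (q - p - 1)) *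
        ∫⁻ x, ‖{x | |f x| ≤ t}.indicator f x‖ₑ ^ p =
      ENNReal.ofReal (1 / (p - q)) * ∫⁻ x, ‖f x‖ₑ ^ q := by
  have hp : 0 < p := hq.trans hqp
  refine (lintegral_mul_lintegral_indicator_rpow hf hp (by fun_prop)
    (s := {y : ℝ × α | |f y.2| ≤ y.1}) (measurableSet_le (by fun_prop) (by fun_prop))).trans ?_
  rw [← lintegral_const_mul' _ _ ENNReal.ofReal_ne_top]
  refine lintegral_congr fun x => ?_
  by_cases h0 : f x = 0
  · simp [h0, hp, hq]
  have hpos : 0 < |f x| := abs_pos.2 h0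
  have hlayer := setLIntegral_Ioi_rpow_indicator_Ici (sub_neg.2 hqp) hpos
  refine (congrArg (‖f x‖ₑ ^ p * ·) hlayer).trans ?_
  have hpq : 0 ≤ 1 / (p - q) := one_div_nonneg.2 (sub_pos.2 hqp).le
  rw [neg_sub, div_eq_mul_one_div, ENNReal.ofReal_mul' hpq,
    ← ENNReal.ofReal_rpow_of_pos hpos, ← Real.enorm_eq_ofReal_abs, ← mul_assoc,
    ← ENNReal.rpow_add _ _ (by simpa using h0) enorm_ne_top, add_sub_cancel, mul_comm]

namespace IsSubadditiveOp

variable {S : (α → ℝ) → α → ℝ} {N : ℝ≥0}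

theorem lintegral_rpow_le_of_Lp_Lp (hS : IsSubadditiveOp S)
    (h₀ : ∀ f, BddInt f → ∫⁻ x, ‖S f x‖ₑ ^ p₀ ≤ N * ∫⁻ x, ‖f x‖ₑ ^ p₀)
    (h₁ : ∀ f, BddInt f → ∫⁻ x, ‖S f x‖ₑ ^ p₁ ≤ N * ∫⁻ x, ‖f x‖ₑ ^ p₁)
    (hp₀ : 0 < p₀) (hp₀q : p₀ < q) (hqp₁ : q < p₁) (hf : BddInt f) :
    ∫⁻ x, ‖S f x‖ₑ ^ q ≤
      ENNReal.ofReal (q * (2 ^ p₀ / (q - p₀) + 2 ^ p₁ / (p₁ - q))) * N * ∫⁻ x, ‖f x‖ₑ ^ q := by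
  have hq : 0 < q := hp₀.trans hp₀q
  have : 0 < q - p₀ := sub_pos.2 hp₀q
  have : 0 < p₁ - q := sub_pos.2 hqp₁
  set above : ℝ → α → ℝ := fun t => {x | t < 1 * |f x|}.indicator f with habove
  set below : ℝ → α → ℝ := fun t => {x | |f x| ≤ t}.indicator f with hbelow
  set I₀ : ℝ → ℝ≥0∞ := fun t => ENNReal.ofReal (t ^ (q - p₀ - 1)) * ∫⁻ x, ‖above t x‖ₑ ^ p₀
  set I₁ : ℝ → ℝ≥0∞ := fun t => ENNReal.ofReal (t ^ (q - p₁ - 1)) * ∫⁻ x, ‖below t x‖ₑ ^ p₁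
  have hlevel : ∀ t ∈ Ioi (0 : ℝ), volume {x | t < S f x} * ENNReal.ofReal (t ^ (q - 1)) ≤
      ENNReal.ofReal (2 ^ p₀) * N * I₀ t + ENNReal.ofReal (2 ^ p₁) * N * I₁ t := by
    intro t (ht : 0 < t)
    have hsplit : above t + below t = f := by
      simpa only [habove, hbelow, inv_one, one_mul] using
        indicator_above_add_below (t := t) f one_pos
    refine (mul_le_mul_left ((measure_mono (hS.setOf_lt_subset hf.indicator_above
      hf.indicator_below hsplit)).trans (measure_union_le _ _)) _).trans ?_
    rw [add_mul]
    exact add_le_add (hS.meas_half_lt_mul_rpow_le h₀ hp₀ ht hf.indicator_above)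
      (hS.meas_half_lt_mul_rpow_le h₁ (hq.trans hqp₁) ht hf.indicator_below)
  have hI₀_meas : Measurable I₀ := by
    refine Measurable.mul (by fun_prop) (Antitone.measurable fun s t hst =>
      lintegral_mono fun x => ENNReal.rpow_le_rpow ?_ hp₀.le)
    simp only [habove, enorm_indicator_eq_indicator_enorm]
    exact indicator_le_indicator_of_subset (fun x (hx : t < _) => lt_of_le_of_lt hst hx)
      (fun _ => zero_le) x
  rw [lintegral_enorm_rpow_eq_meas_lt (hS.measurable f hf) (hS.nonneg f) hq]
  calc _ ≤ ENNReal.ofReal q * ∫⁻ t in Ioi (0 : ℝ),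
          (ENNReal.ofReal (2 ^ p₀) * N * I₀ t + ENNReal.ofReal (2 ^ p₁) * N * I₁ t) := by
        exact mul_le_mul_right (setLIntegral_mono' measurableSet_Ioi hlevel) _
    _ = ENNReal.ofReal q *
          (ENNReal.ofReal (2 ^ p₀) * N * (ENNReal.ofReal (1 / (q - p₀)) * ∫⁻ x, ‖f x‖ₑ ^ q) +
          ENNReal.ofReal (2 ^ p₁) * N * (ENNReal.ofReal (1 / (p₁ - q)) * ∫⁻ x, ‖f x‖ₑ ^ q)) := by
        rw [lintegral_add_left (by fun_prop), lintegral_const_mul' _ _ (by finiteness),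
          lintegral_const_mul' _ _ (by finiteness),
          lintegral_rpow_mul_lintegral_above hf.meas hp₀ hp₀q one_pos, Real.one_rpow,
          lintegral_rpow_mul_lintegral_below hf.meas hq hqp₁]
    _ = _ := by
        rw [ENNReal.ofReal_mul hq.le, ENNReal.ofReal_add (by positivity) (by positivity),
          div_eq_mul_one_div (2 ^ p₀), div_eq_mul_one_div (2 ^ p₁),
          ENNReal.ofReal_mul (by positivity), ENNReal.ofReal_mul (by positivity)]
        ring

theorem lintegral_rpow_le_of_Lp_bdd (hS : IsSubadditiveOp S)
    (hp : ∀ f, BddInt f → ∫⁻ x, ‖S f x‖ₑ ^ p ≤ N * ∫⁻ x, ‖f x‖ₑ ^ p)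
    (hbdd : ∀ f B, BddInt f → (∀ x, |f x| ≤ B) → ∀ x, S f x ≤ c * B)
    (hc : 0 < c) (hp0 : 0 < p) (hpq : p < q) (hf : BddInt f) :
    ∫⁻ x, ‖S f x‖ₑ ^ q ≤
      ENNReal.ofReal (q * 2 ^ p * ((2 * c) ^ (q - p) / (q - p))) * N * ∫⁻ x, ‖f x‖ₑ ^ q := by
  have hq : 0 < q := hp0.trans hpq
  have : 0 < q - p := sub_pos.2 hpq
  have hc2 : 0 < 2 * c := by positivity
  set above : ℝ → α → ℝ := fun t => {x | t < 2 * c * |f x|}.indicator f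
  set I : ℝ → ℝ≥0∞ := fun t => ENNReal.ofReal (t ^ (q - p - 1)) * ∫⁻ x, ‖above t x‖ₑ ^ p
  have hlevel : ∀ t ∈ Ioi (0 : ℝ), volume {x | t < S f x} * ENNReal.ofReal (t ^ (q - 1)) ≤
      ENNReal.ofReal (2 ^ p) * N * I t := by
    intro t (ht : 0 < t)
    set below : α → ℝ := {x | |f x| ≤ (2 * c)⁻¹ * t}.indicator f with hbelow
    have hbelow_le : ∀ x, S below x ≤ t / 2 := fun x => by
      refine (hbdd below ((2 * c)⁻¹ * t) hf.indicator_below (fun y => ?_) x).trans_eq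
        (by field_simp)
      by_cases hy : y ∈ {x | |f x| ≤ (2 * c)⁻¹ * t}
      · rwa [hbelow, indicator_of_mem hy]
      · rw [hbelow, indicator_of_notMem hy, abs_zero]
        positivity
    have hsub : {x | t < S f x} ⊆ {x | t / 2 < S (above t) x} := fun x hx =>
      (hS.setOf_lt_subset hf.indicator_above hf.indicator_below
        (indicator_above_add_below f hc2) hx).resolve_right (hbelow_le x).not_gt
    exact (mul_le_mul_left (measure_mono hsub) _).trans
      (hS.meas_half_lt_mul_rpow_le hp hp0 ht hf.indicator_above)
  rw [lintegral_enorm_rpow_eq_meas_lt (hS.measurable f hf) (hS.nonneg f) hq]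
  calc _ ≤ ENNReal.ofReal q * ∫⁻ t in Ioi (0 : ℝ), ENNReal.ofReal (2 ^ p) * N * I t := by
        exact mul_le_mul_right (setLIntegral_mono' measurableSet_Ioi hlevel) _
    _ = ENNReal.ofReal q * (ENNReal.ofReal (2 ^ p) * N *
          (ENNReal.ofReal ((2 * c) ^ (q - p) / (q - p)) * ∫⁻ x, ‖f x‖ₑ ^ q)) := by
        rw [lintegral_const_mul' _ _ (by finiteness),
          lintegral_rpow_mul_lintegral_above hf.meas hp0 hpq hc2]
    _ = _ := by
        rw [ENNReal.ofReal_mul (by positivity), ENNReal.ofReal_mul hq.le]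
        ring

end IsSubadditiveOp

end Interpolation

section DyadicSum

variable {E : Type*} [NormedAddCommGroup E] [NormedSpace ℝ E] [MeasureSpace E]
  {ψ f : E → ℝ} {N C₀ R s q δ : ℝ} {n : ℕ}

/-- The sum of `|avg ψ (δ 2⁻ᵏ) f|` over the `n` dyadic scales `k < n`. -/
noncomputable def dyadicSum (ψ : E → ℝ) (δ : ℝ) (n : ℕ) (f : E → ℝ) (x : E) : ℝ :=
  ∑ k ∈ Finset.range n, |avg ψ (δ * (1 / 2) ^ k) f x|

lemma dyadicSum_nonneg (x : E) : 0 ≤ dyadicSum ψ δ n f x :=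
  Finset.sum_nonneg fun _ _ => abs_nonneg _

lemma dyadicSum_le (hψ : IsOscKernel ψ N C₀ R s) {B : ℝ} (hB : ∀ x, |f x| ≤ B) (x : E) :
    dyadicSum ψ δ n f x ≤ n * N * B := by
  have hB0 : 0 ≤ B := (abs_nonneg _).trans (hB 0)
  calc dyadicSum ψ δ n f x ≤ ∑ _k ∈ Finset.range n, N * B := Finset.sum_le_sum fun k _ =>
        (abs_avg_le hψ.int hB x).trans (mul_le_mul_of_nonneg_right hψ.norm_le hB0)
    _ = n * N * B := by simp [mul_assoc]

variable [MeasurableAdd₂ E] [MeasurableConstSMul ℝ E] [SFinite (volume : Measure E)]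
  [(volume : Measure E).IsAddLeftInvariant]

lemma BddInt.dyadicSum (hf : BddInt f) (hψ : IsOscKernel ψ N C₀ R s) :
    BddInt (dyadicSum ψ δ n f) :=
  .finsetSum _ fun _ _ => (hf.avg hψ.int hψ.meas).abs

lemma isSubadditiveOp_dyadicSum (hψ : IsOscKernel ψ N C₀ R s) :
    IsSubadditiveOp (dyadicSum ψ δ n) where
  measurable _ hf := (hf.dyadicSum hψ).meas
  nonneg _ x := dyadicSum_nonneg x
  add_le f g hf hg x := by
    simp only [dyadicSum, ← Finset.sum_add_distrib, avg_add hψ.int hf hg]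
    exact Finset.sum_le_sum fun k _ => abs_add_le _ _

lemma lintegral_dyadicSum_le (hψ : IsOscKernel ψ N C₀ R s) (hf : Measurable f) :
    ∫⁻ x, ‖dyadicSum ψ δ n f x‖ₑ ≤ n * ENNReal.ofReal N * ∫⁻ x, ‖f x‖ₑ := by
  calc ∫⁻ x, ‖dyadicSum ψ δ n f x‖ₑ
      ≤ ∫⁻ x, ∑ k ∈ Finset.range n, ‖avg ψ (δ * (1 / 2) ^ k) f x‖ₑ :=
        lintegral_mono fun x => (enorm_sum_le _ _).trans_eq (by simp only [Real.enorm_abs])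
    _ = ∑ k ∈ Finset.range n, ∫⁻ x, ‖avg ψ (δ * (1 / 2) ^ k) f x‖ₑ :=
        lintegral_finsetSum _ fun k _ => (measurable_avg hψ.meas hf).enorm
    _ ≤ ∑ _k ∈ Finset.range n, ENNReal.ofReal N * ∫⁻ x, ‖f x‖ₑ := by
        refine Finset.sum_le_sum fun k _ => ?_
        have hL1 := lintegral_rpow_avg_le (δ := δ * (1 / 2) ^ k) le_rfl hψ.meas hf
        simp only [ENNReal.rpow_one] at hL1
        refine hL1.trans (mul_le_mul_left ?_ _)
        rw [← ofReal_integral_norm_eq_lintegral_enorm hψ.int]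
        exact ENNReal.ofReal_le_ofReal hψ.norm_le
    _ = n * ENNReal.ofReal N * ∫⁻ x, ‖f x‖ₑ := by
        rw [Finset.sum_const, Finset.card_range, nsmul_eq_mul, mul_assoc]

lemma lintegral_dyadicSum_sq_le (hψ : IsOscKernel ψ N C₀ R s) (hN : 0 < N) (hC : 0 < C₀)
    (hR : 0 < R) (hs : 0 < s) (hf : BddInt f) :
    ∫⁻ x, ‖dyadicSum ψ δ n f x‖ₑ ^ (2 : ℝ) ≤
      n * ENNReal.ofReal (N * C₀ * R ^ s * (2 / (1 - (1 / 2) ^ s))) *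
        ∫⁻ x, ‖f x‖ₑ ^ (2 : ℝ) := by
  have hk : ∀ k : ℕ, BddInt (avg ψ (δ * (1 / 2) ^ k) f) := fun k => hf.avg hψ.int hψ.meas
  have hf2 : 0 ≤ ∫ x, f x ^ 2 := integral_nonneg fun _ => sq_nonneg _
  rw [(hf.dyadicSum hψ).lintegral_enorm_rpow_two, hf.lintegral_enorm_rpow_two, mul_assoc,
    ← ENNReal.ofReal_mul' hf2, ← ENNReal.ofReal_natCast, ← ENNReal.ofReal_mul n.cast_nonneg]
  refine ENNReal.ofReal_le_ofReal ?_
  calc ∫ x, dyadicSum ψ δ n f x ^ 2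
      ≤ ∫ x, (n : ℝ) * ∑ k ∈ Finset.range n, avg ψ (δ * (1 / 2) ^ k) f x ^ 2 := by
        refine integral_mono (hf.dyadicSum hψ).integrable_sq
          ((integrable_finsetSum _ fun k _ => (hk k).integrable_sq).const_mul _) fun x => ?_
        simpa only [dyadicSum, Finset.card_range, sq_abs] using sq_sum_le_card_mul_sum_sq
          (s := Finset.range n) (f := fun k => |avg ψ (δ * (1 / 2) ^ k) f x|)
    _ = n * ∑ k ∈ Finset.range n, ∫ x, avg ψ (δ * (1 / 2) ^ k) f x ^ 2 := by
        rw [integral_const_mul, integral_finsetSum _ fun k _ => (hk k).integrable_sq]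
    _ ≤ n * (N * C₀ * R ^ s * (2 / (1 - (1 / 2) ^ s)) * ∫ x, f x ^ 2) :=
        mul_le_mul_of_nonneg_left (hψ.sum_integral_avg_sq_le hN hC hR hs hf n) n.cast_nonneg

theorem exists_lintegral_dyadicSum_rpow_le (E : Type*) [NormedAddCommGroup E] [NormedSpace ℝ E]
    [MeasureSpace E] [MeasurableAdd₂ E] [MeasurableConstSMul ℝ E] [SFinite (volume : Measure E)]
    [(volume : Measure E).IsAddLeftInvariant] (hN : 0 < N) (hC : 0 < C₀) (hR : 0 < R)
    (hs : 0 < s) (hq : 1 < q) :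
    ∃ C : ℝ≥0, ∀ (ψ f : E → ℝ) (δ : ℝ) (n : ℕ), IsOscKernel ψ N C₀ R s → BddInt f → 1 ≤ n →
      ∫⁻ x, ‖dyadicSum ψ δ n f x‖ₑ ^ q ≤
        C * (n : ℝ≥0∞) ^ max 1 (q - 1) * ∫⁻ x, ‖f x‖ₑ ^ q := by
  set M : ℝ≥0 := max N.toNNReal (N * C₀ * R ^ s * (2 / (1 - (1 / 2) ^ s))).toNNReal
  have h_one : ∀ ψ δ n, IsOscKernel ψ N C₀ R s → ∀ f : E → ℝ, BddInt f →
      ∫⁻ x, ‖dyadicSum ψ δ n f x‖ₑ ^ (1 : ℝ) ≤ (n * M : ℝ≥0) * ∫⁻ x, ‖f x‖ₑ ^ (1 : ℝ) := by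
    intro ψ δ n hψ f hf
    simp only [ENNReal.rpow_one, ENNReal.coe_mul, ENNReal.coe_natCast]
    refine (lintegral_dyadicSum_le hψ hf.meas).trans ?_
    gcongr
    exact ENNReal.coe_le_coe.2 (le_max_left _ _)
  have h_two : ∀ ψ δ n, IsOscKernel ψ N C₀ R s → ∀ f : E → ℝ, BddInt f →
      ∫⁻ x, ‖dyadicSum ψ δ n f x‖ₑ ^ (2 : ℝ) ≤ (n * M : ℝ≥0) * ∫⁻ x, ‖f x‖ₑ ^ (2 : ℝ) := by
    intro ψ δ n hψ f hf
    rw [ENNReal.coe_mul, ENNReal.coe_natCast]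
    refine (lintegral_dyadicSum_sq_le hψ hN hC hR hs hf).trans ?_
    gcongr
    exact ENNReal.coe_le_coe.2 (le_max_right _ _)
  rcases lt_trichotomy q 2 with hq2 | rfl | hq2
  · refine ⟨(q * (2 ^ (1 : ℝ) / (q - 1) + 2 ^ (2 : ℝ) / (2 - q))).toNNReal * M,
      fun ψ f δ n hψ hf _ => ?_⟩
    refine ((isSubadditiveOp_dyadicSum hψ).lintegral_rpow_le_of_Lp_Lp (h_one ψ δ n hψ)
      (h_two ψ δ n hψ) one_pos hq hq2 hf).trans_eq ?_
    rw [max_eq_left (by linarith), ENNReal.rpow_one, ENNReal.ofReal]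
    push_cast
    ring
  · refine ⟨M, fun ψ f δ n hψ hf _ => (h_two ψ δ n hψ f hf).trans_eq ?_⟩
    rw [max_eq_left (by norm_num), ENNReal.rpow_one]
    push_cast
    ring
  · refine ⟨(q * 2 ^ (2 : ℝ) * ((2 * N) ^ (q - 2) / (q - 2))).toNNReal * M,
      fun ψ f δ n hψ hf hn => ?_⟩
    have hn0 : (0 : ℝ) < n := by exact_mod_cast hn
    have hq2' : 0 < q - 2 := sub_pos.2 hq2
    refine ((isSubadditiveOp_dyadicSum hψ).lintegral_rpow_le_of_Lp_bdd (h_two ψ δ n hψ)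
      (fun _ _ _ hB => dyadicSum_le hψ hB) (mul_pos hn0 hN) two_pos hq2 hf).trans_eq ?_
    have hpow : (n : ℝ≥0∞) ^ max 1 (q - 1) = ENNReal.ofReal ((n : ℝ) ^ (q - 2)) * n := by
      rw [max_eq_right (by linarith), ← ENNReal.ofReal_rpow_of_pos hn0, ENNReal.ofReal_natCast,
        show q - 1 = q - 2 + 1 by ring, ENNReal.rpow_add_of_nonneg _ _ hq2'.le zero_le_one,
        ENNReal.rpow_one]
    rw [hpow, mul_left_comm 2, mul_comm (n : ℝ), Real.mul_rpow (by positivity) hn0.le,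
      mul_div_right_comm, ← mul_assoc, ENNReal.ofReal_mul (by positivity), ENNReal.ofReal]
    push_cast
    ring

end DyadicSum

/-! ### Kernels with a modulus of continuity in `L¹` -/

/-- Functions that are bounded and Lipschitz with the same constant `M`. -/
structure BddLip {X : Type*} [SeminormedAddCommGroup X] (f : X → ℝ) (M : ℝ) : Prop where
  bound : ∀ x, |f x| ≤ M
  lip : ∀ x y, |f x - f y| ≤ M * ‖x - y‖

namespace BddLip

variable {X : Type*} [SeminormedAddCommGroup X] {f g : X → ℝ} {u : ℝ → ℝ} {M M' ε : ℝ}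

lemma nonneg (hf : BddLip f M) : 0 ≤ M := (abs_nonneg _).trans (hf.bound 0)

lemma mono (hf : BddLip f M) (h : M ≤ M') : BddLip f M' :=
  ⟨fun x => (hf.bound x).trans h, fun x y => (hf.lip x y).trans (by gcongr)⟩

lemma const (c : ℝ) : BddLip (fun _ : X => c) |c| :=
  ⟨fun _ => le_rfl, fun x y => by simpa only [sub_self, abs_zero] using by positivity⟩

lemma sub (hf : BddLip f M) (hg : BddLip g M') : BddLip (fun x => f x - g x) (M + M') := by
  refine ⟨fun x => (abs_sub _ _).trans (add_le_add (hf.bound x) (hg.bound x)), fun x y => ?_⟩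
  calc |f x - g x - (f y - g y)| = |(f x - f y) - (g x - g y)| := by ring_nf
    _ ≤ |f x - f y| + |g x - g y| := abs_sub _ _
    _ ≤ (M + M') * ‖x - y‖ := by linarith [hf.lip x y, hg.lip x y]

lemma mul (hf : BddLip f M) (hg : BddLip g M') : BddLip (fun x => f x * g x) (2 * M * M') := by
  have hM := hf.nonneg
  have hM' := hg.nonneg
  constructor
  · intro x
    rw [abs_mul]
    calc |f x| * |g x| ≤ M * M' := mul_le_mul (hf.bound x) (hg.bound x) (abs_nonneg _) hM
      _ ≤ 2 * M * M' := by nlinarith [mul_nonneg hM hM']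
  · intro x y
    calc |f x * g x - f y * g y| = |f x * (g x - g y) + g y * (f x - f y)| := by ring_nf
      _ ≤ |f x| * |g x - g y| + |g y| * |f x - f y| := by
        rw [← abs_mul, ← abs_mul]
        exact abs_add_le _ _
      _ ≤ M * (M' * ‖x - y‖) + M' * (M * ‖x - y‖) :=
        add_le_add (mul_le_mul (hf.bound x) (hg.lip x y) (abs_nonneg _) hM)
          (mul_le_mul (hg.bound y) (hf.lip x y) (abs_nonneg _) hM')
      _ = 2 * M * M' * ‖x - y‖ := by ring

lemma pow (hf : BddLip f M) (n : ℕ) : BddLip (fun x => f x ^ n) ((2 * M) ^ n) := by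
  induction n with
  | zero => simpa only [pow_zero, abs_one] using const (X := X) 1
  | succ n ih => simpa only [pow_succ, mul_assoc, mul_left_comm] using ih.mul hf

lemma comp_norm (hu : BddLip u M) : BddLip (fun x : X => u ‖x‖) M :=
  ⟨fun _ => hu.bound _, fun x y => (hu.lip _ _).trans
    (mul_le_mul_of_nonneg_left (abs_norm_sub_norm_le x y) hu.nonneg)⟩

lemma comp_const_sub (hu : BddLip u M) (a : ℝ) : BddLip (fun r => u (a - r)) M :=
  ⟨fun _ => hu.bound _, fun r s => (hu.lip _ _).trans_eq (by
    rw [sub_sub_sub_cancel_left, norm_sub_rev])⟩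

lemma continuous (hf : BddLip f M) : Continuous f := by
  refine LipschitzWith.continuous (K := ⟨M, hf.nonneg⟩) (LipschitzWith.of_dist_le_mul fun x y => ?_)
  rw [Real.dist_eq, dist_eq_norm]
  exact hf.lip x y

lemma ramp (a : ℝ) (hε : 0 < ε) (hε1 : ε ≤ 1) :
    BddLip (fun r : ℝ => min 1 (max (r - a) 0 / ε)) ε⁻¹ := by
  constructor
  · intro r
    rw [abs_of_nonneg (by positivity)]
    exact (min_le_left _ _).trans ((one_le_inv₀ hε).2 hε1)
  · intro r s
    calc _ ≤ |max (r - a) 0 / ε - max (s - a) 0 / ε| := by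
          simpa using abs_min_sub_min_le_max 1 (max (r - a) 0 / ε) 1 (max (s - a) 0 / ε)
      _ = ε⁻¹ * |max (r - a) 0 - max (s - a) 0| := by
          rw [← sub_div, abs_div, abs_of_pos hε]
          ring
      _ ≤ ε⁻¹ * ‖r - s‖ := by
          gcongr
          simpa using abs_max_sub_max_le_max (r - a) 0 (s - a) 0

lemma inv_max (hε : 0 < ε) (hε1 : ε ≤ 1) : BddLip (fun r : ℝ => (max r ε)⁻¹) (ε⁻¹ ^ 2) := by
  have hpos : ∀ r, 0 < max r ε := fun r => lt_max_of_lt_right hε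
  have hinv : ∀ r, (max r ε)⁻¹ ≤ ε⁻¹ := fun r => inv_anti₀ hε (le_max_right _ _)
  constructor
  · intro r
    rw [abs_of_pos (inv_pos.2 (hpos r))]
    exact (hinv r).trans (le_self_pow₀ ((one_le_inv₀ hε).2 hε1) two_ne_zero)
  · intro r s
    have hsub : (max r ε)⁻¹ - (max s ε)⁻¹ = (max r ε)⁻¹ * (max s ε)⁻¹ * (max s ε - max r ε) := by
      rw [inv_sub_inv (hpos r).ne' (hpos s).ne', div_eq_mul_inv, mul_inv]
      ring
    rw [hsub, abs_mul, abs_of_pos (mul_pos (inv_pos.2 (hpos r)) (inv_pos.2 (hpos s))), pow_two]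
    refine mul_le_mul (mul_le_mul (hinv r) (hinv s) (inv_pos.2 (hpos s)).le (inv_pos.2 hε).le) ?_
      (abs_nonneg _) (by positivity)
    rw [abs_sub_comm]
    simpa using abs_max_sub_max_le_max r ε s ε

lemma integrable {E : Type*} [NormedAddCommGroup E] [ProperSpace E] [MeasureSpace E]
    [OpensMeasurableSpace E] [IsFiniteMeasureOnCompacts (volume : Measure E)] {f : E → ℝ} {R : ℝ}
    (hf : BddLip f M) (hR : ∀ z, R < ‖z‖ → f z = 0) : Integrable f :=
  hf.continuous.integrable_of_hasCompactSupport
    (HasCompactSupport.intro (isCompact_closedBall 0 R) fun z hz => hR z (by simpa using hz))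

end BddLip

section TranslationModulus

variable {E : Type*} [NormedAddCommGroup E] [MeasureSpace E] [BorelSpace E]
  [(volume : Measure E).IsAddLeftInvariant] {ψ φ χ : E → ℝ} {N N' C₀ C₀' C M Λ R s a b : ℝ} {τ : E}

lemma integrable_translate_sub (hψ : Integrable ψ) (τ : E) :
    Integrable fun z => ψ (z + τ) - ψ z :=
  (hψ.comp_add_right τ).sub hψ

lemma integral_abs_translate_sub_le_two_mul (hψ : Integrable ψ) (τ : E) :
    ∫ z, |ψ (z + τ) - ψ z| ≤ 2 * ∫ z, |ψ z| := by
  have hψτ : Integrable fun z => |ψ (z + τ)| := (hψ.comp_add_right τ).abs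
  calc ∫ z, |ψ (z + τ) - ψ z| ≤ ∫ z, (|ψ (z + τ)| + |ψ z|) :=
        integral_mono (integrable_translate_sub hψ τ).abs (hψτ.add hψ.abs) fun z => abs_sub _ _
    _ = 2 * ∫ z, |ψ z| := by
        rw [integral_add hψτ hψ.abs, integral_add_right_eq_self (fun z => |ψ z|) τ, two_mul]

lemma IsModKernel.sub_const_mul {m m₀ : ℝ} (h : IsModKernel ψ N C₀ R s)
    (h' : IsModKernel φ N' C₀' R s) (hm : |m| ≤ m₀) :
    IsModKernel (fun z => ψ z - m * φ z) (N + m₀ * N') (C₀ + m₀ * C₀') R s := by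
  have hm0 := (abs_nonneg m).trans hm
  have habs : ∀ {u v : E → ℝ}, Integrable u → Integrable v →
      ∫ z, |u z - m * v z| ≤ (∫ z, |u z|) + m₀ * ∫ z, |v z| := fun {u v} hu hv => by
    rw [← integral_const_mul, ← integral_add hu.abs (hv.abs.const_mul _)]
    refine integral_mono (hu.sub (hv.const_mul m)).abs (hu.abs.add (hv.abs.const_mul _))
      fun z => (abs_sub _ _).trans ?_
    rw [abs_mul]
    gcongr
  refine ⟨h.meas.sub (h'.meas.const_mul m), h.int.sub (h'.int.const_mul m), fun z hz => ?_, ?_,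
    fun τ => ?_⟩
  · rw [h.supp z hz, h'.supp z hz, mul_zero, sub_zero]
  · exact (habs h.int h'.int).trans
      (add_le_add h.norm_le (mul_le_mul_of_nonneg_left h'.norm_le hm0))
  · calc ∫ z, |ψ (z + τ) - m * φ (z + τ) - (ψ z - m * φ z)|
        = ∫ z, |ψ (z + τ) - ψ z - m * (φ (z + τ) - φ z)| := by
          congr! 3
          ring
      _ ≤ (∫ z, |ψ (z + τ) - ψ z|) + m₀ * ∫ z, |φ (z + τ) - φ z| :=
          habs (integrable_translate_sub h.int τ) (integrable_translate_sub h'.int τ)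
      _ ≤ C₀ * ‖τ‖ ^ s + m₀ * (C₀' * ‖τ‖ ^ s) :=
          add_le_add (h.modulus τ) (mul_le_mul_of_nonneg_left (h'.modulus τ) hm0)
      _ = (C₀ + m₀ * C₀') * ‖τ‖ ^ s := by ring

variable [ProperSpace E] [IsFiniteMeasureOnCompacts (volume : Measure E)]

lemma BddLip.integral_abs_translate_sub_le (hχ : BddLip χ M) (hR : ∀ z, R < ‖z‖ → χ z = 0)
    (hτ : ‖τ‖ ≤ 1) :
    ∫ z, |χ (z + τ) - χ z| ≤ M * ‖τ‖ * volume.real (closedBall (0 : E) (R + 1)) := by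
  have hball : MeasurableSet (closedBall (0 : E) (R + 1)) := isClosed_closedBall.measurableSet
  calc ∫ z, |χ (z + τ) - χ z|
      ≤ ∫ z, (closedBall (0 : E) (R + 1)).indicator (fun _ => M * ‖τ‖) z := by
        refine integral_mono (integrable_translate_sub (hχ.integrable hR) τ).abs
          ((integrable_indicator_iff hball).2
            (integrableOn_const (isCompact_closedBall _ _).measure_lt_top.ne)) fun z => ?_
        by_cases hz : z ∈ closedBall (0 : E) (R + 1)
        · rw [indicator_of_mem hz]
          exact (hχ.lip _ _).trans_eq (by rw [add_sub_cancel_left])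
        · rw [mem_closedBall_zero_iff, not_le] at hz
          have hzτ : R < ‖z + τ‖ := by linarith [norm_sub_le_norm_add z τ]
          rw [indicator_of_notMem (by simpa using hz), hR _ hzτ, hR z (by linarith), sub_zero,
            abs_zero]
    _ = M * ‖τ‖ * volume.real (closedBall (0 : E) (R + 1)) := by
        rw [integral_indicator hball, setIntegral_const, smul_eq_mul, mul_comm]

lemma rpow_one_div_succ_inv_pow_mul {a : ℝ} (ha : 0 < a) (m : ℕ) :
    (a ^ (1 / (m + 1) : ℝ))⁻¹ ^ m * a = a ^ (1 / (m + 1) : ℝ) := by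
  have hpow : (a ^ (1 / (m + 1) : ℝ)) ^ (m + 1) = a := by
    rw [← Real.rpow_natCast, ← Real.rpow_mul ha.le, Nat.cast_succ,
      one_div_mul_cancel (by positivity), Real.rpow_one]
  nth_rw 2 [← hpow]
  rw [pow_succ, inv_pow, inv_mul_cancel_left₀ (by positivity)]

-- Approximating at scale `ε = ‖τ‖ ^ (1 / (m + 1))` balances the error `ε` against the modulus
-- `ε⁻ᵐ ‖τ‖` of the approximant.
lemma isModKernel_of_approx (m : ℕ) (hψm : Measurable ψ) (hψ : Integrable ψ)
    (hR : ∀ z, R < ‖z‖ → ψ z = 0) (hN : ∫ z, |ψ z| ≤ N) (hΛ : 0 ≤ Λ) (hC : 0 ≤ C)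
    (happ : ∀ ε ∈ Ioc (0 : ℝ) 1, ∃ χ : E → ℝ, BddLip χ (Λ * ε⁻¹ ^ m) ∧
      (∀ z, R < ‖z‖ → χ z = 0) ∧ ∫ z, |ψ z - χ z| ≤ C * ε) :
    IsModKernel ψ N (2 * C + Λ * volume.real (closedBall (0 : E) (R + 1)) + 2 * N) R
      (1 / (m + 1)) := by
  refine ⟨hψm, hψ, hR, hN, fun τ => ?_⟩
  have hN0 : 0 ≤ N := le_trans (integral_nonneg fun _ => abs_nonneg _) hN
  set ε : ℝ := ‖τ‖ ^ (1 / (m + 1) : ℝ)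
  set V : ℝ := volume.real (closedBall (0 : E) (R + 1))
  have hV : 0 ≤ Λ * V := mul_nonneg hΛ measureReal_nonneg
  rcases eq_or_ne τ 0 with rfl | hτ
  · simp only [add_zero, sub_self, abs_zero, integral_zero]
    positivity
  have hτ0 : 0 < ‖τ‖ := norm_pos_iff.2 hτ
  have hε0 : 0 < ε := Real.rpow_pos_of_pos hτ0 _
  rcases le_or_gt 1 ‖τ‖ with hτ1 | hτ1
  · calc ∫ z, |ψ (z + τ) - ψ z| ≤ 2 * N * 1 := by
          linarith [integral_abs_translate_sub_le_two_mul hψ τ]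
      _ ≤ (2 * C + Λ * V + 2 * N) * ε :=
          mul_le_mul (by linarith) (Real.one_le_rpow hτ1 (by positivity)) zero_le_one
            (by positivity)
  have hετ : ε⁻¹ ^ m * ‖τ‖ = ε := rpow_one_div_succ_inv_pow_mul hτ0 m
  obtain ⟨χ, hχ, hχR, hχψ⟩ := happ ε ⟨hε0, Real.rpow_le_one hτ0.le hτ1.le (by positivity)⟩
  have hχi : Integrable χ := hχ.integrable hχR
  have hχ_int := (integrable_translate_sub hχi τ).abs
  have herr_int := (integrable_translate_sub (hψ.sub hχi) τ).abs
  calc ∫ z, |ψ (z + τ) - ψ z|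
      ≤ ∫ z, (|χ (z + τ) - χ z| + |(ψ - χ) (z + τ) - (ψ - χ) z|) := by
        refine integral_mono (integrable_translate_sub hψ τ).abs (hχ_int.add herr_int) fun z => ?_
        refine le_trans (le_of_eq ?_) (abs_add_le _ _)
        simp only [Pi.sub_apply]
        ring_nf
    _ = (∫ z, |χ (z + τ) - χ z|) + ∫ z, |(ψ - χ) (z + τ) - (ψ - χ) z| :=
        integral_add hχ_int herr_int
    _ ≤ Λ * ε⁻¹ ^ m * ‖τ‖ * V + 2 * (C * ε) :=
        add_le_add (hχ.integral_abs_translate_sub_le hχR hτ1.le)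
          ((integral_abs_translate_sub_le_two_mul (hψ.sub hχi) τ).trans
            (mul_le_mul_of_nonneg_left hχψ zero_le_two))
    _ = (2 * C + Λ * V) * ε := by
        rw [mul_assoc Λ, hετ]
        ring
    _ ≤ (2 * C + Λ * V + 2 * N) * ε := mul_le_mul_of_nonneg_right (by linarith) hε0.le

end TranslationModulus

section Annulus

variable {d : ℕ} {J J' : Set ℝ} {ℓ : Eu d → ℝ} {K r₀ ε r : ℝ} {z : Eu d}

/-- The surface area of the unit sphere of `ℝᵈ`. -/
noncomputable def area (d : ℕ) : ℝ := d * volume.real (ball (0 : Eu d) 1)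

lemma area_pos (d : ℕ) [NeZero d] : 0 < area d :=
  mul_pos (Nat.cast_pos.2 (NeZero.pos d))
    (ENNReal.toReal_pos (measure_ball_pos _ _ one_pos).ne' measure_ball_lt_top.ne)

lemma pow_mul_indicator_inv_pow (n : ℕ) (J : Set ℝ) (hr : 0 < r) :
    r ^ n * J.indicator (fun r => (r ^ n)⁻¹) r = J.indicator 1 r := by
  by_cases h : r ∈ J
  · rw [indicator_of_mem h, indicator_of_mem h, Pi.one_apply, mul_inv_cancel₀ (pow_pos hr _).ne']
  · rw [indicator_of_notMem h, indicator_of_notMem h, mul_zero]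

lemma integrable_radial [NeZero d] (hJ : MeasurableSet J) (hJ1 : J ⊆ Ioc 0 1) :
    Integrable fun z : Eu d => J.indicator (fun r => (r ^ (d - 1))⁻¹) ‖z‖ := by
  rw [integrable_fun_norm_addHaar (μ := (volume : Measure (Eu d)))]
  have hone : IntegrableOn (J.indicator (1 : ℝ → ℝ)) (Ioi 0) :=
    ((integrableOn_const ((measure_mono hJ1).trans_lt measure_Ioc_lt_top).ne).integrable_indicator
      hJ).integrableOn
  refine hone.congr_fun (fun y hy => ?_) measurableSet_Ioi
  simp only [finrank_euclideanSpace, Fintype.card_fin, smul_eq_mul]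
  exact (pow_mul_indicator_inv_pow _ J hy).symm

lemma integral_radial [NeZero d] (hJ : MeasurableSet J) (hJ1 : J ⊆ Ioc 0 1) :
    ∫ z : Eu d, J.indicator (fun r => (r ^ (d - 1))⁻¹) ‖z‖ = area d * volume.real J := by
  rw [integral_fun_norm_addHaar (volume : Measure (Eu d)), area]
  simp only [finrank_euclideanSpace, Fintype.card_fin, smul_eq_mul, nsmul_eq_mul]
  rw [setIntegral_congr_fun measurableSet_Ioi fun y hy => pow_mul_indicator_inv_pow _ J hy,
    setIntegral_indicator hJ, inter_eq_self_of_subset_right (hJ1.trans Ioc_subset_Ioi_self)]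
  simp only [Pi.one_apply, integral_const, smul_eq_mul, mul_one, mul_assoc,
    measureReal_restrict_apply_univ]

/-- The homogeneous kernel `ℓ(z) |z|⁻ᵈ` restricted to the annulus `|z| ∈ J`. -/
noncomputable def annKernel (J : Set ℝ) (ℓ : Eu d → ℝ) (z : Eu d) : ℝ :=
  J.indicator (fun r => (r ^ d)⁻¹) ‖z‖ * ℓ z

lemma measurable_annKernel (hJ : MeasurableSet J) (hℓ : Measurable ℓ) :
    Measurable (annKernel J ℓ) :=
  ((((measurable_id.pow_const d).inv).indicator hJ).comp measurable_norm).mul hℓ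

lemma annKernel_eq_zero (hz : ‖z‖ ∉ J) : annKernel J ℓ z = 0 := by
  rw [annKernel, indicator_of_notMem hz, zero_mul]

lemma abs_annKernel_le [NeZero d] (hJ : J ⊆ Ioc 0 1) (hℓ : ‖z‖ ∈ J → |ℓ z| ≤ K * ‖z‖) :
    |annKernel J ℓ z| ≤ K * J.indicator (fun r => (r ^ (d - 1))⁻¹) ‖z‖ := by
  by_cases h : ‖z‖ ∈ J
  · have : 0 < ‖z‖ := (hJ h).1
    rw [annKernel, indicator_of_mem h, indicator_of_mem h, abs_mul, abs_of_pos (by positivity)]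
    calc (‖z‖ ^ d)⁻¹ * |ℓ z| ≤ (‖z‖ ^ d)⁻¹ * (K * ‖z‖) := by
          gcongr
          exact hℓ h
      _ = K * (‖z‖ ^ (d - 1))⁻¹ := by
          rw [← mul_pow_sub_one (NeZero.ne d)]
          field_simp
  · rw [annKernel_eq_zero h, indicator_of_notMem h, mul_zero, abs_zero]

lemma integrable_annKernel [NeZero d] (hJ : MeasurableSet J) (hJ1 : J ⊆ Ioc 0 1)
    (hℓm : Measurable ℓ) (hℓ : ∀ z, ‖z‖ ∈ J → |ℓ z| ≤ K * ‖z‖) : Integrable (annKernel J ℓ) :=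
  ((integrable_radial hJ hJ1).const_mul K).mono' (measurable_annKernel hJ hℓm).aestronglyMeasurable
    (Eventually.of_forall fun z => abs_annKernel_le hJ1 (hℓ z))

lemma integral_abs_annKernel_le [NeZero d] (hJ : MeasurableSet J) (hJ1 : J ⊆ Ioc 0 1)
    (hℓm : Measurable ℓ) (hℓ : ∀ z, ‖z‖ ∈ J → |ℓ z| ≤ K * ‖z‖) :
    ∫ z, |annKernel J ℓ z| ≤ K * (area d * volume.real J) := by
  rw [← integral_radial hJ hJ1, ← integral_const_mul]
  exact integral_mono (integrable_annKernel hJ hJ1 hℓm hℓ).abs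
    ((integrable_radial hJ hJ1).const_mul K) fun z => abs_annKernel_le hJ1 (hℓ z)

lemma integral_annKernel_comp (J : Set ℝ) (ℓ : Eu d → ℝ) (e : Eu d ≃ₗᵢ[ℝ] Eu d) :
    ∫ y, annKernel J (fun y => ℓ (e y)) y = ∫ y, annKernel J ℓ y := by
  rw [← e.measurePreserving.integral_comp e.toHomeomorph.measurableEmbedding (annKernel J ℓ)]
  simp only [annKernel, LinearIsometryEquiv.norm_map]

lemma integral_annKernel_const_mul (J : Set ℝ) (c : ℝ) (ℓ : Eu d → ℝ) :
    ∫ y, annKernel J (fun y => c * ℓ y) y = c * ∫ y, annKernel J ℓ y := by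
  rw [← integral_const_mul]
  simp only [annKernel, mul_left_comm]

/-- A Lipschitz approximation at scale `ε` of `r⁻ᵈ` restricted to `r₀ < r < 1`. -/
noncomputable def annProfile (d : ℕ) (r₀ ε r : ℝ) : ℝ :=
  min 1 (max (r - r₀) 0 / ε) * min 1 (max (1 - r - 0) 0 / ε) * (max r ε)⁻¹ ^ d

lemma bddLip_annProfile (d : ℕ) (r₀ : ℝ) (hε : ε ∈ Ioc (0 : ℝ) 1) :
    BddLip (annProfile d r₀ ε) (4 * 2 ^ d * ε⁻¹ ^ (2 * d + 2)) :=
  (((BddLip.ramp r₀ hε.1 hε.2).mul ((BddLip.ramp 0 hε.1 hε.2).comp_const_sub 1)).mul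
    ((BddLip.inv_max hε.1 hε.2).pow d)).mono (le_of_eq (by
      rw [mul_pow, ← pow_mul, pow_add]
      ring))

lemma annProfile_eq_zero (hr : r ∉ Ioo r₀ 1) : annProfile d r₀ ε r = 0 := by
  rw [annProfile]
  rcases le_or_gt r r₀ with h | h
  · simp [max_eq_right (sub_nonpos.2 h)]
  · simp [max_eq_right (sub_nonpos.2 (not_lt.1 fun h' => hr ⟨h, h'⟩))]

lemma annProfile_eq_inv_pow (hr₀ : 0 ≤ r₀) (hε : 0 < ε) (hr : r ∈ Icc (r₀ + ε) (1 - ε)) :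
    annProfile d r₀ ε r = (r ^ d)⁻¹ := by
  obtain ⟨h₁, h₂⟩ := hr
  rw [annProfile, max_eq_left (by linarith : (0 : ℝ) ≤ r - r₀),
    max_eq_left (by linarith : (0 : ℝ) ≤ 1 - r - 0), max_eq_left (by linarith : ε ≤ r),
    min_eq_left ((one_le_div hε).2 (by linarith)), min_eq_left ((one_le_div hε).2 (by linarith)),
    one_mul, one_mul, inv_pow]

lemma annProfile_mem_Icc (d : ℕ) (r₀ : ℝ) (hε : 0 < ε) (hr : 0 < r) :
    annProfile d r₀ ε r ∈ Icc 0 (r ^ d)⁻¹ := by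
  have hmax : (max r ε)⁻¹ ^ d ≤ (r ^ d)⁻¹ := by
    rw [inv_pow]
    exact inv_anti₀ (pow_pos hr d) (pow_le_pow_left₀ hr.le (le_max_left r ε) d)
  refine ⟨by unfold annProfile; positivity, ?_⟩
  rw [annProfile, ← one_mul (r ^ d)⁻¹]
  gcongr
  exact mul_le_one₀ (min_le_left _ _) (by positivity) (min_le_left _ _)

/-- The part of `J` within `ε` of the endpoints of `[r₀, 1]`. -/
def boundaryLayer (r₀ ε : ℝ) (J : Set ℝ) : Set ℝ := J \ Icc (r₀ + ε) (1 - ε)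

lemma volume_real_boundaryLayer_le (hJ : J ⊆ Ioc r₀ 1) (hε : 0 ≤ ε) :
    volume.real (boundaryLayer r₀ ε J) ≤ 2 * ε := by
  have hsub : boundaryLayer r₀ ε J ⊆ Ioo r₀ (r₀ + ε) ∪ Ioc (1 - ε) 1 := by
    rintro r ⟨hr, hr'⟩
    rcases lt_or_ge r (r₀ + ε) with h | h
    · exact Or.inl ⟨(hJ hr).1, h⟩
    · exact Or.inr ⟨not_le.1 fun h' => hr' ⟨h, h'⟩, (hJ hr).2⟩
  calc volume.real (boundaryLayer r₀ ε J)
      ≤ volume.real (Ioo r₀ (r₀ + ε) ∪ Ioc (1 - ε) 1) :=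
        measureReal_mono hsub (measure_union_lt_top measure_Ioo_lt_top measure_Ioc_lt_top).ne
    _ ≤ volume.real (Ioo r₀ (r₀ + ε)) + volume.real (Ioc (1 - ε) 1) := measureReal_union_le _ _
    _ = 2 * ε := by
        rw [Real.volume_real_Ioo_of_le (by linarith), Real.volume_real_Ioc_of_le (by linarith)]
        ring

lemma abs_annKernel_sub_annProfile_le (hr₀ : 0 ≤ r₀) (hJ1 : Ioo r₀ 1 ⊆ J) (hJ2 : J ⊆ Ioc r₀ 1)
    (hε : 0 < ε) (ℓ : Eu d → ℝ) (z : Eu d) :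
    |annKernel J ℓ z - annProfile d r₀ ε ‖z‖ * ℓ z| ≤
      |annKernel (boundaryLayer r₀ ε J) ℓ z| := by
  by_cases hz : ‖z‖ ∈ J
  · rw [annKernel, indicator_of_mem hz, ← sub_mul]
    by_cases hz' : ‖z‖ ∈ Icc (r₀ + ε) (1 - ε)
    · rw [annProfile_eq_inv_pow hr₀ hε hz', sub_self, zero_mul, abs_zero]
      exact abs_nonneg _
    · obtain ⟨h₀, h₁⟩ := annProfile_mem_Icc d r₀ hε (hr₀.trans_lt (hJ2 hz).1)
      rw [annKernel, indicator_of_mem (show ‖z‖ ∈ boundaryLayer r₀ ε J from ⟨hz, hz'⟩), abs_mul,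
        abs_mul, abs_of_nonneg (sub_nonneg.2 h₁), abs_of_nonneg (h₀.trans h₁)]
      gcongr
      linarith
  · rw [annKernel_eq_zero hz, annProfile_eq_zero fun h => hz (hJ1 h), zero_mul, sub_zero, abs_zero]
    exact abs_nonneg _

/-- The constant in the modulus of continuity of the annular kernels `annKernel J ℓ` with
`|ℓ(z)| ≤ K|z|`. -/
noncomputable def annConst (d : ℕ) (K : ℝ) : ℝ :=
  2 * (2 * K * area d) + 8 * K * 2 ^ d * volume.real (closedBall (0 : Eu d) (2 + 1)) +
    2 * (K * area d)

lemma annConst_pos (d : ℕ) [NeZero d] (hK : 0 < K) : 0 < annConst d K := by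
  have := area_pos d
  unfold annConst
  positivity

lemma isModKernel_annKernel [NeZero d] (hr₀ : 0 ≤ r₀) (hJ : MeasurableSet J)
    (hJ1 : Ioo r₀ 1 ⊆ J) (hJ2 : J ⊆ Ioc r₀ 1) (hℓ : BddLip ℓ K)
    (hℓz : ∀ z, ‖z‖ ∈ J → |ℓ z| ≤ K * ‖z‖) :
    IsModKernel (annKernel J ℓ) (K * area d) (annConst d K) 2 (1 / ((2 * d + 2 : ℕ) + 1)) := by
  have hK := hℓ.nonneg
  have hA := (area_pos d).le
  have hℓm : Measurable ℓ := hℓ.continuous.measurable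
  have hJ01 : J ⊆ Ioc 0 1 := hJ2.trans (Ioc_subset_Ioc_left hr₀)
  have hint : Integrable (annKernel J ℓ) := integrable_annKernel hJ hJ01 hℓm hℓz
  refine isModKernel_of_approx (C := 2 * K * area d) (Λ := 8 * K * 2 ^ d) (2 * d + 2)
    (measurable_annKernel hJ hℓm) hint
    (fun z hz => annKernel_eq_zero fun h => by linarith [(hJ01 h).2]) ?_ (by positivity)
    (by positivity) fun ε hε => ?_
  · refine (integral_abs_annKernel_le hJ hJ01 hℓm hℓz).trans ?_
    gcongr
    refine mul_le_of_le_one_right hA ((measureReal_mono hJ01 measure_Ioc_lt_top.ne).trans ?_)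
    rw [Real.volume_real_Ioc_of_le zero_le_one, sub_zero]
  · have hχ := (bddLip_annProfile d r₀ hε).comp_norm.mul hℓ
    have hχR : ∀ z : Eu d, 2 < ‖z‖ → annProfile d r₀ ε ‖z‖ * ℓ z = 0 := fun z hz => by
      rw [annProfile_eq_zero fun h => by linarith [h.2], zero_mul]
    refine ⟨_, hχ.mono (le_of_eq (by ring)), hχR, ?_⟩
    have hlayer : MeasurableSet (boundaryLayer r₀ ε J) := hJ.diff measurableSet_Icc
    have hlayer1 : boundaryLayer r₀ ε J ⊆ Ioc 0 1 := sdiff_subset.trans hJ01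
    have hℓz' : ∀ z, ‖z‖ ∈ boundaryLayer r₀ ε J → |ℓ z| ≤ K * ‖z‖ := fun z hz => hℓz z hz.1
    calc ∫ z, |annKernel J ℓ z - annProfile d r₀ ε ‖z‖ * ℓ z|
        ≤ ∫ z, |annKernel (boundaryLayer r₀ ε J) ℓ z| :=
          integral_mono (hint.sub (hχ.integrable hχR)).abs
            (integrable_annKernel hlayer hlayer1 hℓm hℓz').abs
            (abs_annKernel_sub_annProfile_le hr₀ hJ1 hJ2 hε.1 ℓ)
      _ ≤ K * (area d * volume.real (boundaryLayer r₀ ε J)) :=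
          integral_abs_annKernel_le hlayer hlayer1 hℓm hℓz'
      _ ≤ K * (area d * (2 * ε)) := by
          gcongr
          exact volume_real_boundaryLayer_le hJ2 hε.1.le
      _ = 2 * K * area d * ε := by ring

end Annulus

section Bump

variable {E : Type*} [NormedAddCommGroup E]

/-- The tent function `(1 - |z|)₊`. -/
noncomputable def tent (z : E) : ℝ := max (1 - ‖z‖) 0

lemma bddLip_tent : BddLip (tent : E → ℝ) 1 := by
  have hramp := ((BddLip.ramp 0 one_pos le_rfl).comp_const_sub 1).comp_norm (X := E)
  simp only [sub_zero, div_one, inv_one] at hramp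
  have heq : ∀ z : E, min 1 (max (1 - ‖z‖) 0) = tent z := fun z =>
    min_eq_right (max_le (by linarith [norm_nonneg z]) zero_le_one)
  simpa only [heq] using hramp

lemma tent_eq_zero {z : E} (hz : 1 ≤ ‖z‖) : tent z = 0 := max_eq_right (by linarith)

lemma integral_tent_pos [ProperSpace E] [MeasureSpace E] [OpensMeasurableSpace E]
    [(volume : Measure E).IsOpenPosMeasure] [IsFiniteMeasureOnCompacts (volume : Measure E)] :
    0 < ∫ z : E, tent z :=
  bddLip_tent.continuous.integral_pos_of_hasCompactSupport_nonneg_nonzero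
    (HasCompactSupport.intro (isCompact_closedBall 0 1) fun z hz =>
      tent_eq_zero (by simpa using (not_le.1 fun h => hz (by simpa using h)).le))
    (fun _ => le_max_right _ _) (x := 0) (by simp [tent])

variable {d : ℕ} {ρ : ℝ}

/-- The tent function on `ℝᵈ`, normalised to have integral one and dilated by `ρ⁻¹`. -/
noncomputable def bump (d : ℕ) (ρ : ℝ) (z : Eu d) : ℝ :=
  ρ ^ d * ((∫ w : Eu d, tent w)⁻¹ * tent (ρ • z))

lemma bddLip_bump (d : ℕ) (hρ : ρ ∈ Icc (0 : ℝ) 1) :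
    BddLip (bump d ρ) (∫ w : Eu d, tent w)⁻¹ := by
  have hI := inv_pos.2 (integral_tent_pos (E := Eu d))
  have hρd : ρ ^ d ≤ 1 := pow_le_one₀ hρ.1 hρ.2
  refine ⟨fun z => ?_, fun z w => ?_⟩
  · rw [bump, abs_mul, abs_mul, abs_of_nonneg (pow_nonneg hρ.1 d), abs_of_pos hI]
    calc ρ ^ d * ((∫ w : Eu d, tent w)⁻¹ * |tent (ρ • z)|)
        ≤ 1 * ((∫ w : Eu d, tent w)⁻¹ * 1) := by
          gcongr
          exact bddLip_tent.bound _
      _ = (∫ w : Eu d, tent w)⁻¹ := by ring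
  · rw [bump, bump, ← mul_sub, ← mul_sub, abs_mul, abs_mul, abs_of_nonneg (pow_nonneg hρ.1 d),
      abs_of_pos hI]
    calc ρ ^ d * ((∫ w : Eu d, tent w)⁻¹ * |tent (ρ • z) - tent (ρ • w)|)
        ≤ 1 * ((∫ w : Eu d, tent w)⁻¹ * (1 * ‖ρ • z - ρ • w‖)) := by
          gcongr
          exact bddLip_tent.lip _ _
      _ = (∫ w : Eu d, tent w)⁻¹ * (ρ * ‖z - w‖) := by
          rw [← smul_sub, norm_smul, Real.norm_of_nonneg hρ.1, one_mul, one_mul]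
      _ ≤ (∫ w : Eu d, tent w)⁻¹ * ‖z - w‖ := by
          gcongr
          exact mul_le_of_le_one_left (norm_nonneg _) hρ.2

lemma bump_nonneg (d : ℕ) (hρ : 0 ≤ ρ) (z : Eu d) : 0 ≤ bump d ρ z :=
  mul_nonneg (pow_nonneg hρ d)
    (mul_nonneg (inv_nonneg.2 integral_tent_pos.le) (le_max_right _ _))

lemma bump_eq_zero (hρ : 1 / 2 ≤ ρ) {z : Eu d} (hz : 2 < ‖z‖) : bump d ρ z = 0 := by
  have : 1 ≤ ‖ρ • z‖ := by
    rw [norm_smul, Real.norm_of_nonneg (by linarith)]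
    nlinarith
  rw [bump, tent_eq_zero this, mul_zero, mul_zero]

lemma integral_pow_mul_comp_smul (hρ : 0 < ρ) (F : Eu d → ℝ) :
    ∫ z, ρ ^ d * F (ρ • z) = ∫ z, F z := by
  rw [integral_const_mul, Measure.integral_comp_smul, finrank_euclideanSpace, Fintype.card_fin,
    smul_eq_mul, abs_of_pos (by positivity), mul_inv_cancel_left₀ (by positivity)]

lemma integral_bump (d : ℕ) (hρ : 0 < ρ) : ∫ z, bump d ρ z = 1 := by
  simp only [bump]
  rw [integral_pow_mul_comp_smul hρ fun z => (∫ w : Eu d, tent w)⁻¹ * tent z, integral_const_mul,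
    inv_mul_cancel₀ integral_tent_pos.ne']

lemma avg_bump (hρ : 0 < ρ) (δ : ℝ) (f : Eu d → ℝ) (x : Eu d) :
    avg (bump d ρ) (δ * ρ) f x = avg (bump d 1) δ f x := by
  simp only [avg]
  rw [← integral_pow_mul_comp_smul hρ fun z => bump d 1 z * f (x + δ • z)]
  refine integral_congr_ae (Eventually.of_forall fun z => ?_)
  simp only [bump, mul_smul, one_smul, one_pow]
  ring

/-- The constant in the modulus of continuity of the kernels `bump d ρ`, `1 / 2 ≤ ρ ≤ 1`. -/
noncomputable def bumpConst (d : ℕ) : ℝ :=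
  (∫ w : Eu d, tent w)⁻¹ * volume.real (closedBall (0 : Eu d) (2 + 1)) + 2

lemma bumpConst_pos (d : ℕ) : 0 < bumpConst d := by
  have := integral_tent_pos (E := Eu d)
  unfold bumpConst
  positivity

lemma isModKernel_bump (d m : ℕ) (hρ : ρ ∈ Icc (1 / 2 : ℝ) 1) :
    IsModKernel (bump d ρ) 1 (bumpConst d) 2 (1 / (m + 1)) := by
  have hρ0 : 0 < ρ := by linarith [hρ.1]
  have hI := inv_pos.2 (integral_tent_pos (E := Eu d))
  have hlip := bddLip_bump d ⟨hρ0.le, hρ.2⟩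
  have hsupp : ∀ z, 2 < ‖z‖ → bump d ρ z = 0 := fun z hz => bump_eq_zero hρ.1 hz
  have hmod := isModKernel_of_approx (N := 1) (Λ := (∫ w : Eu d, tent w)⁻¹) (C := 0) m
    hlip.continuous.measurable (hlip.integrable hsupp) hsupp
    (by simp only [abs_of_nonneg (bump_nonneg d hρ0.le _), integral_bump d hρ0, le_refl])
    hI.le le_rfl fun ε hε => ⟨bump d ρ, hlip.mono ?_, hsupp, ?_⟩
  · simpa only [bumpConst, mul_zero, zero_add, mul_one] using hmod
  · exact le_mul_of_one_le_right hI.le (one_le_pow₀ ((one_le_inv₀ hε.1).2 hε.2))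
  · simp only [sub_self, abs_zero, integral_zero, zero_mul, le_refl]

end Bump

section TracelessQuadratic

/-- The truncation of `t` to `[-K, K]`. -/
noncomputable def clamp (K t : ℝ) : ℝ := max (-K) (min K t)

variable {K t : ℝ}

lemma abs_clamp_le (hK : 0 ≤ K) (t : ℝ) : |clamp K t| ≤ K :=
  abs_le.2 ⟨le_max_left _ _, max_le (by linarith) (min_le_left _ _)⟩

lemma abs_clamp_sub_clamp_le (K s t : ℝ) : |clamp K s - clamp K t| ≤ |s - t| :=
  calc |clamp K s - clamp K t| ≤ |min K s - min K t| := by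
        simpa [clamp] using abs_max_sub_max_le_max (-K) (min K s) (-K) (min K t)
    _ ≤ |s - t| := by simpa using abs_min_sub_min_le_max K s K t

lemma clamp_of_abs_le (ht : |t| ≤ K) : clamp K t = t := by
  obtain ⟨h₁, h₂⟩ := abs_le.1 ht
  rw [clamp, min_eq_right h₂, max_eq_right h₁]

lemma clamp_neg (hK : 0 ≤ K) (t : ℝ) : clamp K (-t) = -clamp K t := by
  unfold clamp
  grind

variable {d : ℕ} {k l : Fin d} {y ω : Eu d} {ρ c C : ℝ}

lemma abs_coord_le (k : Fin d) (y : Eu d) : |y k| ≤ ‖y‖ := by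
  simpa only [Real.norm_eq_abs] using PiLp.norm_apply_le y k

lemma bddLip_clamp_coord (k : Fin d) : BddLip (fun y : Eu d => clamp 1 (y k)) 1 :=
  ⟨fun _ => abs_clamp_le zero_le_one _, fun y w => (abs_clamp_sub_clamp_le _ _ _).trans (by
    simpa only [one_mul, PiLp.sub_apply] using abs_coord_le k (y - w))⟩

/-- A bounded Lipschitz function that equals `y_k y_l / |y|² - δ_{kl} / d` for `1/2 ≤ |y| ≤ 1`. -/
noncomputable def quad (k l : Fin d) (y : Eu d) : ℝ :=
  clamp 1 (y k) * clamp 1 (y l) * (max ‖y‖ (1 / 2))⁻¹ ^ 2 - if k = l then 1 / (d : ℝ) else 0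

lemma quad_eq (k l : Fin d) (hy : ‖y‖ ∈ Icc (1 / 2 : ℝ) 1) :
    quad k l y = y k * y l / ‖y‖ ^ 2 - if k = l then 1 / (d : ℝ) else 0 := by
  rw [quad, clamp_of_abs_le ((abs_coord_le k y).trans hy.2),
    clamp_of_abs_le ((abs_coord_le l y).trans hy.2), max_eq_left hy.1, inv_pow, ← div_eq_mul_inv]

lemma quad_smul (k l : Fin d) (hρ : ρ ∈ Icc (1 / 2 : ℝ) 1) (hω : ‖ω‖ = 1) :
    quad k l (ρ • ω) = ω k * ω l - if k = l then 1 / (d : ℝ) else 0 := by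
  have hρ0 : 0 < ρ := by linarith [hρ.1]
  have hnorm : ‖ρ • ω‖ = ρ := by rw [norm_smul, hω, Real.norm_of_nonneg hρ0.le, mul_one]
  rw [quad_eq k l (by rwa [hnorm]), hnorm]
  simp only [PiLp.smul_apply, smul_eq_mul]
  congr 1
  field_simp

lemma bddLip_quad (k l : Fin d) : BddLip (quad k l) 257 := by
  have hprod := ((bddLip_clamp_coord k).mul (bddLip_clamp_coord l)).mul
    (((BddLip.inv_max (ε := 1 / 2) (by norm_num) (by norm_num)).comp_norm (X := Eu d)).pow 2)
  refine (hprod.sub (BddLip.const (if k = l then 1 / (d : ℝ) else 0))).mono ?_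
  have hd : (1 : ℝ) ≤ d := by exact_mod_cast k.pos
  have hδ : |if k = l then 1 / (d : ℝ) else 0| ≤ 1 := by
    split_ifs
    · rw [abs_of_nonneg (by positivity)]
      exact div_le_one_of_le₀ hd (by positivity)
    · rw [abs_zero]
      exact zero_le_one
  norm_num at hδ ⊢
  linarith

lemma isModKernel_annKernel_quad (k l : Fin d) (hc : |c| ≤ C) :
    IsModKernel (annKernel (Ioc (1 / 2) 1) fun y => c * quad k l y) (2 * C * 514 * area d)
      (annConst d (2 * C * 514)) 2 (1 / ((2 * d + 2 : ℕ) + 1)) := by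
  have hC : 0 ≤ C := (abs_nonneg c).trans hc
  have : NeZero d := ⟨k.pos.ne'⟩
  have hlip : BddLip (fun y => c * quad k l y) (C * 514) :=
    ((BddLip.const c).mul (bddLip_quad k l)).mono (by linarith)
  refine isModKernel_annKernel (by norm_num) measurableSet_Ioc Ioo_subset_Ioc_self Subset.rfl
    (hlip.mono (by linarith)) fun y hy => (hlip.bound y).trans ?_
  linarith [mul_nonneg hC (sub_nonneg.2 hy.1.le)]

lemma integral_annKernel_quad_of_ne (hkl : k ≠ l) :
    ∫ y, annKernel (Ioc (1 / 2) 1) (quad k l) y = 0 := by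
  let e : Eu d ≃ₗᵢ[ℝ] Eu d := LinearIsometryEquiv.piLpCongrRight 2 fun i =>
    if i = k then LinearIsometryEquiv.neg ℝ else LinearIsometryEquiv.refl ℝ ℝ
  have hrefl : ∀ y, quad k l (e y) = -1 * quad k l y := fun y => by
    rw [quad, LinearIsometryEquiv.norm_map]
    simp [e, quad, hkl, hkl.symm, clamp_neg zero_le_one]
  have h := integral_annKernel_comp (Ioc (1 / 2) 1) (quad k l) e
  simp only [hrefl, integral_annKernel_const_mul] at h
  linarith

lemma integral_annKernel_quad_self_eq (k l : Fin d) :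
    ∫ y, annKernel (Ioc (1 / 2) 1) (quad l l) y = ∫ y, annKernel (Ioc (1 / 2) 1) (quad k k) y := by
  rw [← integral_annKernel_comp _ (quad k k)
    (LinearIsometryEquiv.piLpCongrLeft 2 ℝ ℝ (Equiv.swap k l))]
  congr! 4 with y
  simp [quad, LinearIsometryEquiv.piLpCongrLeft_apply, Equiv.piCongrLeft']

lemma sum_quad_self [NeZero d] (hy : ‖y‖ ∈ Icc (1 / 2 : ℝ) 1) : ∑ j, quad j j y = 0 := by
  have hy0 : ‖y‖ ^ 2 ≠ 0 := pow_ne_zero 2 (by linarith [hy.1])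
  simp only [quad_eq _ _ hy, if_true, Finset.sum_sub_distrib, ← Finset.sum_div, ← pow_two,
    ← EuclideanSpace.real_norm_sq_eq, div_self hy0, Finset.sum_const, Finset.card_univ,
    Fintype.card_fin, nsmul_eq_mul]
  rw [mul_one, div_self (NeZero.ne _), sub_self]

lemma integral_annKernel_quad_self (k : Fin d) :
    ∫ y, annKernel (Ioc (1 / 2) 1) (quad k k) y = 0 := by
  have : NeZero d := ⟨k.pos.ne'⟩
  have hint : ∀ j : Fin d, Integrable (annKernel (Ioc (1 / 2) 1) (quad j j)) := fun j => by
    simpa only [one_mul] using (isModKernel_annKernel_quad j j (c := 1) le_rfl).int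
  have hsum : ∑ j : Fin d, ∫ y, annKernel (Ioc (1 / 2) 1) (quad j j) y = 0 := by
    rw [← integral_finsetSum _ fun j _ => hint j]
    refine integral_eq_zero_of_ae (Eventually.of_forall fun y => ?_)
    by_cases hy : ‖y‖ ∈ Ioc (1 / 2 : ℝ) 1
    · simp only [annKernel, ← Finset.mul_sum, sum_quad_self (Ioc_subset_Icc_self hy), mul_zero,
        Pi.zero_apply]
    · simp only [annKernel_eq_zero hy, Finset.sum_const_zero, Pi.zero_apply]
  simp only [integral_annKernel_quad_self_eq k, Finset.sum_const, Finset.card_univ,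
    Fintype.card_fin, nsmul_eq_mul] at hsum
  exact (mul_eq_zero.1 hsum).resolve_left (NeZero.ne _)

lemma integral_annKernel_quad (k l : Fin d) :
    ∫ y, annKernel (Ioc (1 / 2) 1) (quad k l) y = 0 := by
  rcases eq_or_ne k l with rfl | hkl
  · exact integral_annKernel_quad_self k
  · exact integral_annKernel_quad_of_ne hkl

end TracelessQuadratic

/-! ### Paraproducts -/

section Paraproduct

variable {α : Type*} [MeasurableSpace α] {μ : Measure α} {p q : ℝ} {n : ℕ} {Λ A B M : ℝ≥0∞}
  {a g : ℕ → α → ℝ}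

lemma eLpNorm_ofReal_le_iff {E : Type*} [NormedAddCommGroup E] {f : α → E} (hq : 0 < q) :
    eLpNorm f (ENNReal.ofReal q) μ ≤ B ↔ ∫⁻ x, ‖f x‖ₑ ^ q ∂μ ≤ B ^ q := by
  rw [eLpNorm_eq_lintegral_rpow_enorm_toReal (by simpa using hq) ENNReal.ofReal_ne_top,
    ENNReal.toReal_ofReal hq.le, one_div, ENNReal.rpow_inv_le_iff hq]

lemma rpow_le_rpow_sub_two_mul_rpow_two (hp : 0 < p) {y : ℝ≥0∞} (hy : y ≠ ⊤)
    (h : 2 ≤ p ∧ y ≤ M ∨ p ≤ 2 ∧ M ≤ y) : y ^ p ≤ M ^ (p - 2) * y ^ (2 : ℝ) := by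
  rcases eq_or_ne y 0 with rfl | hy0
  · rw [ENNReal.zero_rpow_of_pos hp]
    exact zero_le
  have hsplit : y ^ p = y ^ (p - 2) * y ^ (2 : ℝ) := by
    rw [← ENNReal.rpow_add _ _ hy0 hy, sub_add_cancel]
  rw [hsplit]
  gcongr ?_ * _
  rcases h with ⟨hp2, hyM⟩ | ⟨hp2, hMy⟩
  · exact ENNReal.rpow_le_rpow hyM (by linarith)
  · rw [← neg_sub, ENNReal.rpow_neg, ENNReal.rpow_neg, ENNReal.inv_le_inv]
    exact ENNReal.rpow_le_rpow hMy (by linarith)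

lemma lintegral_sum_mul_le_Lp_mul_Lq (hpq : q.HolderConjugate p) (n : ℕ) {a b : ℕ → α → ℝ≥0∞}
    (ha : ∀ k, Measurable (a k)) (hb : ∀ k, Measurable (b k))
    (hA : ∀ k, ∫⁻ x, a k x ^ q ∂μ ≤ A ^ q)
    (hB : ∑ k ∈ Finset.range n, ∫⁻ x, b k x ^ p ∂μ ≤ B ^ p) :
    ∫⁻ x, ∑ k ∈ Finset.range n, a k x * b k x ∂μ ≤ (n : ℝ≥0∞) ^ (1 / q) * A * B := by
  have hq := hpq.pos
  have hp := hpq.symm.pos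
  rw [lintegral_finsetSum (f := fun k x => a k x * b k x) _ fun k _ => (ha k).mul (hb k)]
  calc ∑ k ∈ Finset.range n, ∫⁻ x, a k x * b k x ∂μ
      ≤ ∑ k ∈ Finset.range n, (∫⁻ x, a k x ^ q ∂μ) ^ (1 / q) * (∫⁻ x, b k x ^ p ∂μ) ^ (1 / p) :=
        Finset.sum_le_sum fun k _ =>
          ENNReal.lintegral_mul_le_Lp_mul_Lq _ hpq (ha k).aemeasurable (hb k).aemeasurable
    _ ≤ (∑ k ∈ Finset.range n, ((∫⁻ x, a k x ^ q ∂μ) ^ (1 / q)) ^ q) ^ (1 / q) *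
        (∑ k ∈ Finset.range n, ((∫⁻ x, b k x ^ p ∂μ) ^ (1 / p)) ^ p) ^ (1 / p) :=
        ENNReal.inner_le_Lp_mul_Lq _ _ _ hpq
    _ = (∑ k ∈ Finset.range n, ∫⁻ x, a k x ^ q ∂μ) ^ (1 / q) *
        (∑ k ∈ Finset.range n, ∫⁻ x, b k x ^ p ∂μ) ^ (1 / p) := by
        simp only [← ENNReal.rpow_mul, one_div_mul_cancel hq.ne', one_div_mul_cancel hp.ne',
          ENNReal.rpow_one]
    _ ≤ (n * A ^ q) ^ (1 / q) * (B ^ p) ^ (1 / p) := by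
        gcongr
        refine (Finset.sum_le_sum fun k _ => hA k).trans_eq ?_
        rw [Finset.sum_const, Finset.card_range, nsmul_eq_mul]
    _ = (n : ℝ≥0∞) ^ (1 / q) * A * B := by
        rw [ENNReal.mul_rpow_of_nonneg _ _ (by positivity), ← ENNReal.rpow_mul, ← ENNReal.rpow_mul,
          mul_one_div_cancel hq.ne', mul_one_div_cancel hp.ne', ENNReal.rpow_one, ENNReal.rpow_one]

lemma lintegral_enorm_sum_indicator_mul_le (hpq : q.HolderConjugate p)
    (ha : ∀ k, Measurable (a k)) (hg : ∀ k, Measurable (g k))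
    (hB : ∀ k, ∫⁻ x, ‖a k x‖ₑ ^ q ∂μ ≤ B ^ q)
    (hg2 : ∑ k ∈ Finset.range n, ∫⁻ x, ‖g k x‖ₑ ^ (2 : ℝ) ∂μ ≤ Λ ^ (2 : ℝ)) {s : ℕ → Set α}
    (hs : ∀ k, MeasurableSet (s k))
    (hM : ∀ k, ∀ x ∈ s k, 2 ≤ p ∧ ‖g k x‖ₑ ≤ M ∨ p ≤ 2 ∧ M ≤ ‖g k x‖ₑ) :
    ∫⁻ x, ‖∑ k ∈ Finset.range n, (s k).indicator (fun x => a k x * g k x) x‖ₑ ∂μ ≤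
      (n : ℝ≥0∞) ^ (1 / q) * B * (M ^ (p - 2) * Λ ^ (2 : ℝ)) ^ (1 / p) := by
  have hp := hpq.symm.pos
  have hterm : ∀ k x, (s k).indicator (fun x => ‖g k x‖ₑ) x ^ p ≤
      M ^ (p - 2) * ‖g k x‖ₑ ^ (2 : ℝ) := fun k x => by
    by_cases hx : x ∈ s k
    · rw [indicator_of_mem hx]
      exact rpow_le_rpow_sub_two_mul_rpow_two hp enorm_ne_top (hM k x hx)
    · rw [indicator_of_notMem hx, ENNReal.zero_rpow_of_pos hp]
      exact zero_le
  calc ∫⁻ x, ‖∑ k ∈ Finset.range n, (s k).indicator (fun x => a k x * g k x) x‖ₑ ∂μ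
      ≤ ∫⁻ x, ∑ k ∈ Finset.range n, ‖a k x‖ₑ * (s k).indicator (fun x => ‖g k x‖ₑ) x ∂μ :=
        lintegral_mono fun x => (enorm_sum_le _ _).trans (Finset.sum_le_sum fun k _ => by
          by_cases hx : x ∈ s k <;> simp [hx, enorm_mul])
    _ ≤ (n : ℝ≥0∞) ^ (1 / q) * B * (M ^ (p - 2) * Λ ^ (2 : ℝ)) ^ (1 / p) := by
        refine lintegral_sum_mul_le_Lp_mul_Lq hpq n (fun k => (ha k).enorm)
          (fun k => (hg k).enorm.indicator (hs k)) hB ?_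
        rw [← ENNReal.rpow_mul, one_div_mul_cancel hp.ne', ENNReal.rpow_one]
        calc ∑ k ∈ Finset.range n, ∫⁻ x, (s k).indicator (fun x => ‖g k x‖ₑ) x ^ p ∂μ
            ≤ ∑ k ∈ Finset.range n, ∫⁻ x, M ^ (p - 2) * ‖g k x‖ₑ ^ (2 : ℝ) ∂μ :=
              Finset.sum_le_sum fun k _ => lintegral_mono (hterm k)
          _ = M ^ (p - 2) * ∑ k ∈ Finset.range n, ∫⁻ x, ‖g k x‖ₑ ^ (2 : ℝ) ∂μ := by
              rw [Finset.mul_sum]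
              exact Finset.sum_congr rfl fun k _ =>
                lintegral_const_mul _ ((hg k).enorm.pow_const _)
          _ ≤ M ^ (p - 2) * Λ ^ (2 : ℝ) := by gcongr

lemma lintegral_enorm_sum_mul_le (hpq : q.HolderConjugate p) (hp2 : 2 ≤ p)
    (ha : ∀ k, Measurable (a k)) (hg : ∀ k, Measurable (g k)) (hΛ0 : Λ ≠ 0) (hΛt : Λ ≠ ⊤)
    (hB : ∀ k, ∫⁻ x, ‖a k x‖ₑ ^ q ∂μ ≤ B ^ q) (hgΛ : ∀ k x, ‖g k x‖ₑ ≤ Λ)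
    (hg2 : ∑ k ∈ Finset.range n, ∫⁻ x, ‖g k x‖ₑ ^ (2 : ℝ) ∂μ ≤ Λ ^ (2 : ℝ)) :
    ∫⁻ x, ‖∑ k ∈ Finset.range n, a k x * g k x‖ₑ ∂μ ≤ (n : ℝ≥0∞) ^ (1 / q) * Λ * B := by
  have h := lintegral_enorm_sum_indicator_mul_le (s := fun _ => univ) hpq ha hg hB hg2
    (fun _ => .univ) fun k x _ => Or.inl ⟨hp2, hgΛ k x⟩
  simp only [indicator_univ] at h
  rwa [← ENNReal.rpow_add _ _ hΛ0 hΛt, sub_add_cancel, ← ENNReal.rpow_mul,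
    mul_one_div_cancel hpq.symm.pos.ne', ENNReal.rpow_one, mul_right_comm] at h

/-- The part of the product `a g` where `|g|` is at least the threshold `M`. -/
noncomputable def largePart (M : ℝ≥0∞) (a g : α → ℝ) : α → ℝ :=
  {x | M ≤ ‖g x‖ₑ}.indicator fun x => a x * g x

lemma measurableSet_le_enorm {g : α → ℝ} (hg : Measurable g) (M : ℝ≥0∞) :
    MeasurableSet {x | M ≤ ‖g x‖ₑ} :=
  measurableSet_le measurable_const hg.enorm

lemma measurable_largePart {a g : α → ℝ} (ha : Measurable a) (hg : Measurable g) (M : ℝ≥0∞) :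
    Measurable (largePart M a g) :=
  (ha.mul hg).indicator (measurableSet_le_enorm hg M)

lemma lintegral_enorm_sum_largePart_le (hpq : q.HolderConjugate p) (hp2 : p ≤ 2) (hn : n ≠ 0)
    (ha : ∀ k, Measurable (a k)) (hg : ∀ k, Measurable (g k)) (hΛ0 : Λ ≠ 0) (hΛt : Λ ≠ ⊤)
    (hB : ∀ k, ∫⁻ x, ‖a k x‖ₑ ^ q ∂μ ≤ B ^ q)
    (hg2 : ∑ k ∈ Finset.range n, ∫⁻ x, ‖g k x‖ₑ ^ (2 : ℝ) ∂μ ≤ Λ ^ (2 : ℝ)) :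
    ∫⁻ x, ‖∑ k ∈ Finset.range n, largePart ((n : ℝ≥0∞) ^ (-(1 / 2) : ℝ) * Λ) (a k) (g k) x‖ₑ ∂μ ≤
      (n : ℝ≥0∞) ^ (1 / 2 : ℝ) * Λ * B := by
  have hp := hpq.symm.pos
  have hn0 : (n : ℝ≥0∞) ≠ 0 := Nat.cast_ne_zero.2 hn
  have hnt : (n : ℝ≥0∞) ≠ ⊤ := ENNReal.natCast_ne_top n
  have hexp : -(1 / 2) * ((p - 2) * (1 / p)) = 1 / 2 - 1 / q := by
    have := hpq.inv_add_inv_eq_one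
    calc -(1 / 2) * ((p - 2) * (1 / p)) = -(1 / 2) + p⁻¹ := by field_simp; ring
      _ = 1 / 2 - 1 / q := by rw [one_div q]; linarith
  have hΛn : ((((n : ℝ≥0∞) ^ (-(1 / 2) : ℝ) * Λ) ^ (p - 2)) * Λ ^ (2 : ℝ)) ^ (1 / p) =
      (n : ℝ≥0∞) ^ (1 / 2 - 1 / q) * Λ := by
    rw [ENNReal.mul_rpow_of_ne_top (ENNReal.rpow_ne_top_of_ne_zero hn0 hnt) hΛt, mul_assoc,
      ← ENNReal.rpow_add _ _ hΛ0 hΛt, sub_add_cancel,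
      ENNReal.mul_rpow_of_nonneg _ _ (by positivity), ← ENNReal.rpow_mul, ← ENNReal.rpow_mul,
      ← ENNReal.rpow_mul, mul_one_div_cancel hp.ne', ENNReal.rpow_one, hexp]
  calc _ ≤ (n : ℝ≥0∞) ^ (1 / q) * B * ((n : ℝ≥0∞) ^ (1 / 2 - 1 / q) * Λ) :=
        hΛn ▸ lintegral_enorm_sum_indicator_mul_le hpq ha hg hB hg2
          (fun k => measurableSet_le_enorm (hg k) _) fun k x hx => Or.inr ⟨hp2, hx⟩
    _ = ((n : ℝ≥0∞) ^ (1 / q) * (n : ℝ≥0∞) ^ (1 / 2 - 1 / q)) * Λ * B := by ring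
    _ = (n : ℝ≥0∞) ^ (1 / 2 : ℝ) * Λ * B := by
        rw [← ENNReal.rpow_add _ _ hn0 hnt, add_sub_cancel]

lemma eLpNorm_mul_sub_largePart_le {a : α → ℝ} (hq : 0 < q) (ha : Measurable a)
    (hB : ∫⁻ x, ‖a x‖ₑ ^ q ∂μ ≤ B ^ q) (M : ℝ≥0∞) (g : α → ℝ) :
    eLpNorm (fun x => a x * g x - largePart M a g x) (ENNReal.ofReal q) μ ≤ M * B := by
  rw [eLpNorm_ofReal_le_iff hq, ENNReal.mul_rpow_of_nonneg _ _ hq.le]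
  refine le_trans ?_ (mul_le_mul_right hB (M ^ q))
  rw [← lintegral_const_mul _ (ha.enorm.pow_const _)]
  refine lintegral_mono fun x => ?_
  rw [← ENNReal.mul_rpow_of_nonneg _ _ hq.le]
  by_cases hx : M ≤ ‖g x‖ₑ
  · rw [largePart, indicator_of_mem (show x ∈ {x | M ≤ ‖g x‖ₑ} from hx), sub_self, enorm_zero,
      ENNReal.zero_rpow_of_pos hq]
    exact zero_le
  · rw [largePart, indicator_of_notMem (s := {x | M ≤ ‖g x‖ₑ}) hx, sub_zero, enorm_mul, mul_comm]
    gcongr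
    exact (not_le.1 hx).le

lemma eLpNorm_sum_mul_sub_sum_largePart_le (hq : 1 ≤ q) (n : ℕ) (ha : ∀ k, Measurable (a k))
    (hg : ∀ k, Measurable (g k)) (hB : ∀ k, ∫⁻ x, ‖a k x‖ₑ ^ q ∂μ ≤ B ^ q) (M : ℝ≥0∞) :
    eLpNorm (fun x => (∑ k ∈ Finset.range n, a k x * g k x) -
      ∑ k ∈ Finset.range n, largePart M (a k) (g k) x) (ENNReal.ofReal q) μ ≤ n * (M * B) := by
  simp only [← Finset.sum_sub_distrib]
  have hsum := eLpNorm_sum_le (μ := μ) (p := ENNReal.ofReal q) (s := Finset.range n)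
    (f := fun k x => a k x * g k x - largePart M (a k) (g k) x)
    (fun k _ => (((ha k).mul (hg k)).sub
      (measurable_largePart (ha k) (hg k) M)).aestronglyMeasurable)
    (by simpa using hq)
  rw [Finset.sum_fn] at hsum
  refine hsum.trans ((Finset.sum_le_sum fun k _ =>
    eLpNorm_mul_sub_largePart_le (by linarith) (ha k) (hB k) M (g k)).trans_eq ?_)
  rw [Finset.sum_const, Finset.card_range, nsmul_eq_mul]

-- For `p ≥ 2` the whole sum is in `L¹`; for `p < 2` the products are split at `|gₖ| = n^(-1/2) Λ`.
lemma exists_paraproduct_split (hq : 1 < q) (hn : n ≠ 0) (ha : ∀ k, Measurable (a k))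
    (hg : ∀ k, Measurable (g k)) (hΛ0 : Λ ≠ 0) (hΛt : Λ ≠ ⊤)
    (hB : ∀ k, ∫⁻ x, ‖a k x‖ₑ ^ q ∂μ ≤ B ^ q) (hgΛ : ∀ k x, ‖g k x‖ₑ ≤ Λ)
    (hg2 : ∑ k ∈ Finset.range n, ∫⁻ x, ‖g k x‖ₑ ^ (2 : ℝ) ∂μ ≤ Λ ^ (2 : ℝ)) :
    ∃ u : α → ℝ, Measurable u ∧
      ∫⁻ x, ‖u x‖ₑ ∂μ ≤ (n : ℝ≥0∞) ^ (max 1 (q - 1) / q) * Λ * B ∧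
      eLpNorm (fun x => (∑ k ∈ Finset.range n, a k x * g k x) - u x) (ENNReal.ofReal q) μ ≤
        (n : ℝ≥0∞) ^ (max 1 (q - 1) / q) * Λ * B := by
  have hq0 : 0 < q := by linarith
  have hpq := Real.HolderConjugate.conjExponent hq
  have hn0 : (n : ℝ≥0∞) ≠ 0 := Nat.cast_ne_zero.2 hn
  have hn1 : (1 : ℝ≥0∞) ≤ n := by exact_mod_cast Nat.one_le_iff_ne_zero.2 hn
  rcases le_or_gt 2 q.conjExponent with hp2 | hp2
  · refine ⟨fun x => ∑ k ∈ Finset.range n, a k x * g k x,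
      Finset.measurable_sum _ fun k _ => (ha k).mul (hg k), ?_, by simp⟩
    refine (lintegral_enorm_sum_mul_le hpq hp2 ha hg hΛ0 hΛt hB hgΛ hg2).trans ?_
    gcongr
    exact le_max_left _ _
  · have hhalf : (1 / 2 : ℝ) ≤ max 1 (q - 1) / q := by
      rw [Real.conjExponent, div_lt_iff₀ (by linarith)] at hp2
      rw [le_div_iff₀ hq0]
      linarith [le_max_right 1 (q - 1)]
    have hnhalf : (n : ℝ≥0∞) ^ (1 / 2 : ℝ) * Λ * B ≤
        (n : ℝ≥0∞) ^ (max 1 (q - 1) / q) * Λ * B := by gcongr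
    refine ⟨_, Finset.measurable_sum _ fun k _ => measurable_largePart (ha k) (hg k) _,
      (lintegral_enorm_sum_largePart_le hpq hp2.le hn ha hg hΛ0 hΛt hB hg2).trans hnhalf,
      (eLpNorm_sum_mul_sub_sum_largePart_le hq.le n ha hg hB _).trans (le_trans (le_of_eq ?_)
        hnhalf)⟩
    calc (n : ℝ≥0∞) * ((n : ℝ≥0∞) ^ (-(1 / 2) : ℝ) * Λ * B)
        = (n : ℝ≥0∞) ^ (1 : ℝ) * (n : ℝ≥0∞) ^ (-(1 / 2) : ℝ) * Λ * B := by
          rw [ENNReal.rpow_one]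
          ring
      _ = (n : ℝ≥0∞) ^ (1 / 2 : ℝ) * Λ * B := by
          rw [← ENNReal.rpow_add _ _ hn0 (ENNReal.natCast_ne_top n)]
          norm_num

end Paraproduct

/-! ### The radial weight -/

section RadialWeight

variable {d n : ℕ} {h r : ℝ}

/-- The radial weight `rᵈ / (r + h)ᵈ⁺¹` of the operator. -/
noncomputable def radialWeight (d : ℕ) (h r : ℝ) : ℝ := r ^ d / (r + h) ^ (d + 1)

lemma measurable_radialWeight (d : ℕ) (h : ℝ) : Measurable (radialWeight d h) := by
  unfold radialWeight
  fun_prop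

lemma radialWeight_nonneg (d : ℕ) (hh : 0 ≤ h) (hr : 0 ≤ r) : 0 ≤ radialWeight d h r := by
  unfold radialWeight
  positivity

lemma radialWeight_le_inv (d : ℕ) (hh : 0 < h) (hr : 0 ≤ r) : radialWeight d h r ≤ (r + h)⁻¹ := by
  have hrh : 0 < r + h := by linarith
  rw [radialWeight, pow_succ, ← div_div, ← div_pow, div_eq_mul_inv]
  exact mul_le_of_le_one_left (by positivity)
    (pow_le_one₀ (by positivity) ((div_le_one hrh).2 (by linarith)))

lemma abs_inv_sub_radialWeight_le (d : ℕ) (hh : 0 ≤ h) (hr : 0 < r) :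
    |r⁻¹ - radialWeight d h r| ≤ r⁻¹ * ((d + 1) * (h / (r + h))) := by
  have hrh : 0 < r + h := by linarith
  have ht1 : h / (r + h) ≤ 1 := (div_le_one hrh).2 (by linarith)
  have hweight : r⁻¹ - radialWeight d h r = r⁻¹ * (1 - (1 - h / (r + h)) ^ (d + 1)) := by
    rw [one_sub_div hrh.ne', add_sub_cancel_right, radialWeight, div_pow, pow_succ r]
    field_simp
  have hbernoulli := one_add_mul_le_pow (a := -(h / (r + h))) (by linarith) (d + 1)
  push_cast at hbernoulli
  rw [← sub_eq_add_neg] at hbernoulli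
  rw [hweight, abs_of_nonneg (mul_nonneg (by positivity)
    (sub_nonneg.2 (pow_le_one₀ (by linarith) (by linarith [div_nonneg hh hrh.le]))))]
  gcongr
  linarith

/-- The difference between the radial weight and `1 / r` truncated at `2⁻ⁿ`. -/
noncomputable def radialWeightErr (d n : ℕ) (h r : ℝ) : ℝ :=
  radialWeight d h r - (Ioc ((1 / 2 : ℝ) ^ n) 1).indicator (fun r => r⁻¹) r

lemma measurable_radialWeightErr (d n : ℕ) (h : ℝ) : Measurable (radialWeightErr d n h) :=
  (measurable_radialWeight d h).sub (measurable_inv.indicator measurableSet_Ioc)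

lemma abs_radialWeightErr_le (d : ℕ) (hn : (1 / 2 : ℝ) ^ n ≤ h) (hn' : h ≤ 2 * (1 / 2 : ℝ) ^ n)
    (hr : r ∈ Ioc (0 : ℝ) 1) : |radialWeightErr d n h r| ≤ 3 * (d + 1) * (h / (r + h) ^ 2) := by
  have hh : 0 < h := lt_of_lt_of_le (by positivity) hn
  have hr0 := hr.1
  have hrh : 0 < r + h := by linarith
  by_cases hrn : r ∈ Ioc ((1 / 2 : ℝ) ^ n) 1
  · have hinv : r⁻¹ ≤ 3 * (r + h)⁻¹ := by
      rw [← div_eq_mul_inv, inv_eq_one_div, div_le_div_iff₀ hr0 hrh]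
      linarith [hrn.1]
    rw [radialWeightErr, indicator_of_mem hrn, abs_sub_comm]
    calc |r⁻¹ - radialWeight d h r| ≤ r⁻¹ * ((d + 1) * (h / (r + h))) :=
          abs_inv_sub_radialWeight_le d hh.le hr0
      _ ≤ 3 * (r + h)⁻¹ * ((d + 1) * (h / (r + h))) := by gcongr
      _ = 3 * (d + 1) * (h / (r + h) ^ 2) := by field_simp
  · have hrh' : r ≤ h := (not_lt.1 fun h' => hrn ⟨h', hr.2⟩).trans hn
    have hdh : 0 ≤ (d : ℝ) * h := by positivity
    rw [radialWeightErr, indicator_of_notMem hrn, sub_zero,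
      abs_of_nonneg (radialWeight_nonneg d hh.le hr0.le)]
    refine (radialWeight_le_inv d hh hr0.le).trans ?_
    rw [inv_eq_one_div, mul_div_assoc', div_le_div_iff₀ hrh (by positivity)]
    nlinarith [mul_nonneg hdh hrh.le]

lemma lintegral_div_add_sq_le_one (hh : 0 < h) :
    ∫⁻ r in Ioc (0 : ℝ) 1, ENNReal.ofReal (h / (r + h) ^ 2) ≤ 1 := by
  have hcont : ContinuousOn (fun r => h / (r + h) ^ 2) (uIcc 0 1) := by
    rw [uIcc_of_le zero_le_one]
    refine continuousOn_const.div (by fun_prop) fun r hr => ?_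
    have := hr.1
    positivity
  have hint : IntervalIntegrable (fun r => h / (r + h) ^ 2) volume 0 1 := hcont.intervalIntegrable
  rw [← ofReal_integral_eq_lintegral_ofReal
    ((intervalIntegrable_iff_integrableOn_Ioc_of_le zero_le_one).1 hint)
    (Eventually.of_forall fun r => by positivity), ← intervalIntegral.integral_of_le zero_le_one,
    intervalIntegral.integral_eq_sub_of_hasDerivAt (f := fun r => -h / (r + h)) (fun r hr => ?_)
      hint]
  · have hpos : 0 ≤ h / (1 + h) := by positivity
    rw [ENNReal.ofReal_le_one, zero_add, neg_div, neg_div, div_self hh.ne']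
    linarith
  · rw [uIcc_of_le zero_le_one] at hr
    have hr0 : r + h ≠ 0 := by linarith [hr.1]
    exact ((hasDerivAt_const r (-h)).div ((hasDerivAt_id r).add_const h) hr0).congr_deriv
      (by simp)

variable {T : ℝ → ℝ} {B c : ℝ}

lemma integrableOn_inv_mul (hT : Measurable T) (hB : ∀ r, |T r| ≤ B) (hc : 0 < c) (b : ℝ) :
    IntegrableOn (fun r => r⁻¹ * T r) (Ioc c b) := by
  refine Measure.integrableOn_of_bounded (M := c⁻¹ * B) measure_Ioc_lt_top.ne
    (measurable_inv.mul hT).aestronglyMeasurable ?_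
  filter_upwards [ae_restrict_mem measurableSet_Ioc] with r hr
  have : 0 < r := hc.trans hr.1
  rw [norm_mul, Real.norm_of_nonneg (by positivity)]
  gcongr
  · exact hr.1.le
  · exact hB r

lemma integral_dyadicRadius (T : ℝ → ℝ) :
    ∫ ρ, T ρ ∂dyadicRadius = ∫ ρ in Ioc (1 / 2 : ℝ) 1, ρ⁻¹ * T ρ := by
  rw [dyadicRadius, integral_withDensity_eq_integral_toReal_smul (by fun_prop)
    (Eventually.of_forall fun _ => ENNReal.ofReal_lt_top)]
  refine setIntegral_congr_fun measurableSet_Ioc fun ρ hρ => ?_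
  have : 0 < ρ := by linarith [hρ.1]
  simp only [smul_eq_mul]
  rw [ENNReal.toReal_ofReal (by positivity)]

lemma setIntegral_Ioc_mul_inv_mul (hc : 0 < c) (T : ℝ → ℝ) :
    ∫ r in Ioc (c * (1 / 2)) c, r⁻¹ * T r = ∫ ρ, T (c * ρ) ∂dyadicRadius := by
  have hscale := intervalIntegral.integral_comp_mul_left (a := 1 / 2) (b := 1)
    (fun r => r⁻¹ * T r) hc.ne'
  rw [mul_one, smul_eq_mul, eq_inv_mul_iff_mul_eq₀ hc.ne'] at hscale
  rw [integral_dyadicRadius, ← intervalIntegral.integral_of_le (by linarith),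
    ← intervalIntegral.integral_of_le (by norm_num), ← hscale,
    ← intervalIntegral.integral_const_mul]
  congr 1 with ρ
  rw [mul_inv]
  field_simp

lemma setIntegral_inv_mul_eq_sum (hT : Measurable T) (hB : ∀ r, |T r| ≤ B) (n : ℕ) :
    ∫ r in Ioc ((1 / 2 : ℝ) ^ n) 1, r⁻¹ * T r =
      ∑ k ∈ Finset.range n, ∫ ρ, T ((1 / 2) ^ k * ρ) ∂dyadicRadius := by
  induction n with
  | zero => simp
  | succ n ih =>
    have hle : (1 / 2 : ℝ) ^ (n + 1) ≤ (1 / 2) ^ n :=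
      pow_le_pow_of_le_one (by norm_num) (by norm_num) n.le_succ
    have hle1 : (1 / 2 : ℝ) ^ n ≤ 1 := pow_le_one₀ (by norm_num) (by norm_num)
    rw [Finset.sum_range_succ, ← ih, ← Ioc_union_Ioc_eq_Ioc hle hle1,
      setIntegral_union (Ioc_disjoint_Ioc_of_le le_rfl) measurableSet_Ioc
        (integrableOn_inv_mul hT hB (by positivity) _)
        (integrableOn_inv_mul hT hB (by positivity) _),
      add_comm, pow_succ, setIntegral_Ioc_mul_inv_mul (by positivity)]

lemma integrableOn_radialWeight_mul (d : ℕ) (hh : 0 < h) (hT : Measurable T)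
    (hB : ∀ r, |T r| ≤ B) : IntegrableOn (fun r => radialWeight d h r * T r) (Ioc 0 1) := by
  refine Measure.integrableOn_of_bounded (M := h⁻¹ * B) measure_Ioc_lt_top.ne
    ((measurable_radialWeight d h).mul hT).aestronglyMeasurable ?_
  filter_upwards [ae_restrict_mem measurableSet_Ioc] with r hr
  rw [norm_mul, Real.norm_of_nonneg (radialWeight_nonneg d hh.le hr.1.le)]
  have : radialWeight d h r ≤ h⁻¹ :=
    (radialWeight_le_inv d hh hr.1.le).trans (inv_anti₀ hh (by linarith [hr.1]))
  gcongr
  exact hB r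

lemma integral_radialWeight_mul_eq (d : ℕ) (hh : 0 < h) (hT : Measurable T) (hB : ∀ r, |T r| ≤ B)
    (n : ℕ) :
    ∫ r in Ioc (0 : ℝ) 1, radialWeight d h r * T r =
      (∫ r in Ioc (0 : ℝ) 1, radialWeightErr d n h r * T r) +
        ∑ k ∈ Finset.range n, ∫ ρ, T ((1 / 2) ^ k * ρ) ∂dyadicRadius := by
  have hsub : Ioc ((1 / 2 : ℝ) ^ n) 1 ⊆ Ioc 0 1 := Ioc_subset_Ioc_left (by positivity)
  have hinv : IntegrableOn ((Ioc ((1 / 2 : ℝ) ^ n) 1).indicator fun r => r⁻¹ * T r) (Ioc 0 1) :=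
    ((integrable_indicator_iff measurableSet_Ioc).2
      (integrableOn_inv_mul hT hB (by positivity) 1)).integrableOn
  simp only [radialWeightErr, sub_mul, ← indicator_mul_left]
  rw [integral_sub (integrableOn_radialWeight_mul d hh hT hB) hinv,
    setIntegral_indicator measurableSet_Ioc, inter_eq_self_of_subset_right hsub,
    setIntegral_inv_mul_eq_sum hT hB, sub_add_cancel]

end RadialWeight

/-! ### Spherical averages of a single entry -/

lemma eLpNorm_le_of_enorm_le_lintegral {X P F : Type*} [MeasurableSpace X] [MeasurableSpace P]
    [NormedAddCommGroup F] {μ : Measure X} [SFinite μ] {ν : Measure P} [SFinite ν] {q : ℝ}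
    (hq : 1 ≤ q) {f : X → F} {Φ : X × P → ℝ≥0∞} (hΦ : Measurable Φ) {c V : ℝ≥0∞}
    (hf : ∀ x, ‖f x‖ₑ ≤ c * ∫⁻ p, Φ (x, p) ∂ν) (hV : ∀ᵐ p ∂ν, ∫⁻ x, Φ (x, p) ^ q ∂μ ≤ V ^ q) :
    eLpNorm f (ENNReal.ofReal q) μ ≤ c * ν univ * V := by
  have hq0 : 0 < q := by linarith
  rw [eLpNorm_ofReal_le_iff hq0, mul_assoc, ENNReal.mul_rpow_of_nonneg _ _ hq0.le,
    ENNReal.mul_rpow_of_nonneg _ _ hq0.le]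
  have hm : Measurable fun x => (∫⁻ p, Φ (x, p) ∂ν) ^ q := hΦ.lintegral_prod_right'.pow_const q
  calc ∫⁻ x, ‖f x‖ₑ ^ q ∂μ ≤ ∫⁻ x, c ^ q * (∫⁻ p, Φ (x, p) ∂ν) ^ q ∂μ :=
        lintegral_mono fun x => by
          rw [← ENNReal.mul_rpow_of_nonneg _ _ hq0.le]
          exact ENNReal.rpow_le_rpow (hf x) hq0.le
    _ = c ^ q * ∫⁻ x, (∫⁻ p, Φ (x, p) ∂ν) ^ q ∂μ := lintegral_const_mul _ hm
    _ ≤ c ^ q * (ν univ ^ q * V ^ q) :=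
        mul_le_mul_right (lintegral_rpow_lintegral_le ν μ hq hΦ hV) _

lemma IsModKernel.lintegral_rpow_avg_le {E : Type*} [NormedAddCommGroup E] [NormedSpace ℝ E]
    [MeasureSpace E] [MeasurableAdd₂ E] [MeasurableConstSMul ℝ E] [SFinite (volume : Measure E)]
    [(volume : Measure E).IsAddLeftInvariant] {ψ f : E → ℝ} {N C₀ R s q : ℝ}
    (h : IsModKernel ψ N C₀ R s) (hq : 1 ≤ q) (hf : Measurable f) (δ : ℝ) :
    ∫⁻ x, ‖avg ψ δ f x‖ₑ ^ q ≤
      (ENNReal.ofReal N * eLpNorm f (ENNReal.ofReal q) volume) ^ q := by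
  have hq0 : 0 < q := by linarith
  have hN : ∫⁻ z, ‖ψ z‖ₑ ≤ ENNReal.ofReal N := by
    rw [← ofReal_integral_norm_eq_lintegral_enorm h.int]
    exact ENNReal.ofReal_le_ofReal h.norm_le
  rw [ENNReal.mul_rpow_of_nonneg _ _ hq0.le]
  refine (QopBound.lintegral_rpow_avg_le hq h.meas hf).trans (mul_le_mul' ?_ ?_)
  · gcongr
  · exact (eLpNorm_ofReal_le_iff hq0).1 le_rfl

section BallAvg

variable {d : ℕ} {ℓ : Eu d → Eu d → ℝ} {a g : Eu d → ℝ}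

/-- The average `∫ ℓ(z, ω) |z|⁻ᵈ a(x + r z) dz` over the unit ball, with `p = (r, ω)`. -/
noncomputable def ballAvg (ℓ : Eu d → Eu d → ℝ) (a : Eu d → ℝ) (p : ℝ × Eu d) (x : Eu d) : ℝ :=
  avg (annKernel (Ioo 0 1) fun z => ℓ z p.2) p.1 a x

/-- The integral of `ballAvg ℓ a (r, ω) x * g (x + r ω)` over `ω` in the unit sphere. Up to the
radial weight, this is the integrand of `Qop` for one matrix entry. -/
noncomputable def sphAvg (ℓ : Eu d → Eu d → ℝ) (a g : Eu d → ℝ) (r : ℝ) (x : Eu d) : ℝ :=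
  ∫ ω, ballAvg ℓ a (r, ω) x * g (x + r • ω) ∂(surf d)

lemma measurable_annKernel_uncurry {J : Set ℝ} (hJ : MeasurableSet J)
    (hℓ : Measurable fun p : Eu d × Eu d => ℓ p.1 p.2) :
    Measurable fun p : Eu d × Eu d => annKernel J (fun z => ℓ z p.2) p.1 :=
  ((((measurable_id.pow_const d).inv).indicator hJ).comp
    (measurable_norm.comp measurable_fst)).mul hℓ

lemma measurable_ballAvg (hℓ : Measurable fun p : Eu d × Eu d => ℓ p.1 p.2) (ha : Measurable a) :
    Measurable fun y : (ℝ × Eu d) × Eu d => ballAvg ℓ a y.1 y.2 := by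
  have hker : Measurable fun y : ((ℝ × Eu d) × Eu d) × Eu d =>
      annKernel (Ioo 0 1) (fun z => ℓ z y.1.1.2) y.2 :=
    (measurable_annKernel_uncurry measurableSet_Ioo hℓ).comp
      (f := fun y : ((ℝ × Eu d) × Eu d) × Eu d => (y.2, y.1.1.2)) (by fun_prop)
  have hshift : Measurable fun y : ((ℝ × Eu d) × Eu d) × Eu d => a (y.1.2 + y.1.1.1 • y.2) :=
    ha.comp (by fun_prop)
  exact (hker.mul hshift).stronglyMeasurable.integral_prod_right'.measurable

lemma measurable_sphAvg (hℓ : Measurable fun p : Eu d × Eu d => ℓ p.1 p.2)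
    (ha : Measurable a) (hg : Measurable g) :
    Measurable fun y : ℝ × Eu d => sphAvg ℓ a g y.1 y.2 := by
  have hball : Measurable fun y : (ℝ × Eu d) × Eu d => ballAvg ℓ a (y.1.1, y.2) y.1.2 :=
    (measurable_ballAvg hℓ ha).comp
      (f := fun y : (ℝ × Eu d) × Eu d => ((y.1.1, y.2), y.1.2)) (by fun_prop)
  have hshift : Measurable fun y : (ℝ × Eu d) × Eu d => g (y.1.2 + y.1.1 • y.2) :=
    hg.comp (by fun_prop)
  exact (hball.mul hshift).stronglyMeasurable.integral_prod_right'.measurable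

lemma measurable_setIntegral_mul_sphAvg {w : ℝ → ℝ} (hw : Measurable w)
    (hℓ : Measurable fun p : Eu d × Eu d => ℓ p.1 p.2) (ha : Measurable a) (hg : Measurable g)
    (s : Set ℝ) : Measurable fun x => ∫ r in s, w r * sphAvg ℓ a g r x := by
  have hm : Measurable fun y : Eu d × ℝ => w y.2 * sphAvg ℓ a g y.2 y.1 :=
    (hw.comp measurable_snd).mul ((measurable_sphAvg hℓ ha hg).comp measurable_swap)
  exact hm.stronglyMeasurable.integral_prod_right'.measurable

lemma enorm_sphAvg_le (hℓ : Measurable fun p : Eu d × Eu d => ℓ p.1 p.2) (ha : Measurable a)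
    {G : ℝ} (hG : ∀ x, |g x| ≤ G) (r : ℝ) (x : Eu d) :
    ‖sphAvg ℓ a g r x‖ₑ ≤ ENNReal.ofReal G * ∫⁻ ω, ‖ballAvg ℓ a (r, ω) x‖ₑ ∂(surf d) := by
  have hball : Measurable fun ω => ballAvg ℓ a (r, ω) x :=
    (measurable_ballAvg hℓ ha).comp (f := fun ω : Eu d => ((r, ω), x)) (by fun_prop)
  refine (enorm_integral_le_lintegral_enorm _).trans ?_
  rw [← lintegral_const_mul _ hball.enorm]
  refine lintegral_mono fun ω => ?_
  rw [enorm_mul, mul_comm, ← ofReal_norm (g _)]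
  gcongr
  exact hG _

/-- The measure `h / (r + h)² dr` on `(0, 1]`, which dominates the error made when the radial
weight is replaced by the truncated `1 / r`. -/
noncomputable def errMeasure (h : ℝ) : Measure ℝ :=
  (volume.restrict (Ioc 0 1)).withDensity fun r => ENNReal.ofReal (h / (r + h) ^ 2)

lemma errMeasure_univ_le_one {h : ℝ} (hh : 0 < h) : errMeasure h univ ≤ 1 := by
  rw [errMeasure, withDensity_apply _ .univ, Measure.restrict_univ]
  exact lintegral_div_add_sq_le_one hh

instance sFinite_errMeasure (h : ℝ) : SFinite (errMeasure h) := by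
  unfold errMeasure
  infer_instance

lemma ae_errMeasure_prod_surf_mem_sphere (d : ℕ) (h : ℝ) :
    ∀ᵐ p ∂((errMeasure h).prod (surf d)), p.2 ∈ sphere (0 : Eu d) 1 :=
  Measure.quasiMeasurePreserving_snd.ae (ae_surf_mem_sphere d)

lemma enorm_integral_radialWeightErr_mul_sphAvg_le {n : ℕ} {h : ℝ} (hn : (1 / 2 : ℝ) ^ n ≤ h)
    (hn' : h ≤ 2 * (1 / 2 : ℝ) ^ n) (hℓ : Measurable fun p : Eu d × Eu d => ℓ p.1 p.2)
    (ha : Measurable a) {G : ℝ} (hG : ∀ x, |g x| ≤ G) (x : Eu d) :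
    ‖∫ r in Ioc (0 : ℝ) 1, radialWeightErr d n h r * sphAvg ℓ a g r x‖ₑ ≤
      ENNReal.ofReal (3 * (d + 1)) * ENNReal.ofReal G *
        ∫⁻ p, ‖ballAvg ℓ a p x‖ₑ ∂((errMeasure h).prod (surf d)) := by
  set w : ℝ → ℝ≥0∞ := fun r => ENNReal.ofReal (h / (r + h) ^ 2)
  have hw : Measurable w := by fun_prop
  have hball : Measurable fun p : ℝ × Eu d => ‖ballAvg ℓ a p x‖ₑ :=
    ((measurable_ballAvg hℓ ha).comp measurable_prodMk_right).enorm
  set Φ : ℝ → ℝ≥0∞ := fun r => ∫⁻ ω, ‖ballAvg ℓ a (r, ω) x‖ₑ ∂(surf d)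
  have hΦ : Measurable Φ := hball.lintegral_prod_right'
  have hprod : ∫⁻ p, ‖ballAvg ℓ a p x‖ₑ ∂((errMeasure h).prod (surf d)) =
      ∫⁻ r in Ioc (0 : ℝ) 1, w r * Φ r := by
    rw [lintegral_prod _ hball.aemeasurable]
    exact lintegral_withDensity_eq_lintegral_mul _ hw hΦ
  rw [hprod, ← lintegral_const_mul' _ _ (by finiteness)]
  refine (enorm_integral_le_lintegral_enorm _).trans
    (setLIntegral_mono' measurableSet_Ioc fun r hr => ?_)
  have herr : ‖radialWeightErr d n h r‖ₑ ≤ ENNReal.ofReal (3 * (d + 1)) * w r := by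
    rw [← ENNReal.ofReal_mul (by positivity), ← ofReal_norm]
    exact ENNReal.ofReal_le_ofReal (abs_radialWeightErr_le d hn hn' hr)
  calc ‖radialWeightErr d n h r * sphAvg ℓ a g r x‖ₑ
      ≤ (ENNReal.ofReal (3 * (d + 1)) * w r) * (ENNReal.ofReal G * Φ r) := by
        rw [enorm_mul]
        exact mul_le_mul' herr (enorm_sphAvg_le hℓ ha hG r x)
    _ = ENNReal.ofReal (3 * (d + 1)) * ENNReal.ofReal G * (w r * Φ r) := by ring

end BallAvg

/-- The kernels of a single matrix entry: `ℓ z ω` stands for `|z| L(z, ω)ₖₗ`, extended to all of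
`ℝᵈ × ℝᵈ`, and `integral_eq` is the cancellation condition on the entry `(k, l)`. -/
structure IsAdmissible {d : ℕ} (ℓ : Eu d → Eu d → ℝ) (k l : Fin d) (K α : ℝ) : Prop where
  pos : 0 < K
  meas : Measurable fun p : Eu d × Eu d => ℓ p.1 p.2
  bddLip : ∀ ω, BddLip (fun z => ℓ z ω) K
  abs_le : ∀ ω ∈ sphere (0 : Eu d) 1, ∀ z ∈ ball (0 : Eu d) 1, |ℓ z ω| ≤ K * ‖z‖
  integral_eq : ∀ ω ∈ sphere (0 : Eu d) 1, ∫ z, annKernel (Ioo 0 1) (fun z => ℓ z ω) z =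
    α * (ω k * ω l - if k = l then 1 / (d : ℝ) else 0)

namespace IsAdmissible

variable {d : ℕ} {ℓ : Eu d → Eu d → ℝ} {a g : Eu d → ℝ} {k l : Fin d} {K α : ℝ}

lemma isModKernel (h : IsAdmissible ℓ k l K α) {ω : Eu d} (hω : ω ∈ sphere (0 : Eu d) 1) :
    IsModKernel (annKernel (Ioo 0 1) fun z => ℓ z ω) (K * area d) (annConst d K) 2
      (1 / ((2 * d + 2 : ℕ) + 1)) :=
  have : NeZero d := ⟨k.pos.ne'⟩
  isModKernel_annKernel le_rfl measurableSet_Ioo Subset.rfl Ioo_subset_Ioc_self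
    (h.bddLip ω) fun z hz => h.abs_le ω hω z (by simpa using hz.2)

lemma abs_ballAvg_le (h : IsAdmissible ℓ k l K α) {B : ℝ} (hB : ∀ x, |a x| ≤ B) {p : ℝ × Eu d}
    (hp : p.2 ∈ sphere (0 : Eu d) 1) (x : Eu d) : |ballAvg ℓ a p x| ≤ K * area d * B := by
  have hker := h.isModKernel hp
  have := (abs_nonneg _).trans (hB 0)
  refine (abs_avg_le hker.int hB x).trans ?_
  gcongr
  exact hker.norm_le

lemma abs_sphAvg_le (h : IsAdmissible ℓ k l K α) {B G : ℝ} (hB : ∀ x, |a x| ≤ B)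
    (hG : ∀ x, |g x| ≤ G) (r : ℝ) (x : Eu d) :
    |sphAvg ℓ a g r x| ≤ K * area d * B * G * (surf d).real univ := by
  have hbound : ∀ᵐ ω ∂(surf d),
      ‖ballAvg ℓ a (r, ω) x * g (x + r • ω)‖ ≤ K * area d * B * G := by
    filter_upwards [ae_surf_mem_sphere d] with ω hω
    have hball := h.abs_ballAvg_le hB (p := (r, ω)) hω x
    rw [Real.norm_eq_abs, abs_mul]
    exact mul_le_mul hball (hG _) (abs_nonneg _) ((abs_nonneg _).trans hball)
  exact norm_integral_le_of_norm_le_const hbound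

lemma eLpNorm_integral_radialWeightErr_le (h : IsAdmissible ℓ k l K α) {q : ℝ} (hq : 1 ≤ q)
    (ha : Measurable a) {G : ℝ} (hG : ∀ x, |g x| ≤ G) {n : ℕ} {t : ℝ}
    (hn : (1 / 2 : ℝ) ^ n ≤ t) (hn' : t ≤ 2 * (1 / 2 : ℝ) ^ n) :
    eLpNorm (fun x => ∫ r in Ioc (0 : ℝ) 1, radialWeightErr d n t r * sphAvg ℓ a g r x)
        (ENNReal.ofReal q) volume ≤
      ENNReal.ofReal (3 * (d + 1)) * surf d univ * ENNReal.ofReal (K * area d) *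
        ENNReal.ofReal G * eLpNorm a (ENNReal.ofReal q) volume := by
  have ht : 0 < t := lt_of_lt_of_le (by positivity) hn
  have hmass : ((errMeasure t).prod (surf d)) univ ≤ surf d univ := by
    rw [← univ_prod_univ, Measure.prod_prod]
    exact mul_le_of_le_one_left zero_le (errMeasure_univ_le_one ht)
  calc eLpNorm (fun x => ∫ r in Ioc (0 : ℝ) 1, radialWeightErr d n t r * sphAvg ℓ a g r x)
        (ENNReal.ofReal q) volume
      ≤ ENNReal.ofReal (3 * (d + 1)) * ENNReal.ofReal G * ((errMeasure t).prod (surf d)) univ *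
          (ENNReal.ofReal (K * area d) * eLpNorm a (ENNReal.ofReal q) volume) := by
        refine eLpNorm_le_of_enorm_le_lintegral hq
          (Φ := fun y : Eu d × (ℝ × Eu d) => ‖ballAvg ℓ a y.2 y.1‖ₑ)
          ((measurable_ballAvg h.meas ha).comp measurable_swap).enorm
          (enorm_integral_radialWeightErr_mul_sphAvg_le hn hn' h.meas ha hG) ?_
        filter_upwards [ae_errMeasure_prod_surf_mem_sphere d t] with p hp
        exact (h.isModKernel hp).lintegral_rpow_avg_le hq ha _
    _ ≤ ENNReal.ofReal (3 * (d + 1)) * ENNReal.ofReal G * surf d univ *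
          (ENNReal.ofReal (K * area d) * eLpNorm a (ENNReal.ofReal q) volume) := by gcongr
    _ = _ := by ring

end IsAdmissible

theorem exists_paraproduct_avg_split (E : Type*) [NormedAddCommGroup E] [NormedSpace ℝ E]
    [MeasureSpace E] [MeasurableAdd₂ E] [MeasurableConstSMul ℝ E] [SFinite (volume : Measure E)]
    [(volume : Measure E).IsAddLeftInvariant] {N C₀ R s q : ℝ} (hN : 0 < N) (hC : 0 < C₀)
    (hR : 0 < R) (hs : 0 < s) (hq : 1 < q) :
    ∃ C : ℝ≥0, ∀ (φ ψ a g : E → ℝ) (δ G : ℝ) (n : ℕ), Measurable φ → ∫⁻ z, ‖φ z‖ₑ ≤ 1 →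
      IsOscKernel ψ N C₀ R s → Measurable a → BddInt g → 0 < G → (∀ x, |g x| ≤ G) →
      ∫ x, g x ^ 2 ≤ G ^ 2 → n ≠ 0 →
      ∃ u : E → ℝ, Measurable u ∧
        ∫⁻ x, ‖u x‖ₑ ≤ C * (n : ℝ≥0∞) ^ (max 1 (q - 1) / q) * ENNReal.ofReal G *
          eLpNorm a (ENNReal.ofReal q) volume ∧
        eLpNorm (fun x => (∑ j ∈ Finset.range n,
            avg φ (δ * (1 / 2) ^ j) a x * avg ψ (δ * (1 / 2) ^ j) g x) - u x)
          (ENNReal.ofReal q) volume ≤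
          C * (n : ℝ≥0∞) ^ (max 1 (q - 1) / q) * ENNReal.ofReal G *
            eLpNorm a (ENNReal.ofReal q) volume := by
  set X := N * C₀ * R ^ s * (2 / (1 - (1 / 2) ^ s))
  have hX : 0 < X := by
    have : 0 < 1 - ((1 : ℝ) / 2) ^ s :=
      sub_pos.2 (Real.rpow_lt_one (by norm_num) (by norm_num) hs)
    positivity
  refine ⟨(1 + N + X).toNNReal,
    fun φ ψ a g δ G n hφ hφ1 hψ ha hg hG hgG hg2 hn => ?_⟩
  set Aq := eLpNorm a (ENNReal.ofReal q) volume
  have hq0 : 0 < q := by linarith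
  have ha_avg : ∀ j : ℕ, ∫⁻ x, ‖avg φ (δ * (1 / 2) ^ j) a x‖ₑ ^ q ≤ Aq ^ q := fun j => by
    refine (lintegral_rpow_avg_le hq.le hφ ha).trans ?_
    calc (∫⁻ z, ‖φ z‖ₑ) ^ q * ∫⁻ x, ‖a x‖ₑ ^ q ≤ 1 ^ q * Aq ^ q := by
          gcongr
          exact (eLpNorm_ofReal_le_iff hq0).1 le_rfl
      _ = Aq ^ q := by rw [ENNReal.one_rpow, one_mul]
  have hg_sup : ∀ (j : ℕ) x,
      ‖avg ψ (δ * (1 / 2) ^ j) g x‖ₑ ≤ ENNReal.ofReal ((1 + N + X) * G) := fun j x => by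
    rw [← ofReal_norm]
    refine ENNReal.ofReal_le_ofReal ((abs_avg_le hψ.int hgG x).trans ?_)
    gcongr
    linarith [hψ.norm_le]
  have hg_sq : ∑ j ∈ Finset.range n, ∫⁻ x, ‖avg ψ (δ * (1 / 2) ^ j) g x‖ₑ ^ (2 : ℝ) ≤
      ENNReal.ofReal ((1 + N + X) * G) ^ (2 : ℝ) := by
    simp only [(hg.avg hψ.int hψ.meas).lintegral_enorm_rpow_two]
    rw [← ENNReal.ofReal_sum_of_nonneg fun j _ => integral_nonneg fun x => sq_nonneg _,
      ENNReal.ofReal_rpow_of_nonneg (by positivity) zero_le_two, Real.rpow_two, mul_pow]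
    refine ENNReal.ofReal_le_ofReal ((hψ.sum_integral_avg_sq_le hN hC hR hs hg n).trans ?_)
    have : X ≤ (1 + N + X) ^ 2 := by nlinarith
    gcongr
  obtain ⟨u, hu, hu1, huq⟩ := exists_paraproduct_split hq hn
    (a := fun j => avg φ (δ * (1 / 2) ^ j) a) (g := fun j => avg ψ (δ * (1 / 2) ^ j) g)
    (fun j => measurable_avg hφ ha) (fun j => measurable_avg hψ.meas hg.meas)
    (ENNReal.ofReal_pos.2 (by positivity)).ne' ENNReal.ofReal_ne_top ha_avg hg_sup hg_sq
  have hconst : (n : ℝ≥0∞) ^ (max 1 (q - 1) / q) * ENNReal.ofReal ((1 + N + X) * G) * Aq =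
      ((1 + N + X).toNNReal : ℝ≥0∞) * (n : ℝ≥0∞) ^ (max 1 (q - 1) / q) * ENNReal.ofReal G *
        Aq := by
    rw [ENNReal.ofReal_mul (by positivity), ENNReal.ofReal]
    ring
  exact ⟨u, hu, hconst ▸ hu1, hconst ▸ huq⟩

lemma enorm_sum_integral_mul_le {P ι : Type*} [MeasurableSpace P] {ν : Measure P}
    {F γ : ι → P → ℝ} (hF : ∀ j, Measurable (F j)) {G : ℝ} (hγ : ∀ j p, |γ j p| ≤ G)
    (s : Finset ι) :
    ‖∑ j ∈ s, ∫ p, F j p * γ j p ∂ν‖ₑ ≤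
      ENNReal.ofReal G * ∫⁻ p, ‖∑ j ∈ s, |F j p|‖ₑ ∂ν := by
  have habs : ∀ p, ‖∑ j ∈ s, |F j p|‖ₑ = ∑ j ∈ s, ‖F j p‖ₑ := fun p => by
    rw [Real.enorm_of_nonneg (Finset.sum_nonneg fun _ _ => abs_nonneg _),
      ENNReal.ofReal_sum_of_nonneg fun _ _ => abs_nonneg _]
    simp only [Real.enorm_eq_ofReal_abs]
  simp only [habs]
  rw [lintegral_finsetSum _ fun j _ => (hF j).enorm, Finset.mul_sum]
  refine (enorm_sum_le _ _).trans (Finset.sum_le_sum fun j _ => ?_)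
  refine (enorm_integral_le_lintegral_enorm _).trans ?_
  rw [← lintegral_const_mul _ (hF j).enorm]
  refine lintegral_mono fun p => ?_
  rw [enorm_mul, mul_comm, Real.enorm_eq_ofReal_abs (γ j p)]
  gcongr
  exact hγ j p

section OscAvg

variable {d : ℕ} {ℓ : Eu d → Eu d → ℝ} {a g : Eu d → ℝ} {k l : Fin d} {K α : ℝ}

/-- The kernel of `ballAvg` at `p = (ρ, ω)`, corrected by the multiple of `bump d ρ` that makes its
integral vanish. -/
noncomputable def oscKernel (ℓ : Eu d → Eu d → ℝ) (k l : Fin d) (α : ℝ) (p : ℝ × Eu d)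
    (z : Eu d) : ℝ :=
  annKernel (Ioo 0 1) (fun z => ℓ z p.2) z - α * quad k l (p.1 • p.2) * bump d p.1 z

/-- The part of `ballAvg` at radius `δ ρ`, where `p = (ρ, ω)`, that remains after a multiple of the
average of `a` at scale `δ` is subtracted. That average does not depend on `p`. -/
noncomputable def oscAvg (ℓ : Eu d → Eu d → ℝ) (k l : Fin d) (α : ℝ) (a : Eu d → ℝ) (δ : ℝ)
    (p : ℝ × Eu d) (x : Eu d) : ℝ :=
  ballAvg ℓ a (δ * p.1, p.2) x - α * quad k l (p.1 • p.2) * avg (bump d 1) δ a x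

lemma isModKernel_bump_one (d : ℕ) :
    IsModKernel (bump d 1) 1 (bumpConst d) 2 (1 / ((2 * d + 2 : ℕ) + 1)) :=
  isModKernel_bump d (2 * d + 2) ⟨by norm_num, le_rfl⟩

lemma measurable_quad_smul (k l : Fin d) :
    Measurable fun p : ℝ × Eu d => quad k l (p.1 • p.2) :=
  (bddLip_quad k l).continuous.measurable.comp (by fun_prop)

lemma measurable_oscAvg (hℓ : Measurable fun p : Eu d × Eu d => ℓ p.1 p.2) (ha : Measurable a)
    (δ : ℝ) : Measurable fun y : (ℝ × Eu d) × Eu d => oscAvg ℓ k l α a δ y.1 y.2 := by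
  have hball : Measurable fun y : (ℝ × Eu d) × Eu d => ballAvg ℓ a (δ * y.1.1, y.1.2) y.2 :=
    (measurable_ballAvg hℓ ha).comp
      (f := fun y : (ℝ × Eu d) × Eu d => ((δ * y.1.1, y.1.2), y.2)) (by fun_prop)
  exact hball.sub ((((measurable_quad_smul k l).comp measurable_fst).const_mul α).mul
    ((measurable_avg (isModKernel_bump_one d).meas ha).comp measurable_snd))

namespace IsAdmissible

lemma isOscKernel (h : IsAdmissible ℓ k l K α) {p : ℝ × Eu d} (hp1 : p.1 ∈ Ioc (1 / 2 : ℝ) 1)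
    (hp2 : p.2 ∈ sphere (0 : Eu d) 1) :
    IsOscKernel (oscKernel ℓ k l α p) (K * area d + |α| * 257 * 1)
      (annConst d K + |α| * 257 * bumpConst d) 2 (1 / ((2 * d + 2 : ℕ) + 1)) := by
  have hp1' := Ioc_subset_Icc_self hp1
  have hcoef : |α * quad k l (p.1 • p.2)| ≤ |α| * 257 := by
    rw [abs_mul]
    gcongr
    exact (bddLip_quad k l).bound _
  have hker := h.isModKernel hp2
  have hbump := isModKernel_bump d (2 * d + 2) hp1'
  refine ⟨hker.sub_const_mul hbump hcoef, ?_⟩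
  simp only [oscKernel]
  rw [integral_sub hker.int (hbump.int.const_mul _), integral_const_mul,
    integral_bump d (by linarith [hp1.1]), h.integral_eq _ hp2,
    quad_smul k l hp1' (by simpa using hp2)]
  ring

lemma oscAvg_eq (h : IsAdmissible ℓ k l K α) (ha : BddInt a) {p : ℝ × Eu d}
    (hp1 : p.1 ∈ Ioc (1 / 2 : ℝ) 1) (hp2 : p.2 ∈ sphere (0 : Eu d) 1) (δ : ℝ) (x : Eu d) :
    oscAvg ℓ k l α a δ p x = avg (oscKernel ℓ k l α p) (p.1 * δ) a x := by
  have hbump := isModKernel_bump d (2 * d + 2) (Ioc_subset_Icc_self hp1)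
  unfold oscKernel
  rw [avg_sub_const_mul (h.isModKernel hp2).int hbump.int ha, mul_comm p.1,
    avg_bump (by linarith [hp1.1])]
  rfl

theorem exists_eLpNorm_sum_integral_oscAvg_le (h : IsAdmissible ℓ k l K α) {q : ℝ} (hq : 1 < q) :
    ∃ C : ℝ≥0, ∀ (a g : Eu d → ℝ) (G : ℝ) (n : ℕ), BddInt a → (∀ x, |g x| ≤ G) → 1 ≤ n →
      eLpNorm (fun x => ∑ j ∈ Finset.range n, ∫ p, oscAvg ℓ k l α a ((1 / 2) ^ j) p x *
          g (x + ((1 / 2) ^ j * p.1) • p.2) ∂(shellParam d)) (ENNReal.ofReal q) volume ≤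
        C * (n : ℝ≥0∞) ^ (max 1 (q - 1) / q) * ENNReal.ofReal G *
          eLpNorm a (ENNReal.ofReal q) volume := by
  have : NeZero d := ⟨k.pos.ne'⟩
  have hq0 : 0 < q := by linarith
  have hA := area_pos d
  have hK := h.pos
  have hbump := bumpConst_pos d
  have hann := annConst_pos d hK
  obtain ⟨C, hC⟩ := exists_lintegral_dyadicSum_rpow_le (Eu d)
    (N := K * area d + |α| * 257 * 1) (C₀ := annConst d K + |α| * 257 * bumpConst d) (R := 2)
    (s := 1 / ((2 * d + 2 : ℕ) + 1)) (by positivity) (by positivity) (by norm_num)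
    (by positivity) hq
  refine ⟨(shellParam d univ).toNNReal * C ^ q⁻¹, fun a g G n ha hG hn => ?_⟩
  set Aq := eLpNorm a (ENNReal.ofReal q) volume
  have hosc : ∀ j : ℕ, Measurable fun y : (ℝ × Eu d) × Eu d =>
      oscAvg ℓ k l α a ((1 / 2) ^ j) y.1 y.2 := fun j => measurable_oscAvg h.meas ha.meas _
  have hpow : ((C : ℝ≥0∞) * (n : ℝ≥0∞) ^ max 1 (q - 1)) * Aq ^ q =
      ((C ^ q⁻¹ : ℝ≥0) * (n : ℝ≥0∞) ^ (max 1 (q - 1) / q) * Aq) ^ q := by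
    rw [ENNReal.mul_rpow_of_nonneg _ _ hq0.le, ENNReal.mul_rpow_of_nonneg _ _ hq0.le,
      ← ENNReal.rpow_mul, div_mul_cancel₀ _ hq0.ne', ← ENNReal.coe_rpow_of_nonneg _ hq0.le,
      NNReal.rpow_inv_rpow hq0.ne']
  calc _ ≤ ENNReal.ofReal G * shellParam d univ *
        ((C ^ q⁻¹ : ℝ≥0) * (n : ℝ≥0∞) ^ (max 1 (q - 1) / q) * Aq) := by
        refine eLpNorm_le_of_enorm_le_lintegral hq.le
          (Φ := fun y : Eu d × (ℝ × Eu d) =>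
            ‖∑ j ∈ Finset.range n, |oscAvg ℓ k l α a ((1 / 2) ^ j) y.2 y.1|‖ₑ)
          (Finset.measurable_fun_sum _ fun j _ => ((hosc j).comp measurable_swap).abs).enorm
          (fun x => enorm_sum_integral_mul_le (fun j => (hosc j).comp measurable_prodMk_right)
            (fun j p => hG _) _) ?_
        filter_upwards [ae_shellParam_mem d] with p hp
        simp only [h.oscAvg_eq ha hp.1 hp.2]
        refine (hC _ a p.1 n (h.isOscKernel hp.1 hp.2) ha hn).trans ?_
        rw [← hpow]
        gcongr
        exact (eLpNorm_ofReal_le_iff hq0).1 le_rfl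
    _ = _ := by
        rw [ENNReal.coe_mul, ENNReal.coe_toNNReal (measure_ne_top _ _)]
        ring

end IsAdmissible

end OscAvg

section ScalarSplit

variable {d : ℕ} {ℓ : Eu d → Eu d → ℝ} {a g : Eu d → ℝ} {k l : Fin d} {K α : ℝ}

lemma integrable_quad_smul_mul (k l : Fin d) (hg : BddInt g) (α δ : ℝ) (x : Eu d) :
    Integrable (fun p : ℝ × Eu d => α * quad k l (p.1 • p.2) * g (x + (δ * p.1) • p.2))
      (shellParam d) := by
  obtain ⟨G, hG⟩ := hg.bdd
  refine .of_bound (((measurable_quad_smul k l).const_mul α).mul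
    (hg.meas.comp (by fun_prop))).aestronglyMeasurable (|α| * 257 * G)
    (Eventually.of_forall fun p => ?_)
  rw [Real.norm_eq_abs, abs_mul, abs_mul]
  gcongr
  · exact (bddLip_quad k l).bound _
  · exact hG _

lemma exists_integral_quad_smul_mul_eq (k l : Fin d) : ∃ c : ℝ, ∀ (α δ : ℝ) {g : Eu d → ℝ}
    (x : Eu d), Measurable g →
    ∫ p, α * quad k l (p.1 • p.2) * g (x + (δ * p.1) • p.2) ∂(shellParam d) =
      avg (annKernel (Ioc (1 / 2) 1) fun y => c * α * quad k l y) δ g x := by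
  have : NeZero d := ⟨k.pos.ne'⟩
  obtain ⟨c, hc⟩ := exists_integral_shellParam_eq d
  refine ⟨c, fun α δ g x hg => ?_⟩
  have hpolar := hc (fun y => α * quad k l y * g (x + δ • y))
    (((bddLip_quad k l).continuous.measurable.const_mul α).mul (hg.comp (by fun_prop)))
  simp only [smul_smul] at hpolar
  rw [hpolar, avg]
  congr 1 with y
  by_cases hy : ‖y‖ ∈ Ioc (1 / 2 : ℝ) 1
  · rw [annKernel, indicator_of_mem (show y ∈ shell d from hy), indicator_of_mem hy]
    ring
  · rw [annKernel, indicator_of_notMem (show y ∉ shell d from hy), indicator_of_notMem hy]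
    ring

namespace IsAdmissible

lemma integrable_ballAvg_mul (h : IsAdmissible ℓ k l K α) (ha : BddInt a) (hg : BddInt g) (δ : ℝ)
    (x : Eu d) :
    Integrable (fun p : ℝ × Eu d => ballAvg ℓ a (δ * p.1, p.2) x * g (x + (δ * p.1) • p.2))
      (shellParam d) := by
  obtain ⟨B, hB⟩ := ha.bdd
  obtain ⟨G, hG⟩ := hg.bdd
  have hball : Measurable fun p : ℝ × Eu d => ballAvg ℓ a (δ * p.1, p.2) x :=
    (measurable_ballAvg h.meas ha.meas).comp
      (f := fun p : ℝ × Eu d => ((δ * p.1, p.2), x)) (by fun_prop)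
  refine .of_bound (hball.mul (hg.meas.comp (by fun_prop))).aestronglyMeasurable
    (K * area d * B * G) ?_
  filter_upwards [ae_shellParam_mem d] with p hp
  have hbound := h.abs_ballAvg_le hB (p := (δ * p.1, p.2)) hp.2 x
  rw [Real.norm_eq_abs, abs_mul]
  exact mul_le_mul hbound (hG _) (abs_nonneg _) ((abs_nonneg _).trans hbound)

lemma integral_sphAvg_eq (h : IsAdmissible ℓ k l K α) (ha : BddInt a) (hg : BddInt g) (δ : ℝ)
    (x : Eu d) :
    ∫ ρ, sphAvg ℓ a g (δ * ρ) x ∂dyadicRadius =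
      (∫ p, oscAvg ℓ k l α a δ p x * g (x + (δ * p.1) • p.2) ∂(shellParam d)) +
        avg (bump d 1) δ a x *
          ∫ p, α * quad k l (p.1 • p.2) * g (x + (δ * p.1) • p.2) ∂(shellParam d) := by
  have hball := h.integrable_ballAvg_mul ha hg δ x
  have hquad := integrable_quad_smul_mul k l hg α δ x
  rw [← integral_const_mul, ← integral_add ?_ (hquad.const_mul _)]
  · calc ∫ ρ, sphAvg ℓ a g (δ * ρ) x ∂dyadicRadius
        = ∫ p, ballAvg ℓ a (δ * p.1, p.2) x * g (x + (δ * p.1) • p.2) ∂(shellParam d) :=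
          (integral_prod _ hball).symm
      _ = _ := by
          congr 1 with p
          rw [oscAvg]
          ring
  · refine (hball.sub (hquad.const_mul (avg (bump d 1) δ a x))).congr
      (Eventually.of_forall fun p => ?_)
    simp only [Pi.sub_apply, oscAvg]
    ring

lemma integral_radialWeight_mul_sphAvg_eq (h : IsAdmissible ℓ k l K α) (ha : BddInt a)
    (hg : BddInt g) {t : ℝ} (ht : 0 < t) (n : ℕ) (x : Eu d) :
    ∫ r in Ioc (0 : ℝ) 1, radialWeight d t r * sphAvg ℓ a g r x =
      (∫ r in Ioc (0 : ℝ) 1, radialWeightErr d n t r * sphAvg ℓ a g r x) +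
        (∑ j ∈ Finset.range n, ∫ p, oscAvg ℓ k l α a ((1 / 2) ^ j) p x *
          g (x + ((1 / 2) ^ j * p.1) • p.2) ∂(shellParam d)) +
        ∑ j ∈ Finset.range n, avg (bump d 1) ((1 / 2) ^ j) a x *
          ∫ p, α * quad k l (p.1 • p.2) * g (x + ((1 / 2) ^ j * p.1) • p.2) ∂(shellParam d) := by
  obtain ⟨B, hB⟩ := ha.bdd
  obtain ⟨G, hG⟩ := hg.bdd
  rw [integral_radialWeight_mul_eq d ht (T := fun r => sphAvg ℓ a g r x)
    ((measurable_sphAvg h.meas ha.meas hg.meas).comp measurable_prodMk_right)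
    (fun r => h.abs_sphAvg_le hB hG r x) n, add_assoc, ← Finset.sum_add_distrib]
  simp only [h.integral_sphAvg_eq ha hg]

end IsAdmissible

lemma measurable_sum_integral_oscAvg_mul (hℓ : Measurable fun p : Eu d × Eu d => ℓ p.1 p.2)
    (ha : Measurable a) (hg : Measurable g) (n : ℕ) :
    Measurable fun x => ∑ j ∈ Finset.range n, ∫ p, oscAvg ℓ k l α a ((1 / 2) ^ j) p x *
      g (x + ((1 / 2) ^ j * p.1) • p.2) ∂(shellParam d) := by
  refine Finset.measurable_fun_sum _ fun j _ => ?_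
  have hm : Measurable fun y : Eu d × (ℝ × Eu d) => oscAvg ℓ k l α a ((1 / 2) ^ j) y.2 y.1 *
      g (y.1 + ((1 / 2) ^ j * y.2.1) • y.2.2) :=
    ((measurable_oscAvg hℓ ha _).comp measurable_swap).mul (hg.comp (by fun_prop))
  exact hm.stronglyMeasurable.integral_prod_right'.measurable

lemma measurable_sum_avg_mul_integral_quad (k l : Fin d) (α : ℝ) (ha : Measurable a)
    (hg : Measurable g) (n : ℕ) :
    Measurable fun x => ∑ j ∈ Finset.range n, avg (bump d 1) ((1 / 2) ^ j) a x *
      ∫ p, α * quad k l (p.1 • p.2) * g (x + ((1 / 2) ^ j * p.1) • p.2) ∂(shellParam d) := by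
  refine Finset.measurable_fun_sum _ fun j _ =>
    (measurable_avg (isModKernel_bump_one d).meas ha).mul ?_
  have hm : Measurable fun y : Eu d × (ℝ × Eu d) => α * quad k l (y.2.1 • y.2.2) *
      g (y.1 + ((1 / 2) ^ j * y.2.1) • y.2.2) :=
    (((measurable_quad_smul k l).comp measurable_snd).const_mul α).mul (hg.comp (by fun_prop))
  exact hm.stronglyMeasurable.integral_prod_right'.measurable

lemma exists_quad_paraproduct_split (k l : Fin d) (α : ℝ) {q : ℝ} (hq : 1 < q) :
    ∃ C : ℝ≥0, ∀ (a g : Eu d → ℝ) (G : ℝ) (n : ℕ), Measurable a → BddInt g → 0 < G →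
      (∀ x, |g x| ≤ G) → ∫ x, g x ^ 2 ≤ G ^ 2 → n ≠ 0 →
      ∃ u : Eu d → ℝ, Measurable u ∧
        ∫⁻ x, ‖u x‖ₑ ≤ C * (n : ℝ≥0∞) ^ (max 1 (q - 1) / q) * ENNReal.ofReal G *
          eLpNorm a (ENNReal.ofReal q) volume ∧
        eLpNorm (fun x => (∑ j ∈ Finset.range n, avg (bump d 1) ((1 / 2) ^ j) a x *
            ∫ p, α * quad k l (p.1 • p.2) * g (x + ((1 / 2) ^ j * p.1) • p.2) ∂(shellParam d)) -
              u x) (ENNReal.ofReal q) volume ≤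
          C * (n : ℝ≥0∞) ^ (max 1 (q - 1) / q) * ENNReal.ofReal G *
            eLpNorm a (ENNReal.ofReal q) volume := by
  have : NeZero d := ⟨k.pos.ne'⟩
  obtain ⟨c, hc⟩ := exists_integral_quad_smul_mul_eq k l
  set C := |c * α| + 1
  have : 0 < C := by positivity
  have hA := area_pos d
  have hann := annConst_pos d (K := 2 * C * 514) (by positivity)
  have hker : IsOscKernel (annKernel (Ioc (1 / 2) 1) fun y => c * α * quad k l y)
      (2 * C * 514 * area d) (annConst d (2 * C * 514)) 2 (1 / ((2 * d + 2 : ℕ) + 1)) := by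
    refine ⟨isModKernel_annKernel_quad k l (le_add_of_nonneg_right zero_le_one), ?_⟩
    rw [integral_annKernel_const_mul, integral_annKernel_quad, mul_zero]
  have hbump : ∫⁻ z, ‖bump d 1 z‖ₑ ≤ 1 := by
    rw [← ofReal_integral_norm_eq_lintegral_enorm (isModKernel_bump_one d).int,
      ← ENNReal.ofReal_one]
    exact ENNReal.ofReal_le_ofReal (isModKernel_bump_one d).norm_le
  obtain ⟨C', hC'⟩ := exists_paraproduct_avg_split (Eu d) (N := 2 * C * 514 * area d)
    (C₀ := annConst d (2 * C * 514)) (R := 2) (s := 1 / ((2 * d + 2 : ℕ) + 1)) (by positivity)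
    hann two_pos (by positivity) hq
  refine ⟨C', fun a g G n ha hg hG0 hG hg2 hn => ?_⟩
  simpa only [one_mul, hc _ _ _ hg.meas] using hC' (bump d 1) _ a g 1 G n
    (isModKernel_bump_one d).meas hbump hker ha hg hG0 hG hg2 hn

theorem IsAdmissible.exists_split (h : IsAdmissible ℓ k l K α) {q : ℝ} (hq : 1 < q) :
    ∃ C : ℝ≥0, ∀ (a g : Eu d → ℝ) (t G : ℝ) (n : ℕ), BddInt a → BddInt g → 0 < G →
      (∀ x, |g x| ≤ G) → ∫ x, g x ^ 2 ≤ G ^ 2 → n ≠ 0 → (1 / 2 : ℝ) ^ n ≤ t →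
      t ≤ 2 * (1 / 2 : ℝ) ^ n →
      ∃ u : Eu d → ℝ, Measurable u ∧
        ∫⁻ x, ‖u x‖ₑ ≤ C * (n : ℝ≥0∞) ^ (max 1 (q - 1) / q) * ENNReal.ofReal G *
          eLpNorm a (ENNReal.ofReal q) volume ∧
        eLpNorm (fun x => (∫ r in Ioc (0 : ℝ) 1, radialWeight d t r * sphAvg ℓ a g r x) - u x)
          (ENNReal.ofReal q) volume ≤ C * (n : ℝ≥0∞) ^ (max 1 (q - 1) / q) * ENNReal.ofReal G *
          eLpNorm a (ENNReal.ofReal q) volume := by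
  obtain ⟨C₁, hC₁⟩ := h.exists_eLpNorm_sum_integral_oscAvg_le hq
  obtain ⟨C₂, hC₂⟩ := exists_quad_paraproduct_split k l α hq
  set C₃ : ℝ≥0∞ := ENNReal.ofReal (3 * (d + 1)) * surf d univ * ENNReal.ofReal (K * area d)
  have hC₃ : C₃ ≠ ⊤ := by finiteness
  refine ⟨C₃.toNNReal + C₁ + C₂, fun a g t G n ha hg hG0 hG hg2 hn hnt hnt' => ?_⟩
  rw [ENNReal.coe_add, ENNReal.coe_add, ENNReal.coe_toNNReal hC₃]
  obtain ⟨u, hu, hu1, huq⟩ := hC₂ a g G n ha.meas hg hG0 hG hg2 hn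
  refine ⟨u, hu, hu1.trans (by gcongr; exact le_add_self), ?_⟩
  set Aq := eLpNorm a (ENNReal.ofReal q) volume
  set E : Eu d → ℝ := fun x => ∫ r in Ioc (0 : ℝ) 1, radialWeightErr d n t r * sphAvg ℓ a g r x
  set V : Eu d → ℝ := fun x => ∑ j ∈ Finset.range n, ∫ p,
    oscAvg ℓ k l α a ((1 / 2) ^ j) p x * g (x + ((1 / 2) ^ j * p.1) • p.2) ∂(shellParam d)
  have hn1 : (1 : ℝ≥0∞) ≤ (n : ℝ≥0∞) ^ (max 1 (q - 1) / q) :=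
    ENNReal.one_le_rpow (by exact_mod_cast Nat.one_le_iff_ne_zero.2 hn) (by positivity)
  have hE : eLpNorm E (ENNReal.ofReal q) volume ≤
      C₃ * (n : ℝ≥0∞) ^ (max 1 (q - 1) / q) * ENNReal.ofReal G * Aq := by
    refine (h.eLpNorm_integral_radialWeightErr_le hq.le ha.meas hG hnt hnt').trans ?_
    have : C₃ ≤ C₃ * (n : ℝ≥0∞) ^ (max 1 (q - 1) / q) := le_mul_of_one_le_right zero_le hn1
    gcongr
  have hEm : AEStronglyMeasurable E volume := (measurable_setIntegral_mul_sphAvg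
    (measurable_radialWeightErr d n t) h.meas ha.meas hg.meas _).aestronglyMeasurable
  have hVm : AEStronglyMeasurable V volume :=
    (measurable_sum_integral_oscAvg_mul h.meas ha.meas hg.meas n).aestronglyMeasurable
  have hWm := ((measurable_sum_avg_mul_integral_quad k l α ha.meas hg.meas n).sub
    hu).aestronglyMeasurable (μ := volume)
  have h1q : 1 ≤ ENNReal.ofReal q := by simpa only [ENNReal.one_le_ofReal] using hq.le
  have ht : 0 < t := lt_of_lt_of_le (by positivity) hnt
  simp only [h.integral_radialWeight_mul_sphAvg_eq ha hg ht n, add_sub_assoc]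
  refine (eLpNorm_add_le (hEm.add hVm) hWm h1q).trans ?_
  refine (add_le_add ((eLpNorm_add_le hEm hVm h1q).trans (add_le_add hE
    (hC₁ a g G n ha hG (Nat.one_le_iff_ne_zero.2 hn)))) huq).trans_eq ?_
  ring

end ScalarSplit

/-! ### Reduction of `Qop` to its entries -/

lemma exists_lipschitzWith_abs_le_eqOn {X : Type*} [PseudoMetricSpace X] {f : X → ℝ} {s : Set X}
    {K : ℝ≥0} {M : ℝ} (hM : 0 ≤ M) (hf : LipschitzOnWith K f s) (hfM : ∀ x ∈ s, |f x| ≤ M) :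
    ∃ F : X → ℝ, LipschitzWith K F ∧ (∀ x, |F x| ≤ M) ∧ EqOn F f s := by
  obtain ⟨F, hF, hfF⟩ := hf.extend_real
  refine ⟨fun x => clamp M (F x), (hF.const_min M).const_max (-M), fun x => abs_clamp_le hM _,
    fun x hx => ?_⟩
  have hx' : f x = F x := hfF hx
  exact (clamp_of_abs_le (hx' ▸ hfM x hx)).trans hx'.symm

section Kernel

variable {d : ℕ} {L : Eu d → Eu d → EuclideanSpace ℝ (Fin d × Fin d)}

lemma rpow_norm_mul_eq_annKernel {ℓ : Eu d → ℝ} {z : Eu d} (hz : z ∈ ball (0 : Eu d) 1)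
    (hz0 : z ≠ 0) {b : ℝ} (hℓ : ℓ z = ‖z‖ * b) :
    ‖z‖ ^ (1 - (d : ℝ)) * b = annKernel (Ioo 0 1) ℓ z := by
  have hnorm : 0 < ‖z‖ := norm_pos_iff.2 hz0
  rw [annKernel, indicator_of_mem (show ‖z‖ ∈ Ioo (0 : ℝ) 1 from ⟨hnorm, by simpa using hz⟩), hℓ,
    Real.rpow_sub hnorm, Real.rpow_one, Real.rpow_natCast]
  field_simp

lemma annKernel_Ioo_eq_zero (ℓ : Eu d → ℝ) {z : Eu d} (hz : z ∉ ball (0 : Eu d) 1) :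
    annKernel (Ioo 0 1) ℓ z = 0 :=
  annKernel_eq_zero fun h => hz (by simpa using h.2)

lemma setIntegral_rpow_norm_mul_eq [NeZero d] {ℓ b : Eu d → ℝ}
    (hℓ : ∀ z ∈ ball (0 : Eu d) 1, ℓ z = ‖z‖ * b z) :
    ∫ z in ball (0 : Eu d) 1, ‖z‖ ^ (1 - (d : ℝ)) * b z = ∫ z, annKernel (Ioo 0 1) ℓ z := by
  rw [← setIntegral_eq_integral_of_forall_compl_eq_zero (s := ball (0 : Eu d) 1)
    fun z => annKernel_Ioo_eq_zero ℓ]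
  refine setIntegral_congr_ae measurableSet_ball ?_
  filter_upwards [Measure.ae_ne volume (0 : Eu d)] with z hz0 hz
  exact rpow_norm_mul_eq_annKernel hz hz0 (hℓ z hz)

lemma lipschitzOnWith_norm_mul_apply {K : ℝ≥0} {s : Set (Eu d × Eu d)}
    (hL : LipschitzOnWith K (fun p => ‖p.1‖ • L p.1 p.2) s) (i : Fin d × Fin d) :
    LipschitzOnWith K (fun p => ‖p.1‖ * L p.1 p.2 i) s := by
  refine LipschitzOnWith.of_dist_le_mul fun x hx y hy => ?_
  refine le_trans ?_ (hL.dist_le_mul x hx y hy)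
  rw [dist_eq_norm, dist_eq_norm]
  exact PiLp.norm_apply_le (‖x.1‖ • L x.1 x.2 - ‖y.1‖ • L y.1 y.2) i

lemma abs_norm_mul_le_of_lipschitzOnWith {b : Eu d → Eu d → ℝ} {K : ℝ≥0}
    (hb : LipschitzOnWith K (fun p : Eu d × Eu d => ‖p.1‖ * b p.1 p.2) (ball 0 1 ×ˢ sphere 0 1))
    {z ω : Eu d} (hz : z ∈ ball (0 : Eu d) 1) (hω : ω ∈ sphere (0 : Eu d) 1) :
    |‖z‖ * b z ω| ≤ K * ‖z‖ := by
  have h := hb.dist_le_mul (z, ω) ⟨hz, hω⟩ (0, ω) ⟨mem_ball_self one_pos, hω⟩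
  simpa [Prod.dist_eq] using h

lemma exists_isAdmissible {b : Eu d → Eu d → ℝ} {K : ℝ≥0}
    (hb : LipschitzOnWith K (fun p : Eu d × Eu d => ‖p.1‖ * b p.1 p.2) (ball 0 1 ×ˢ sphere 0 1))
    {α : ℝ} (k l : Fin d)
    (hcanc : ∀ ω ∈ sphere (0 : Eu d) 1, ∫ z in ball (0 : Eu d) 1, ‖z‖ ^ (1 - (d : ℝ)) * b z ω =
      α * (ω k * ω l - if k = l then 1 / (d : ℝ) else 0)) :
    ∃ ℓ : Eu d → Eu d → ℝ, IsAdmissible ℓ k l (K + 1) α ∧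
      ∀ z ∈ ball (0 : Eu d) 1, ∀ ω ∈ sphere (0 : Eu d) 1, ℓ z ω = ‖z‖ * b z ω := by
  have : NeZero d := ⟨k.pos.ne'⟩
  have hle : ∀ p ∈ ball (0 : Eu d) 1 ×ˢ sphere (0 : Eu d) 1, |‖p.1‖ * b p.1 p.2| ≤ K :=
    fun p hp => (abs_norm_mul_le_of_lipschitzOnWith hb hp.1 hp.2).trans <|
      mul_le_of_le_one_right K.2 (mem_ball_zero_iff.1 hp.1).le
  obtain ⟨F, hF, hFK, hFb⟩ := exists_lipschitzWith_abs_le_eqOn K.2 hb hle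
  have heq : ∀ z ∈ ball (0 : Eu d) 1, ∀ ω ∈ sphere (0 : Eu d) 1, F (z, ω) = ‖z‖ * b z ω :=
    fun z hz ω hω => hFb (mk_mem_prod hz hω)
  have hK : (K : ℝ) ≤ K + 1 := by linarith
  refine ⟨fun z ω => F (z, ω), ⟨by positivity, hF.continuous.measurable,
    fun ω => ⟨fun z => (hFK _).trans hK, fun z z' => ?_⟩, fun ω hω z hz => ?_, fun ω hω => ?_⟩, heq⟩
  · refine (hF.dist_le_mul (z, ω) (z', ω)).trans ?_
    rw [Prod.dist_eq, dist_self, max_eq_left dist_nonneg, dist_eq_norm]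
    gcongr
  · rw [heq z hz ω hω]
    exact (abs_norm_mul_le_of_lipschitzOnWith hb hz hω).trans (by gcongr)
  · rw [← hcanc ω hω, setIntegral_rpow_norm_mul_eq fun z hz => heq z hz ω hω]

end Kernel

section EntrySum

variable {d : ℕ} {ℓ : Eu d → Eu d → ℝ} {k l : Fin d} {K α : ℝ} {a g : Eu d → ℝ}

/-- The integrand of `sphAvg ℓ a g r x`, as a function of the pair `y = (z, ω)`. -/
noncomputable def sphIntegrand (ℓ : Eu d → Eu d → ℝ) (a g : Eu d → ℝ) (r : ℝ) (x : Eu d)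
    (y : Eu d × Eu d) : ℝ :=
  annKernel (Ioo 0 1) (fun z => ℓ z y.2) y.1 * a (x + r • y.1) * g (x + r • y.2)

lemma sphIntegrand_eq_zero (ℓ : Eu d → Eu d → ℝ) (a g : Eu d → ℝ) (r : ℝ) (x : Eu d) {z : Eu d}
    (hz : z ∉ ball (0 : Eu d) 1) (ω : Eu d) : sphIntegrand ℓ a g r x (z, ω) = 0 := by
  rw [sphIntegrand, annKernel_Ioo_eq_zero _ hz, zero_mul, zero_mul]

lemma measurable_sphIntegrand (hℓ : Measurable fun p : Eu d × Eu d => ℓ p.1 p.2)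
    (ha : Measurable a) (hg : Measurable g) (r : ℝ) (x : Eu d) :
    Measurable (sphIntegrand ℓ a g r x) :=
  ((measurable_annKernel_uncurry measurableSet_Ioo hℓ).mul (ha.comp (by fun_prop))).mul
    (hg.comp (by fun_prop))

namespace IsAdmissible

lemma integrable_sphIntegrand (h : IsAdmissible ℓ k l K α) (ha : BddInt a) (hg : BddInt g)
    (r : ℝ) (x : Eu d) : Integrable (sphIntegrand ℓ a g r x) (volume.prod (surf d)) := by
  obtain ⟨B, hB⟩ := ha.bdd
  obtain ⟨G, hG⟩ := hg.bdd
  have hB0 := (abs_nonneg _).trans (hB 0)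
  have hm := measurable_sphIntegrand h.meas ha.meas hg.meas r x
  have hslice : ∀ᵐ ω ∂(surf d), Integrable fun z => sphIntegrand ℓ a g r x (z, ω) := by
    filter_upwards [ae_surf_mem_sphere d] with ω hω
    exact (ha.integrable_kernel_mul (h.isModKernel hω).int r x).mul_const (g (x + r • ω))
  rw [integrable_prod_iff' hm.aestronglyMeasurable]
  refine ⟨hslice, .of_bound hm.norm.stronglyMeasurable.integral_prod_left'.aestronglyMeasurable
    (K * area d * (B * G)) ?_⟩
  filter_upwards [ae_surf_mem_sphere d, hslice] with ω hω hint
  have hker := h.isModKernel hω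
  rw [Real.norm_of_nonneg (integral_nonneg fun _ => norm_nonneg _)]
  calc ∫ z, ‖sphIntegrand ℓ a g r x (z, ω)‖
      ≤ ∫ z, |annKernel (Ioo 0 1) (fun z => ℓ z ω) z| * (B * G) := by
        refine integral_mono hint.norm (hker.int.abs.mul_const _) fun z => ?_
        simp only [sphIntegrand, norm_mul, Real.norm_eq_abs, mul_assoc]
        gcongr
        · exact hB _
        · exact hG _
    _ ≤ K * area d * (B * G) := by
        have hG0 := (abs_nonneg _).trans (hG 0)
        rw [integral_mul_const]
        gcongr
        exact hker.norm_le

lemma integral_sphIntegrand (h : IsAdmissible ℓ k l K α) (ha : BddInt a) (hg : BddInt g)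
    (r : ℝ) (x : Eu d) :
    ∫ y, sphIntegrand ℓ a g r x y ∂(volume.prod (surf d)) = sphAvg ℓ a g r x := by
  rw [integral_prod_symm _ (h.integrable_sphIntegrand ha hg r x)]
  simp only [sphIntegrand, integral_mul_const]
  rfl

lemma integrableOn_radialWeight_mul_sphAvg (h : IsAdmissible ℓ k l K α) (ha : BddInt a)
    (hg : BddInt g) {t : ℝ} (ht : 0 < t) (x : Eu d) :
    IntegrableOn (fun r => radialWeight d t r * sphAvg ℓ a g r x) (Ioc 0 1) := by
  obtain ⟨B, hB⟩ := ha.bdd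
  obtain ⟨G, hG⟩ := hg.bdd
  exact integrableOn_radialWeight_mul d ht
    ((measurable_sphAvg h.meas ha.meas hg.meas).comp measurable_prodMk_right)
    fun r => h.abs_sphAvg_le hB hG r x

end IsAdmissible

end EntrySum

section Contraction

variable {d : ℕ} {L : Eu d → Eu d → EuclideanSpace ℝ (Fin d × Fin d)}
  {A : Eu d → EuclideanSpace ℝ (Fin d × Fin d)} {g : Eu d → ℝ}
  {ℓ : Fin d × Fin d → Eu d → Eu d → ℝ} {K : Fin d × Fin d → ℝ} {α t : ℝ}

lemma setIntegral_contraction_eq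
    (hℓ : ∀ i, ∀ z ∈ ball (0 : Eu d) 1, ∀ ω ∈ sphere (0 : Eu d) 1, ℓ i z ω = ‖z‖ * L z ω i)
    (r : ℝ) (x : Eu d) {z : Eu d} (hz : z ∈ ball (0 : Eu d) 1) (hz0 : z ≠ 0) :
    ∫ ω in sphere (0 : Eu d) 1, (r ^ d / (r + t) ^ (d + 1)) * (‖z‖ ^ (1 - (d : ℝ))) *
        (∑ i, L z ω i * A (x + r • z) i) * g (x + r • ω) ∂(μH[(d : ℝ) - 1]) =
      radialWeight d t r *
        ∫ ω, ∑ i, sphIntegrand (ℓ i) (fun x => A x i) g r x (z, ω) ∂(surf d) := by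
  rw [← integral_const_mul, surf]
  refine setIntegral_congr_fun isClosed_sphere.measurableSet fun ω hω => ?_
  simp only [sphIntegrand, radialWeight, Finset.mul_sum, Finset.sum_mul]
  refine Finset.sum_congr rfl fun i _ => ?_
  rw [← rpow_norm_mul_eq_annKernel (ℓ := fun z => ℓ i z ω) hz hz0 (hℓ i z hz ω hω)]
  ring

lemma setIntegral_setIntegral_contraction_eq [NeZero d]
    (hadm : ∀ i, IsAdmissible (ℓ i) i.1 i.2 (K i) α)
    (hℓ : ∀ i, ∀ z ∈ ball (0 : Eu d) 1, ∀ ω ∈ sphere (0 : Eu d) 1, ℓ i z ω = ‖z‖ * L z ω i)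
    (hA : ∀ i, BddInt fun x => A x i) (hg : BddInt g) (r : ℝ) (x : Eu d) :
    ∫ z in ball (0 : Eu d) 1, ∫ ω in sphere (0 : Eu d) 1,
        (r ^ d / (r + t) ^ (d + 1)) * (‖z‖ ^ (1 - (d : ℝ))) *
          (∑ i, L z ω i * A (x + r • z) i) * g (x + r • ω) ∂(μH[(d : ℝ) - 1]) =
      radialWeight d t r * ∑ i, sphAvg (ℓ i) (fun x => A x i) g r x := by
  have hint : ∀ i, Integrable (sphIntegrand (ℓ i) (fun x => A x i) g r x)
      (volume.prod (surf d)) := fun i => (hadm i).integrable_sphIntegrand (hA i) hg r x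
  calc _ = ∫ z in ball (0 : Eu d) 1, radialWeight d t r *
        ∫ ω, ∑ i, sphIntegrand (ℓ i) (fun x => A x i) g r x (z, ω) ∂(surf d) := by
        refine setIntegral_congr_ae measurableSet_ball ?_
        filter_upwards [Measure.ae_ne volume (0 : Eu d)] with z hz0 hz
        exact setIntegral_contraction_eq hℓ r x hz hz0
    _ = radialWeight d t r * ∫ z,
        ∫ ω, ∑ i, sphIntegrand (ℓ i) (fun x => A x i) g r x (z, ω) ∂(surf d) := by
        rw [integral_const_mul, setIntegral_eq_integral_of_forall_compl_eq_zero fun z hz => ?_]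
        simp only [sphIntegrand_eq_zero _ _ _ _ _ hz, Finset.sum_const_zero, integral_zero]
    _ = radialWeight d t r * ∑ i, sphAvg (ℓ i) (fun x => A x i) g r x := by
        rw [← integral_prod (fun y => ∑ i, sphIntegrand (ℓ i) (fun x => A x i) g r x y)
          (integrable_finsetSum _ fun i _ => hint i), integral_finsetSum _ fun i _ => hint i]
        exact congrArg _ (Finset.sum_congr rfl fun i _ =>
          (hadm i).integral_sphIntegrand (hA i) hg r x)

theorem Qop_eq_sum [NeZero d] (ht : 0 < t) (hadm : ∀ i, IsAdmissible (ℓ i) i.1 i.2 (K i) α)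
    (hℓ : ∀ i, ∀ z ∈ ball (0 : Eu d) 1, ∀ ω ∈ sphere (0 : Eu d) 1, ℓ i z ω = ‖z‖ * L z ω i)
    (hA : ∀ i, BddInt fun x => A x i) (hg : BddInt g) (x : Eu d) :
    Qop d t L A g x =
      ∑ i, ∫ r in Ioc (0 : ℝ) 1, radialWeight d t r * sphAvg (ℓ i) (fun x => A x i) g r x := by
  rw [← integral_finsetSum _ fun i _ =>
    (hadm i).integrableOn_radialWeight_mul_sphAvg (hA i) hg ht x, Qop]
  simp only [← Finset.mul_sum, setIntegral_setIntegral_contraction_eq hadm hℓ hA hg]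

end Contraction

/-- The norm `‖g‖_∞ + ‖g‖₂`, where `‖g‖_∞` is the supremum over all points: the spherical averages
in `Qop` see the values of `g` on null sets. -/
noncomputable def supAddL2 {X : Type*} [MeasureSpace X] (g : X → ℝ) : ℝ≥0∞ :=
  (⨆ x, ‖g x‖ₑ) + eLpNorm g 2 volume

namespace BddInt

variable {X : Type*} [MeasureSpace X] {g : X → ℝ}

lemma eLpNorm_two_sq (hg : BddInt g) : eLpNorm g 2 volume ^ 2 = ENNReal.ofReal (∫ x, g x ^ 2) := by
  rw [← hg.lintegral_enorm_rpow_two, ← ENNReal.rpow_two]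
  simpa using eLpNorm_nnreal_pow_eq_lintegral (p := 2) (f := g) (μ := volume) two_ne_zero

lemma supAddL2_ne_top (hg : BddInt g) : supAddL2 g ≠ ⊤ := by
  obtain ⟨B, hB⟩ := hg.bdd
  have hsup : (⨆ x, ‖g x‖ₑ) ≤ ENNReal.ofReal B := iSup_le fun x => by
    rw [Real.enorm_eq_ofReal_abs]
    exact ENNReal.ofReal_le_ofReal (hB x)
  have hsq : eLpNorm g 2 volume ^ 2 ≠ ⊤ := hg.eLpNorm_two_sq ▸ ENNReal.ofReal_ne_top
  exact ENNReal.add_ne_top.2 ⟨ne_top_of_le_ne_top ENNReal.ofReal_ne_top hsup,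
    fun h => hsq (by rw [h, ENNReal.top_pow two_ne_zero])⟩

lemma abs_le_toReal_supAddL2 (hg : BddInt g) (x : X) : |g x| ≤ (supAddL2 g).toReal := by
  rw [← Real.norm_eq_abs, ← toReal_enorm]
  exact ENNReal.toReal_mono hg.supAddL2_ne_top
    ((le_iSup (fun x => ‖g x‖ₑ) x).trans le_self_add)

lemma integral_sq_le_toReal_supAddL2_sq (hg : BddInt g) :
    ∫ x, g x ^ 2 ≤ (supAddL2 g).toReal ^ 2 := by
  rw [← ENNReal.ofReal_le_ofReal_iff (by positivity), ← hg.eLpNorm_two_sq,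
    ENNReal.ofReal_pow ENNReal.toReal_nonneg, ENNReal.ofReal_toReal hg.supAddL2_ne_top]
  gcongr
  exact le_add_self

end BddInt

lemma enorm_le_eLpNorm_top {X F : Type*} [TopologicalSpace X] [MeasurableSpace X]
    [SeminormedAddCommGroup F] {μ : Measure X} [μ.IsOpenPosMeasure] {f : X → F} (hf : Continuous f)
    (x : X) : ‖f x‖ₑ ≤ eLpNorm f ⊤ μ := by
  have hae : ∀ᵐ y ∂μ, ‖f y‖ₑ ≤ eLpNorm f ⊤ μ := by
    rw [eLpNorm_exponent_top]
    exact enorm_ae_le_eLpNormEssSup f μ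
  exact (isClosed_le hf.enorm continuous_const).closure_subset (Measure.dense_of_ae hae x)

lemma supAddL2_le_of_continuous {X : Type*} [TopologicalSpace X] [MeasureSpace X]
    [(volume : Measure X).IsOpenPosMeasure] {g : X → ℝ} (hg : Continuous g) :
    supAddL2 g ≤ eLpNorm g ⊤ volume + eLpNorm g 2 volume :=
  add_le_add_left (iSup_le fun x => enorm_le_eLpNorm_top hg x) _

lemma bddInt_schwartzMap {d : ℕ} (g : SchwartzMap (Eu d) ℝ) : BddInt g :=
  ⟨g.continuous.measurable, g.integrable, SchwartzMap.seminorm ℝ 0 0 g, g.norm_le_seminorm ℝ⟩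

lemma bddInt_schwartzMap_apply {d : ℕ} {ι : Type*} [Fintype ι]
    (A : SchwartzMap (Eu d) (EuclideanSpace ℝ ι)) (i : ι) : BddInt fun x => A x i :=
  bddInt_schwartzMap (SchwartzMap.postcompCLM (EuclideanSpace.proj (𝕜 := ℝ) i) A)

lemma exists_dyadic_scale {t : ℝ} (ht : t ∈ Ioo (0 : ℝ) (1 / 2)) :
    ∃ n : ℕ, n ≠ 0 ∧ (1 / 2 : ℝ) ^ n ≤ t ∧ t ≤ 2 * (1 / 2 : ℝ) ^ n ∧
      (n : ℝ) ≤ 2 / Real.log 2 * |Real.log t| := by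
  obtain ⟨m, hmt, htm⟩ := exists_nat_pow_near_of_lt_one ht.1 (ht.2.le.trans (by norm_num))
    (by norm_num : (0 : ℝ) < 1 / 2) (by norm_num)
  have hm : m ≠ 0 := fun h => by
    rw [h, zero_add, pow_one] at hmt
    exact hmt.not_gt ht.2
  have hm1 : (1 : ℝ) ≤ m := by exact_mod_cast Nat.one_le_iff_ne_zero.2 hm
  have hlog2 : 0 < Real.log 2 := Real.log_pos one_lt_two
  have hlog : m * Real.log 2 ≤ |Real.log t| := by
    have h := Real.log_le_log ht.1 htm
    rw [Real.log_pow, one_div, Real.log_inv] at h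
    linarith [neg_le_abs (Real.log t)]
  refine ⟨m + 1, m.succ_ne_zero, hmt.le, htm.trans_eq (by ring), ?_⟩
  rw [div_mul_eq_mul_div, le_div_iff₀ hlog2, Nat.cast_add_one]
  nlinarith

lemma max_div_eq_one_div_min {q : ℝ} (hq : 1 < q) :
    max 1 (q - 1) / q = 1 / min q (q / (q - 1)) := by
  have h1 : 0 < q - 1 := by linarith
  rcases le_total q 2 with h | h
  · rw [max_eq_left (by linarith), min_eq_left]
    rw [le_div_iff₀ h1]
    nlinarith
  · rw [max_eq_right (by linarith), min_eq_right, one_div_div]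
    rw [div_le_iff₀ h1]
    nlinarith

lemma natCast_rpow_le_ofReal {n : ℕ} {b c γ : ℝ} (hb : 0 ≤ b) (hγ : 0 ≤ γ) (hn : (n : ℝ) ≤ c * b)
    (hc : 0 ≤ c) : (n : ℝ≥0∞) ^ γ ≤ ENNReal.ofReal (c ^ γ * b ^ γ) := by
  rw [← Real.mul_rpow hc hb, ← ENNReal.ofReal_natCast,
    ENNReal.ofReal_rpow_of_nonneg n.cast_nonneg hγ]
  gcongr

lemma exists_eLpNorm_add_eLpNorm_sum_le {X ι : Type*} [MeasurableSpace X] [Fintype ι]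
    {μ : Measure X} {p : ℝ≥0∞} (hp : 1 ≤ p) {S u : ι → X → ℝ} {C : ι → ℝ≥0∞} {M : ℝ≥0∞}
    (hS : ∀ i, Measurable (S i)) (hu : ∀ i, Measurable (u i))
    (hu1 : ∀ i, ∫⁻ x, ‖u i x‖ₑ ∂μ ≤ C i * M)
    (hSu : ∀ i, eLpNorm (fun x => S i x - u i x) p μ ≤ C i * M) :
    ∃ U V : X → ℝ, Measurable U ∧ Measurable V ∧ (∀ x, ∑ i, S i x = U x + V x) ∧
      eLpNorm U 1 μ + eLpNorm V p μ ≤ 2 * (∑ i, C i) * M := by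
  have hV : ∀ i, Measurable fun x => S i x - u i x := fun i => (hS i).sub (hu i)
  refine ⟨∑ i, u i, ∑ i, fun x => S i x - u i x,
    by simpa only [Finset.sum_fn] using Finset.measurable_sum _ fun i _ => hu i,
    by simpa only [Finset.sum_fn] using Finset.measurable_sum _ fun i _ => hV i,
    fun x => ?_, ?_⟩
  · rw [Finset.sum_apply, Finset.sum_apply, Finset.sum_sub_distrib, add_sub_cancel]
  · rw [two_mul, add_mul, Finset.sum_mul]
    refine add_le_add ?_ ?_
    · refine (eLpNorm_sum_le (fun i _ => (hu i).aestronglyMeasurable) le_rfl).trans ?_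
      simp only [eLpNorm_one_eq_lintegral_enorm]
      exact Finset.sum_le_sum fun i _ => hu1 i
    · exact (eLpNorm_sum_le (fun i _ => (hV i).aestronglyMeasurable) hp).trans
        (Finset.sum_le_sum fun i _ => hSu i)

section Assembly

variable {d : ℕ} {L : Eu d → Eu d → EuclideanSpace ℝ (Fin d × Fin d)}

lemma exists_Qop_split [NeZero d] {ℓ : Fin d × Fin d → Eu d → Eu d → ℝ} {K : Fin d × Fin d → ℝ}
    {α : ℝ} (hadm : ∀ i, IsAdmissible (ℓ i) i.1 i.2 (K i) α)
    (hℓ : ∀ i, ∀ z ∈ ball (0 : Eu d) 1, ∀ ω ∈ sphere (0 : Eu d) 1, ℓ i z ω = ‖z‖ * L z ω i)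
    {q : ℝ} (hq : 1 < q) :
    ∃ C : ℝ≥0, ∀ (A : Eu d → EuclideanSpace ℝ (Fin d × Fin d)) (g : Eu d → ℝ) (t G : ℝ) (n : ℕ),
      (∀ i, BddInt fun x => A x i) → BddInt g → 0 < G → (∀ x, |g x| ≤ G) →
      ∫ x, g x ^ 2 ≤ G ^ 2 → n ≠ 0 → (1 / 2 : ℝ) ^ n ≤ t → t ≤ 2 * (1 / 2 : ℝ) ^ n →
      ∃ u v : Eu d → ℝ, Measurable u ∧ Measurable v ∧ (∀ x, Qop d t L A g x = u x + v x) ∧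
        eLpNorm u 1 volume + eLpNorm v (ENNReal.ofReal q) volume ≤
          C * ((n : ℝ≥0∞) ^ (max 1 (q - 1) / q) * ENNReal.ofReal G *
            eLpNorm A (ENNReal.ofReal q) volume) := by
  choose C hC using fun i => (hadm i).exists_split hq
  refine ⟨2 * ∑ i, C i, fun A g t G n hA hg hG0 hG hg2 hn hnt htn => ?_⟩
  choose u hu hu1 huq using fun i =>
    hC i (fun x => A x i) g t G n (hA i) hg hG0 hG hg2 hn hnt htn
  have hbound : ∀ i, C i * (n : ℝ≥0∞) ^ (max 1 (q - 1) / q) * ENNReal.ofReal G *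
      eLpNorm (fun x => A x i) (ENNReal.ofReal q) volume ≤
      C i * ((n : ℝ≥0∞) ^ (max 1 (q - 1) / q) * ENNReal.ofReal G *
        eLpNorm A (ENNReal.ofReal q) volume) := fun i => by
    rw [mul_assoc, mul_assoc, mul_assoc]
    gcongr
    exact eLpNorm_mono fun x => PiLp.norm_apply_le (A x) i
  have ht : 0 < t := lt_of_lt_of_le (by positivity) hnt
  simp only [Qop_eq_sum ht hadm hℓ hA hg]
  push_cast
  exact exists_eLpNorm_add_eLpNorm_sum_le (by simpa using hq.le)
    (fun i => measurable_setIntegral_mul_sphAvg (measurable_radialWeight d t) (hadm i).meas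
      (hA i).meas hg.meas _) hu (fun i => (hu1 i).trans (hbound i))
    fun i => (huq i).trans (hbound i)

theorem exists_Qop_split_dyadic [NeZero d]
    (hLlip : ∃ K : ℝ≥0, LipschitzOnWith K (fun p : Eu d × Eu d => ‖p.1‖ • L p.1 p.2)
      (ball 0 1 ×ˢ sphere 0 1))
    (hcanc : ∃ α : ℝ, ∀ ω ∈ sphere (0 : Eu d) 1, ∀ k l : Fin d,
      ∫ z in ball (0 : Eu d) 1, ‖z‖ ^ (1 - (d : ℝ)) * L z ω (k, l) =
        α * (ω k * ω l - if k = l then 1 / (d : ℝ) else 0)) {q : ℝ} (hq : 1 < q) :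
    ∃ C : ℝ≥0, ∀ (A : Eu d → EuclideanSpace ℝ (Fin d × Fin d)) (g : Eu d → ℝ) (t : ℝ) (n : ℕ),
      (∀ i, BddInt fun x => A x i) → BddInt g → n ≠ 0 → (1 / 2 : ℝ) ^ n ≤ t →
      t ≤ 2 * (1 / 2 : ℝ) ^ n →
      ∃ u v : Eu d → ℝ, Measurable u ∧ Measurable v ∧ (∀ x, Qop d t L A g x = u x + v x) ∧
        eLpNorm u 1 volume + eLpNorm v (ENNReal.ofReal q) volume ≤
          C * ((n : ℝ≥0∞) ^ (max 1 (q - 1) / q) * supAddL2 g *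
            eLpNorm A (ENNReal.ofReal q) volume) := by
  obtain ⟨K, hK⟩ := hLlip
  obtain ⟨α, hα⟩ := hcanc
  choose ℓ hadm hℓ using fun i : Fin d × Fin d =>
    exists_isAdmissible (lipschitzOnWith_norm_mul_apply hK i) i.1 i.2 fun ω hω => hα ω hω i.1 i.2
  obtain ⟨C, hC⟩ := exists_Qop_split hadm hℓ hq
  refine ⟨C, fun A g t n hA hg hn hnt htn => ?_⟩
  rcases (ENNReal.toReal_nonneg (a := supAddL2 g)).eq_or_lt with hG0 | hG0
  · have hg0 : ∀ x, g x = 0 := fun x => abs_nonpos_iff.1 (hG0 ▸ hg.abs_le_toReal_supAddL2 x)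
    exact ⟨0, 0, measurable_zero, measurable_zero, fun x => by simp [Qop, hg0], by simp⟩
  · obtain ⟨u, v, hu, hv, huv, hle⟩ := hC A g t _ n hA hg hG0 hg.abs_le_toReal_supAddL2
      hg.integral_sq_le_toReal_supAddL2_sq hn hnt htn
    rw [ENNReal.ofReal_toReal hg.supAddL2_ne_top] at hle
    exact ⟨u, v, hu, hv, huv, hle⟩

end Assembly

end QopBound

open QopBound

theorem Qop_L1_plus_Lq_bound_general (d : ℕ) [NeZero d]
    (L : EuclideanSpace ℝ (Fin d) → EuclideanSpace ℝ (Fin d) → EuclideanSpace ℝ (Fin d × Fin d))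
    (hLlip : ∃ K : ℝ≥0, LipschitzOnWith K
      (fun p : EuclideanSpace ℝ (Fin d) × EuclideanSpace ℝ (Fin d) => ‖p.1‖ • L p.1 p.2)
      (ball 0 1 ×ˢ sphere 0 1))
    (hcanc : ∃ α : ℝ, ∀ ω ∈ sphere (0 : EuclideanSpace ℝ (Fin d)) 1, ∀ k l : Fin d,
      ∫ z in ball (0 : EuclideanSpace ℝ (Fin d)) 1, ‖z‖ ^ (1 - (d : ℝ)) * L z ω (k, l) =
        α * (ω k * ω l - if k = l then 1 / (d : ℝ) else 0))
    (q : ℝ) (hq : 1 < q) :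
    ∃ C : ℝ, 0 < C ∧ ∀ h ∈ Ioo (0 : ℝ) (1 / 2),
      ∀ (A : EuclideanSpace ℝ (Fin d) → EuclideanSpace ℝ (Fin d × Fin d))
        (g : EuclideanSpace ℝ (Fin d) → ℝ), (∀ i, BddInt fun x => A x i) → BddInt g →
        ∃ u v : EuclideanSpace ℝ (Fin d) → ℝ, Measurable u ∧ Measurable v ∧
          (∀ x, Qop d h L A g x = u x + v x) ∧
          eLpNorm u 1 volume + eLpNorm v (ENNReal.ofReal q) volume ≤
            ENNReal.ofReal (C * |Real.log h| ^ (1 / min q (q / (q - 1)))) * supAddL2 g *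
              eLpNorm A (ENNReal.ofReal q) volume := by
  obtain ⟨C, hC⟩ := exists_Qop_split_dyadic hLlip hcanc hq
  rw [← max_div_eq_one_div_min hq]
  set γ := max 1 (q - 1) / q
  have hγ : 0 ≤ γ := by positivity
  refine ⟨C * (2 / Real.log 2) ^ γ + 1, by positivity, fun h hh A g hA hg => ?_⟩
  obtain ⟨n, hn, hnh, hhn, hnlog⟩ := exists_dyadic_scale hh
  obtain ⟨u, v, hu, hv, huv, hle⟩ := hC A g h n hA hg hn hnh hhn
  have hCn : C * (n : ℝ≥0∞) ^ γ ≤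
      ENNReal.ofReal ((C * (2 / Real.log 2) ^ γ + 1) * |Real.log h| ^ γ) := calc
    C * (n : ℝ≥0∞) ^ γ ≤ C * ENNReal.ofReal ((2 / Real.log 2) ^ γ * |Real.log h| ^ γ) := by
        gcongr
        exact natCast_rpow_le_ofReal (abs_nonneg _) hγ hnlog (by positivity)
    _ = ENNReal.ofReal (C * (2 / Real.log 2) ^ γ * |Real.log h| ^ γ) := by
        rw [mul_assoc, ENNReal.ofReal_mul C.coe_nonneg, ENNReal.ofReal_coe_nnreal]
    _ ≤ _ := by
        gcongr
        exact le_add_of_nonneg_right zero_le_one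
  exact ⟨u, v, hu, hv, huv, hle.trans (by rw [← mul_assoc, ← mul_assoc]; gcongr)⟩

/-- `L¹ + L^q` bound for `Q`:
`‖Q(A,g)‖_{L¹+L^q} ≤ C |log h|^{1/q̄} (‖g‖_{L^∞} + ‖g‖_{L²}) ‖A‖_{L^q}`,
with `q̄ = min(q, q/(q−1))`, for a kernel `L` with `|z|L` bounded and Lipschitz and
satisfying the cancellation `∫_{B(0,1)} L(z,ω)|z|^{1−d} dz = α(ω⊗ω − (1/d) Id)`. -/
theorem Qop_L1_plus_Lq_bound (d : ℕ) (hd : 2 ≤ d)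
    (L : EuclideanSpace ℝ (Fin d) → EuclideanSpace ℝ (Fin d) →
      EuclideanSpace ℝ (Fin d × Fin d))
    (hLbdd : ∃ M : ℝ, ∀ z ∈ Metric.ball (0 : EuclideanSpace ℝ (Fin d)) 1,
      ∀ ω ∈ Metric.sphere (0 : EuclideanSpace ℝ (Fin d)) 1, ‖‖z‖ • L z ω‖ ≤ M)
    (hLlip : ∃ K : NNReal, LipschitzOnWith K
      (fun q : EuclideanSpace ℝ (Fin d) × EuclideanSpace ℝ (Fin d) => ‖q.1‖ • L q.1 q.2)
      (Metric.ball 0 1 ×ˢ Metric.sphere 0 1))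
    (hcanc : ∃ α : ℝ, ∀ ω ∈ Metric.sphere (0 : EuclideanSpace ℝ (Fin d)) 1,
      ∀ k l : Fin d,
        (∫ z in Metric.ball (0 : EuclideanSpace ℝ (Fin d)) 1,
            (‖z‖ ^ (1 - (d : ℝ))) * L z ω (k, l))
          = α * (ω k * ω l - if k = l then 1 / (d : ℝ) else 0))
    (q : ℝ) (hq : 1 < q) :
    ∃ C : ℝ, 0 < C ∧
      ∀ h : ℝ, h ∈ Set.Ioo (0 : ℝ) (1/2) →
      ∀ A : SchwartzMap (EuclideanSpace ℝ (Fin d)) (EuclideanSpace ℝ (Fin d × Fin d)),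
      ∀ g : SchwartzMap (EuclideanSpace ℝ (Fin d)) ℝ,
        ∃ u v : EuclideanSpace ℝ (Fin d) → ℝ,
          Measurable u ∧ Measurable v ∧
          (Qop d h L (⇑A) (⇑g) =ᵐ[volume] u + v) ∧
          eLpNorm u 1 volume + eLpNorm v (ENNReal.ofReal q) volume
            ≤ ENNReal.ofReal (C * |Real.log h| ^ (1 / min q (q / (q - 1)))) *
                (eLpNorm (⇑g) ⊤ volume + eLpNorm (⇑g) 2 volume) *
                eLpNorm (⇑A) (ENNReal.ofReal q) volume := by
  have : NeZero d := ⟨by omega⟩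
  obtain ⟨C, hC0, hC⟩ := Qop_L1_plus_Lq_bound_general d L hLlip hcanc q hq
  refine ⟨C, hC0, fun h hh A g => ?_⟩
  obtain ⟨u, v, hu, hv, huv, hle⟩ := hC h hh A g (bddInt_schwartzMap_apply A) (bddInt_schwartzMap g)
  refine ⟨u, v, hu, hv, .of_forall huv, hle.trans ?_⟩
  gcongr
  exact supAddL2_le_of_continuous g.continuous
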